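/- arXiv:2109.02835 — 2 statements merged into one kernel-verified Lean document; each statement's English description precedes it below -/
import Mathlib

section
/- For every nonnegative integer k there exists a family (P_e) of positive rational numbers, indexed by the covering edges e of L6'(k), with the following property: let V be the complex vector space with basis {v_t : t ∈ L6'(k)} and, for each node i of the E6 Dynkin diagram, define linear operators on V by X_i v_r := Σ √(P_e)·v_s (sum over color-i edges e: r ⋖ s out of r), Y_i v_s := Σ √(P_e)·v_r (sum over color-i edges e: r ⋖ s into s), and H_i v_t := m_i(t)·v_t; then there is a Lie algebra homomorphism φ : 𝔤(E6) → End(V) with φ(x_i) = X_i, φ(y_i) = Y_i, φ(h_i) = H_i for every node i, and for any such family and homomorphism the 𝔤(E6)-module V is irreducible with highest weight kω_{1'} (the vector indexed by the maximal element of L6'(k) is annihilated by every X_i and is an H_i-eigenvector with eigenvalue k for i = 1' and 0 for i ≠ 1'). The same statement holds with L6'(k) replaced by L6''(k) and the highest weight kω_{1'} replaced by kω_{6'} (eigenvalue k for i = 6' and 0 for i ≠ 6'). -/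
noncomputable section

namespace CL

variable {N : Type} [DecidableEq N] [Fintype N]

/-- One-step relation generating the partial order on the poset of positions. -/
def step (adj : N → N → Prop) (pos : Finset (N × ℕ)) (x y : N × ℕ) : Prop :=
  x ∈ pos ∧ y ∈ pos ∧ adj x.1 y.1 ∧ y.2 = x.2 + 1

/-- The partial order on positions, generated by `step`. -/
def ple (adj : N → N → Prop) (pos : Finset (N × ℕ)) : N × ℕ → N × ℕ → Prop :=
  Relation.ReflTransGen (step adj pos)

/-- The lattice of `ℕ`-labellings of the positions which are bounded by `k`, order-reversing,
and satisfy a further constraint `extra`. -/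
def Elt (adj : N → N → Prop) (pos : Finset (N × ℕ)) (k : ℕ)
    (extra : ({x : N × ℕ // x ∈ pos} → ℕ) → Prop) : Type :=
  {c : {x : N × ℕ // x ∈ pos} → ℕ //
    (∀ x, c x ≤ k) ∧ (∀ x y, ple adj pos y.1 x.1 → c x ≤ c y) ∧ extra c}

variable {adj : N → N → Prop} {pos : Finset (N × ℕ)} {k : ℕ}
  {extra : ({x : N × ℕ // x ∈ pos} → ℕ) → Prop}

instance : Finite (Elt adj pos k extra) := by
  apply Finite.of_injective
    (fun c : Elt adj pos k extra =>
      fun x => (⟨c.1 x, Nat.lt_succ_of_le (c.2.1 x)⟩ : Fin (k + 1)))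
  intro c d h
  apply Subtype.ext
  funext x
  exact congrArg Fin.val (congrFun h x)

instance : Fintype (Elt adj pos k extra) := Fintype.ofFinite _

instance : DecidableEq (Elt adj pos k extra) := by unfold Elt; infer_instance

/-- Componentwise comparison of labellings. -/
def elLe (r s : Elt adj pos k extra) : Prop := ∀ x, r.1 x ≤ s.1 x

/-- The covering edge of color `i`: exactly one entry, at a position of color `i`,
is increased by one. -/
def edge (i : N) (r s : Elt adj pos k extra) : Prop :=
  ∃ x : {x : N × ℕ // x ∈ pos}, x.1.1 = i ∧ s.1 x = r.1 x + 1 ∧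
    ∀ y, y ≠ x → s.1 y = r.1 y

instance (i : N) (r s : Elt adj pos k extra) : Decidable (edge i r s) := by
  unfold edge; infer_instance

/-- The rank function: the sum of all entries. -/
def rk (t : Elt adj pos k extra) : ℕ := ∑ x ∈ pos.attach, t.1 x

/-- The connected component of `t` in the graph of color-`i` covering edges. -/
def comp (i : N) (t : Elt adj pos k extra) : Set (Elt adj pos k extra) :=
  {s | Relation.ReflTransGen (fun a b => edge i a b ∨ edge i b a) t s}

/-- The integer `m_i(t) = (ρ(t) − min ρ on comp_i(t)) − (max ρ on comp_i(t) − ρ(t))`. -/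
def mwt (i : N) (t : Elt adj pos k extra) : ℤ :=
  ((rk t : ℤ) - ((sInf (rk '' comp i t) : ℕ) : ℤ)) -
    (((sSup (rk '' comp i t) : ℕ) : ℤ) - (rk t : ℤ))

end CL

namespace CL

/-- Generators `x_i, y_i, h_i` for the Serre presentation. -/
inductive SGen (I : Type) : Type
  | X : I → SGen I
  | Y : I → SGen I
  | H : I → SGen I

variable {I : Type}

/-- The generator `x_i` in the free Lie algebra. -/
def gx (i : I) : FreeLieAlgebra ℂ (SGen I) := FreeLieAlgebra.of ℂ (SGen.X i)

/-- The generator `y_i` in the free Lie algebra. -/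
def gy (i : I) : FreeLieAlgebra ℂ (SGen I) := FreeLieAlgebra.of ℂ (SGen.Y i)

/-- The generator `h_i` in the free Lie algebra. -/
def gh (i : I) : FreeLieAlgebra ℂ (SGen I) := FreeLieAlgebra.of ℂ (SGen.H i)

/-- The Serre relations determined by the matrix `A`:
`[h_i,h_j] = 0`; `[x_i,y_i] = h_i` and `[x_i,y_j] = 0` for `i ≠ j`;
`[h_i,x_j] = A_{j,i}·x_j`; `[h_i,y_j] = −A_{j,i}·y_j`; and
`ad(x_i)^{1−A_{j,i}}(x_j) = 0 = ad(y_i)^{1−A_{j,i}}(y_j)` for `i ≠ j`. -/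
def serreSet (A : I → I → ℤ) : Set (FreeLieAlgebra ℂ (SGen I)) :=
  {z | ∃ i j : I, z = ⁅gh i, gh j⁆} ∪
  {z | ∃ i : I, z = ⁅gx i, gy i⁆ - gh i} ∪
  {z | ∃ i j : I, i ≠ j ∧ z = ⁅gx i, gy j⁆} ∪
  {z | ∃ i j : I, z = ⁅gh i, gx j⁆ - (A j i) • gx j} ∪
  {z | ∃ i j : I, z = ⁅gh i, gy j⁆ + (A j i) • gy j} ∪
  {z | ∃ i j : I, i ≠ j ∧
    z = ((LieAlgebra.ad ℂ (FreeLieAlgebra ℂ (SGen I)) (gx i)) ^ (1 - A j i).toNat) (gx j)} ∪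
  {z | ∃ i j : I, i ≠ j ∧
    z = ((LieAlgebra.ad ℂ (FreeLieAlgebra ℂ (SGen I)) (gy i)) ^ (1 - A j i).toNat) (gy j)}

/-- The Lie ideal generated by the Serre relations. -/
def serreIdeal (A : I → I → ℤ) : LieIdeal ℂ (FreeLieAlgebra ℂ (SGen I)) :=
  LieSubmodule.lieSpan ℂ _ (serreSet A)

/-- The Lie algebra `𝔤(A)` presented by generators `x_i, y_i, h_i` subject to
the Serre relations determined by `A`. -/
abbrev gLie (A : I → I → ℤ) : Type := FreeLieAlgebra ℂ (SGen I) ⧸ serreIdeal A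

/-- The image of `x_i` in `𝔤(A)`. -/
def px (A : I → I → ℤ) (i : I) : gLie A := LieSubmodule.Quotient.mk (N := serreIdeal A) (gx i)

/-- The image of `y_i` in `𝔤(A)`. -/
def py (A : I → I → ℤ) (i : I) : gLie A := LieSubmodule.Quotient.mk (N := serreIdeal A) (gy i)

/-- The image of `h_i` in `𝔤(A)`. -/
def ph (A : I → I → ℤ) (i : I) : gLie A := LieSubmodule.Quotient.mk (N := serreIdeal A) (gh i)

end CL

namespace CL

variable {N : Type} [DecidableEq N] [Fintype N]
variable {adj : N → N → Prop} {pos : Finset (N × ℕ)} {k : ℕ}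
  {extra : ({x : N × ℕ // x ∈ pos} → ℕ) → Prop}

/-- The raising operator `x_i·`, with coefficient `√(P_e)` on each color-`i` edge `e`. -/
def opX (P : Elt adj pos k extra → Elt adj pos k extra → ℚ) (i : N) :
    Module.End ℂ (Elt adj pos k extra → ℂ) :=
  Matrix.mulVecLin fun s r => if edge i r s then (↑(Real.sqrt (P r s)) : ℂ) else 0

/-- The lowering operator `y_i·`, with coefficient `√(P_e)` on each color-`i` edge `e`. -/
def opY (P : Elt adj pos k extra → Elt adj pos k extra → ℚ) (i : N) :
    Module.End ℂ (Elt adj pos k extra → ℂ) :=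
  Matrix.mulVecLin fun r s => if edge i r s then (↑(Real.sqrt (P r s)) : ℂ) else 0

/-- The diagonal operator `h_i·`, acting on `v_t` by the eigenvalue `m_i(t)`. -/
def opH (i : N) : Module.End ℂ (Elt adj pos k extra → ℂ) :=
  Matrix.mulVecLin (Matrix.diagonal fun t => ((mwt i t : ℤ) : ℂ))

end CL

/-! ### Type `E₆` data -/

/-- The nodes `1', 2', 3', 4', 5', 6'` of the `E₆` Dynkin diagram. -/
inductive N6 : Type
  | m1 | m2 | m3 | m4 | m5 | m6
  deriving DecidableEq

instance : Fintype N6 where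
  elems := ⟨↑[N6.m1, N6.m2, N6.m3, N6.m4, N6.m5, N6.m6], by decide⟩
  complete := by intro x; cases x <;> decide

open N6

/-- Adjacency in the `E₆` Dynkin diagram: edges `1'-2', 2'-3', 3'-4', 3'-5', 5'-6'`. -/
abbrev adj6 : N6 → N6 → Prop := fun a b =>
  (a, b) ∈ ([(m1, m2), (m2, m3), (m3, m4), (m3, m5), (m5, m6)] : List (N6 × N6)) ∨
  (b, a) ∈ ([(m1, m2), (m2, m3), (m3, m4), (m3, m5), (m5, m6)] : List (N6 × N6))

/-- The Cartan matrix of type `E₆`, indexed by the nodes. -/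
def A6 : N6 → N6 → ℤ := fun i j => if i = j then 2 else if adj6 i j then -1 else 0

/-- The 24 (color, rank) positions of the poset `P24 = 𝒫`. -/
def pos24 : Finset (N6 × ℕ) :=
  {(m1, 0), (m2, 1), (m3, 2), (m4, 3), (m5, 3), (m3, 4), (m6, 4), (m2, 5), (m5, 5),
   (m1, 6), (m3, 6), (m2, 7), (m4, 7), (m1, 8), (m3, 8), (m2, 9), (m5, 9), (m3, 10),
   (m6, 10), (m4, 11), (m5, 11), (m3, 12), (m2, 13), (m1, 14)}

/-- The 16 (color, rank) positions of the minuscule poset `P16' = P_{E₆}(ω₁')`. -/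
def pos16p : Finset (N6 × ℕ) :=
  {(m6, 0), (m5, 1), (m3, 2), (m2, 3), (m4, 3), (m1, 4), (m3, 4), (m2, 5), (m5, 5),
   (m3, 6), (m6, 6), (m4, 7), (m5, 7), (m3, 8), (m2, 9), (m1, 10)}

/-- The 16 (color, rank) positions of the minuscule poset `P16'' = P_{E₆}(ω₆')`. -/
def pos16pp : Finset (N6 × ℕ) :=
  {(m1, 0), (m2, 1), (m3, 2), (m4, 3), (m5, 3), (m3, 4), (m6, 4), (m2, 5), (m5, 5),
   (m1, 6), (m3, 6), (m2, 7), (m4, 7), (m3, 8), (m5, 9), (m6, 10)}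

/-- The extra constraints on elements of `L6(a,b)`: `c((1',8)) ≤ a` and `c((1',6)) ≥ a`. -/
def extra6 (a : ℕ) : ({x : N6 × ℕ // x ∈ pos24} → ℕ) → Prop := fun c =>
  c ⟨(m1, 8), by decide⟩ ≤ a ∧ a ≤ c ⟨(m1, 6), by decide⟩

/-- The lattice `L6(a,b) = L_{E₆}(aω₁' + bω₆')`. -/
abbrev L6ab (a b : ℕ) : Type := CL.Elt adj6 pos24 (a + b) (extra6 a)

/-- The lattice `L6'(k) = L_{E₆}(kω₁')`. -/
abbrev L6p (k : ℕ) : Type := CL.Elt adj6 pos16p k (fun _ => True)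

/-- The lattice `L6''(k) = L_{E₆}(kω₆')`. -/
abbrev L6pp (k : ℕ) : Type := CL.Elt adj6 pos16pp k (fun _ => True)

/-- The maximal element of `L6'(k)`. -/
def top6p (k : ℕ) : L6p k :=
  ⟨fun _ => k, fun _ => le_rfl, fun _ _ _ => le_rfl, trivial⟩

/-- The maximal element of `L6''(k)`. -/
def top6pp (k : ℕ) : L6pp k :=
  ⟨fun _ => k, fun _ => le_rfl, fun _ _ _ => le_rfl, trivial⟩

attribute [local instance 100] LieRing.ofAssociativeRing

open Polynomial in
theorem CL.residue_inj {ι κ : Type} [DecidableEq ι] (A : Finset ι) (B : Finset κ)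
    (p : ι → ℚ) (b : κ → ℚ) (hc : A.card = B.card) (hinj : Set.InjOn p A) :
    ∑ i ∈ A, (∏ y ∈ B, (p i - b y)) / (∏ j ∈ A.erase i, (p i - p j)) =
      ∑ i ∈ A, p i - ∑ y ∈ B, b y := by
  rcases Nat.eq_zero_or_pos A.card with h0 | h0
  · have hB : B = ∅ := by rw [← Finset.card_eq_zero, ← hc, h0]
    have hA : A = ∅ := by rw [← Finset.card_eq_zero, h0]
    simp [hA, hB]
  · have hb0 : 0 < B.card := hc ▸ h0
    set Q : ℚ[X] := ∏ y ∈ B, (X - C (b y)) with hQ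
    set D : ℚ[X] := ∏ i ∈ A, (X - C (p i)) with hD
    have mQ : Q.Monic := monic_prod_of_monic _ _ (fun y _ => monic_X_sub_C _)
    have mD : D.Monic := monic_prod_of_monic _ _ (fun y _ => monic_X_sub_C _)
    have dQ : Q.natDegree = A.card := by rw [hQ, natDegree_finsetProd_X_sub_C_eq_card, hc]
    have dD : D.natDegree = A.card := by rw [hD, natDegree_finsetProd_X_sub_C_eq_card]
    have hdeg : (Q - D).degree < A.card := by
      have h1 : Q.degree = A.card := by rw [degree_eq_natDegree mQ.ne_zero, dQ]
      have h2 : D.degree = A.card := by rw [degree_eq_natDegree mD.ne_zero, dD]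
      rw [← h1]
      exact degree_sub_lt_left (h1.trans h2.symm) mQ.ne_zero (mQ.leadingCoeff.trans mD.leadingCoeff.symm)
    have key := Lagrange.coeff_eq_sum hinj hdeg
    have e1 : Q.coeff (A.card - 1) = - ∑ y ∈ B, b y := by
      rw [hc]; exact prod_X_sub_C_coeff_card_pred B b hb0
    have e2 : D.coeff (A.card - 1) = - ∑ y ∈ A, p y := prod_X_sub_C_coeff_card_pred A p h0
    rw [coeff_sub, e1, e2] at key
    have : ∀ i ∈ A, (Q - D).eval (p i) = ∏ y ∈ B, (p i - b y) := by
      intro i hi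
      have : D.eval (p i) = 0 := by
        rw [hD, eval_prod]; exact Finset.prod_eq_zero hi (by simp)
      rw [eval_sub, this, hQ, eval_prod]; simp
    have key2 : ∑ i ∈ A, (∏ y ∈ B, (p i - b y)) / (∏ j ∈ A.erase i, (p i - p j)) =
        ∑ i ∈ A, ((Q - D).eval (p i)) / (∏ j ∈ A.erase i, (p i - p j)) :=
      Finset.sum_congr rfl (fun i hi => by rw [this i hi])
    linarith

theorem CL.residue {ι κ : Type} [DecidableEq ι] [DecidableEq κ] (n : ℕ) : ∀ (A : Finset ι) (B : Finset κ)
    (p : ι → ℚ) (b : κ → ℚ) (_ : A.card = n) (_ : A.card = B.card)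
    (_ : ∀ i ∈ A, ∀ j ∈ A, i ≠ j → p i = p j →
      (∃ y ∈ B, ∃ z ∈ B, y ≠ z ∧ b y = p i ∧ b z = p i) ∧
        ∀ l ∈ A, p l = p i → l = i ∨ l = j),
    ∑ i ∈ A, (∏ y ∈ B, (p i - b y)) / (∏ j ∈ A.erase i, (p i - p j)) =
      ∑ i ∈ A, p i - ∑ y ∈ B, b y := by
  induction n using Nat.strong_induction_on with
  | _ n ih =>
  intro A B p b hn hc hcol
  by_cases hinj : Set.InjOn p A
  · exact CL.residue_inj A B p b hc hinj
  · simp only [Set.InjOn, not_forall] at hinj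
    obtain ⟨i, hi, j, hj, hij, hne⟩ := hinj
    have hi : i ∈ A := hi
    have hj : j ∈ A := hj
    obtain ⟨⟨y, hy, z, hz, hyz, hby, hbz⟩, h3⟩ := hcol i hi j hj hne hij
    set A' := (A.erase i).erase j
    set B' := (B.erase y).erase z
    have hjA : j ∈ A.erase i := Finset.mem_erase.2 ⟨fun h => hne h.symm, hj⟩
    have hzB : z ∈ B.erase y := Finset.mem_erase.2 ⟨fun h => hyz h.symm, hz⟩
    have cA : A'.card + 2 = A.card := by
      have : A'.card + 1 = (A.erase i).card := Finset.card_erase_add_one hjA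
      have := Finset.card_erase_add_one hi
      omega
    have cB : B'.card + 2 = B.card := by
      have : B'.card + 1 = (B.erase y).card := Finset.card_erase_add_one hzB
      have := Finset.card_erase_add_one hy
      omega
    have hnp : ∀ l ∈ A', p l ≠ p i := by
      intro l hl h
      simp only [A', Finset.mem_erase] at hl
      rcases h3 l hl.2.2 h with h | h
      · exact hl.2.1 h
      · exact hl.1 h
    have sub : A' ⊆ A := fun l hl => Finset.mem_of_mem_erase (Finset.mem_of_mem_erase hl)
    have := ih (n - 2) (by omega) A' B' p b (by omega) (by omega) (by
      intro l hl m hm hlm hp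
      obtain ⟨⟨y', hy', z', hz', hyz', hby', hbz'⟩, h3'⟩ := hcol l (sub hl) m (sub hm) hlm hp
      refine ⟨⟨y', ?_, z', ?_, hyz', hby', hbz'⟩, fun q hq => h3' q (sub hq)⟩
      · refine Finset.mem_erase.2 ⟨?_, Finset.mem_erase.2 ⟨?_, hy'⟩⟩ <;> rintro rfl
        · exact hnp l hl (hby'.symm.trans hbz)
        · exact hnp l hl (hby'.symm.trans hby)
      · refine Finset.mem_erase.2 ⟨?_, Finset.mem_erase.2 ⟨?_, hz'⟩⟩ <;> rintro rfl
        · exact hnp l hl (hbz'.symm.trans hbz)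
        · exact hnp l hl (hbz'.symm.trans hby))
    have s1 := Finset.add_sum_erase A p hi
    have s2 := Finset.add_sum_erase (A.erase i) p hjA
    have s3 := Finset.add_sum_erase B b hy
    have s4 := Finset.add_sum_erase (B.erase y) b hzB
    rw [← Finset.add_sum_erase A _ hi, ← Finset.add_sum_erase (A.erase i) _ hjA]
    have z1 : ∏ q ∈ A.erase i, (p i - p q) = 0 := Finset.prod_eq_zero hjA (by rw [hij]; ring)
    have z2 : ∏ q ∈ A.erase j, (p j - p q) = 0 :=
      Finset.prod_eq_zero (Finset.mem_erase.2 ⟨hne, hi⟩) (by rw [hij]; ring)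
    rw [z1, z2, div_zero, div_zero, zero_add, zero_add]
    have hterm : ∀ l ∈ A', (∏ y ∈ B, (p l - b y)) / (∏ j ∈ A.erase l, (p l - p j)) =
        (∏ y ∈ B', (p l - b y)) / (∏ j ∈ A'.erase l, (p l - p j)) := by
      intro l hl
      have hl' := hl
      simp only [A', Finset.mem_erase] at hl'
      have hd : p l - p i ≠ 0 := sub_ne_zero.2 (hnp l hl)
      rw [← Finset.mul_prod_erase B _ hy, ← Finset.mul_prod_erase (B.erase y) _ hzB]
      have hil : i ∈ A.erase l := Finset.mem_erase.2 ⟨fun h => hl'.2.1 h.symm, hi⟩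
      have hjl : j ∈ (A.erase l).erase i := Finset.mem_erase.2 ⟨fun h => hne h.symm,
        Finset.mem_erase.2 ⟨fun h => hl'.1 h.symm, hj⟩⟩
      rw [← Finset.mul_prod_erase (A.erase l) _ hil, ← Finset.mul_prod_erase ((A.erase l).erase i) _ hjl]
      have hE : ((A.erase l).erase i).erase j = A'.erase l := by
        ext q; simp only [A', Finset.mem_erase]; tauto
      rw [hE, hby, hbz, ← hij, ← mul_assoc, ← mul_assoc, mul_div_mul_left _ _ (mul_ne_zero hd hd)]
    rw [Finset.sum_congr rfl hterm, this]
    linarith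

namespace CL

section Coeffs

set_option linter.unusedSectionVars false
set_option linter.unusedVariables false

variable {N : Type} [DecidableEq N] [Fintype N]

/-- Bounded reachability by upward steps (a decidable surrogate of `ple`). -/
def reach (adj : N → N → Prop) (pos : Finset (N × ℕ)) : ℕ → N × ℕ → N × ℕ → Prop
  | 0, x, y => x = y
  | n + 1, x, y => x = y ∨ ∃ w ∈ pos, adj x.1 w.1 ∧ w.2 = x.2 + 1 ∧ reach adj pos n w y

instance reachDec (adj : N → N → Prop) [DecidableRel adj] (pos : Finset (N × ℕ)) :
    ∀ n x y, Decidable (reach adj pos n x y)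
  | 0, x, y => inferInstanceAs (Decidable (x = y))
  | n + 1, x, y =>
    have : ∀ w, Decidable (reach adj pos n w y) := fun w => reachDec adj pos n w y
    inferInstanceAs (Decidable (x = y ∨ ∃ w ∈ pos, adj x.1 w.1 ∧ w.2 = x.2 + 1 ∧ reach adj pos n w y))

theorem reach_ple (adj : N → N → Prop) (pos : Finset (N × ℕ)) (n : ℕ) :
    ∀ x y, x ∈ pos → reach adj pos n x y → ple adj pos x y := by
  induction n with
  | zero => intro x y _ h; cases h; exact Relation.ReflTransGen.refl
  | succ n ih =>
    intro x y hx h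
    rcases h with rfl | ⟨w, hw, h1, h2, h3⟩
    · exact Relation.ReflTransGen.refl
    · exact Relation.ReflTransGen.head ⟨hx, hw, h1, h2⟩ (ih w y hw h3)

/-- The neighbours of a color: actual positions, a virtual bottom `none`
and a virtual top `some none`. -/
def isN (adj : N → N → Prop) (pos : Finset (N × ℕ)) (cb ct : N) (i : N) :
    Option (Option {x : N × ℕ // x ∈ pos}) → Prop
  | none => i = cb
  | some none => i = ct
  | some (some y) => adj i y.1.1

instance isNDec (adj : N → N → Prop) [DecidableRel adj] (pos : Finset (N × ℕ)) (cb ct : N) (i : N) :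
    ∀ o, Decidable (isN adj pos cb ct i o)
  | none => inferInstanceAs (Decidable (i = cb))
  | some none => inferInstanceAs (Decidable (i = ct))
  | some (some y) => inferInstanceAs (Decidable (adj i y.1.1))

/-- The neighbour `o` lies below the position `x`. -/
def below (pos : Finset (N × ℕ)) (x : N × ℕ) : Option (Option {x : N × ℕ // x ∈ pos}) → Prop
  | none => True
  | some none => False
  | some (some y) => y.1.2 < x.2

instance belowDec (pos : Finset (N × ℕ)) (x : N × ℕ) : ∀ o, Decidable (below pos x o)
  | none => inferInstanceAs (Decidable True)
  | some none => inferInstanceAs (Decidable False)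
  | some (some y) => inferInstanceAs (Decidable (y.1.2 < x.2))

/-- Rank plus one of a neighbour. -/
def rk1 (pos : Finset (N × ℕ)) (T : ℕ) : Option (Option {x : N × ℕ // x ∈ pos}) → ℕ
  | none => 0
  | some none => T + 2
  | some (some y) => y.1.2 + 1

/-- The combinatorial properties of a minuscule poset of positions that are used below. -/
structure Good (adj : N → N → Prop) [DecidableRel adj] (pos : Finset (N × ℕ)) (cb ct : N) (T : ℕ) :
    Prop where
  irr : ∀ i, ¬ adj i i
  symm : ∀ i j, adj i j → adj j i
  same : ∀ x ∈ pos, ∀ y ∈ pos, x.1 = y.1 → x.2 < y.2 → x.2 + 2 ≤ y.2 ∧ reach adj pos T x y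
  adjc : ∀ x ∈ pos, ∀ y ∈ pos, adj x.1 y.1 → x.2 ≠ y.2 ∧ (x.2 < y.2 → reach adj pos T x y)
  two : ∀ x ∈ pos, ∀ z ∈ pos, x.1 = z.1 → z.2 = x.2 + 2 →
    ∃ y ∈ pos, ∃ y' ∈ pos, y ≠ y' ∧ (adj x.1 y.1 ∧ y.2 = x.2 + 1) ∧ (adj x.1 y'.1 ∧ y'.2 = x.2 + 1)
  low : ∀ x ∈ pos, (∃ y ∈ pos, adj y.1 x.1 ∧ x.2 = y.2 + 1) ∨ (x.1 = cb ∧ x.2 = 0)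
  up : ∀ x ∈ pos, (∃ y ∈ pos, adj x.1 y.1 ∧ y.2 = x.2 + 1) ∨ (x.1 = ct ∧ x.2 = T)
  le : ∀ x ∈ pos, x.2 ≤ T
  count : ∀ i, 2 * (Finset.univ.filter fun x : {x : N × ℕ // x ∈ pos} => x.1.1 = i).card =
    (Finset.univ.filter (isN adj pos cb ct i)).card
  ranks : ∀ i, 2 * ∑ x ∈ Finset.univ.filter (fun x : {x : N × ℕ // x ∈ pos} => x.1.1 = i), (x.1.2 + 1)
    = ∑ o ∈ Finset.univ.filter (isN adj pos cb ct i), rk1 pos T o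
  odd : ∀ x ∈ pos, Odd (Finset.univ.filter fun o => isN adj pos cb ct x.1 o ∧ below pos x o).card

variable (adj : N → N → Prop) [DecidableRel adj] (pos : Finset (N × ℕ)) (cb ct : N) (T k : ℕ)

/-- The value at a neighbour (`k` at the virtual bottom, `0` at the virtual top). -/
def nval (c : {x : N × ℕ // x ∈ pos} → ℚ) : Option (Option {x : N × ℕ // x ∈ pos}) → ℚ
  | none => k
  | some none => 0
  | some (some y) => c y

/-- The shifted value at a neighbour. -/
def bv (c : {x : N × ℕ // x ∈ pos} → ℚ) (o : Option (Option {x : N × ℕ // x ∈ pos})) : ℚ :=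
  nval pos k c o - (rk1 pos T o : ℚ) / 2

/-- Numerator factor. -/
def nf (x : {x : N × ℕ // x ∈ pos}) (w : ℚ) (c : {x : N × ℕ // x ∈ pos} → ℚ)
    (o : Option (Option {x : N × ℕ // x ∈ pos})) : ℚ :=
  if isN adj pos cb ct x.1.1 o then w - (x.1.2 : ℚ) / 2 - bv pos T k c o else 1

/-- Denominator factor. -/
def df (x : {x : N × ℕ // x ∈ pos}) (w : ℚ) (c : {x : N × ℕ // x ∈ pos} → ℚ)
    (z : {x : N × ℕ // x ∈ pos}) : ℚ :=
  if z.1.1 = x.1.1 ∧ z ≠ x then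
    (w - (x.1.2 : ℚ) / 2 - (c z - (z.1.2 : ℚ) / 2)) *
      (w - (x.1.2 : ℚ) / 2 - (c z - (z.1.2 : ℚ) / 2) + 1) else 1

/-- The edge coefficient for raising position `x` from the value `w`. -/
def G (x : {x : N × ℕ // x ∈ pos}) (w : ℚ) (c : {x : N × ℕ // x ∈ pos} → ℚ) : ℚ :=
  -(∏ o, nf adj pos cb ct T k x w c o) / ∏ z, df pos x w c z

variable {adj pos cb ct T k}

theorem G_diamond (hg : Good adj pos cb ct T) (c : {x : N × ℕ // x ∈ pos} → ℚ)
    (x y : {x : N × ℕ // x ∈ pos}) (hxy : x ≠ y) :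
    G adj pos cb ct T k x (c x) c * G adj pos cb ct T k y (c y) c =
    G adj pos cb ct T k x (c x) (Function.update c y (c y + 1)) *
      G adj pos cb ct T k y (c y) (Function.update c x (c x + 1)) := by
  have key : ∀ x y : {x : N × ℕ // x ∈ pos}, ∃ n d : ℚ, ∀ v,
      G adj pos cb ct T k x (c x) (Function.update c y v) =
      -(nf adj pos cb ct T k x (c x) (Function.update c y v) (some (some y)) * n) /
        (df pos x (c x) (Function.update c y v) y * d) := by
    intro x y
    refine ⟨∏ o ∈ Finset.univ.erase (some (some y)), nf adj pos cb ct T k x (c x) c o,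
      ∏ z ∈ Finset.univ.erase y, df pos x (c x) c z, ?_⟩
    intro v
    unfold G
    rw [← Finset.mul_prod_erase Finset.univ _ (Finset.mem_univ (some (some y))),
      ← Finset.mul_prod_erase Finset.univ _ (Finset.mem_univ y)]
    refine congrArg₂ (fun a b : ℚ => -(nf adj pos cb ct T k x (c x) (Function.update c y v) (some (some y)) * a) /
        (df pos x (c x) (Function.update c y v) y * b)) ?_ ?_
    · apply Finset.prod_congr rfl
      intro o ho
      have ho := (Finset.mem_erase.1 ho).1
      rcases o with _ | _ | z
      · rfl
      · rfl
      · have : z ≠ y := by rintro rfl; exact ho rfl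
        simp [nf, bv, nval, Function.update_of_ne this]
    · apply Finset.prod_congr rfl
      intro z hz
      have hz := (Finset.mem_erase.1 hz).1
      simp [df, Function.update_of_ne hz]
  obtain ⟨n, d, h⟩ := key x y
  obtain ⟨n', d', h'⟩ := key y x
  have e1 := h (c y)
  have e2 := h' (c x)
  rw [Function.update_eq_self] at e1 e2
  rw [e1, e2, h, h', div_mul_div_comm, div_mul_div_comm]
  have hN : nf adj pos cb ct T k x (c x) c (some (some y)) * nf adj pos cb ct T k y (c y) c (some (some x))
    = nf adj pos cb ct T k x (c x) (Function.update c y (c y + 1)) (some (some y)) *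
      nf adj pos cb ct T k y (c y) (Function.update c x (c x + 1)) (some (some x)) := by
    by_cases ha : adj x.1.1 y.1.1
    · have hb := hg.symm _ _ ha
      simp only [nf, isN, ha, hb, if_true, bv, nval, rk1, Function.update_self]
      push_cast; ring
    · have hb : ¬ adj y.1.1 x.1.1 := fun h => ha (hg.symm _ _ h)
      simp [nf, isN, ha, hb]
  have hD : df pos x (c x) c y * df pos y (c y) c x
    = df pos x (c x) (Function.update c y (c y + 1)) y *
      df pos y (c y) (Function.update c x (c x + 1)) x := by
    by_cases ha : y.1.1 = x.1.1
    · simp only [df, ha, ne_eq, hxy, hxy.symm, not_false_eq_true, and_self, if_true, Function.update_self]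
      ring
    · have hb : ¬ x.1.1 = y.1.1 := fun h => ha h.symm
      simp [df, ha, hb]
  congr 1
  · linear_combination n * n' * hN
  · linear_combination d * d' * hD

theorem G_update (hg : Good adj pos cb ct T) (c : {x : N × ℕ // x ∈ pos} → ℚ)
    (x : {x : N × ℕ // x ∈ pos}) (w v : ℚ) :
    G adj pos cb ct T k x w (Function.update c x v) = G adj pos cb ct T k x w c := by
  unfold G
  refine congrArg₂ (fun a b : ℚ => -a / b) ?_ ?_
  · apply Finset.prod_congr rfl
    intro o _
    rcases o with _ | _ | z
    · rfl
    · rfl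
    · by_cases hz : z = x
      · subst hz
        simp [nf, isN, hg.irr]
      · simp [nf, bv, nval, Function.update_of_ne hz]
  · apply Finset.prod_congr rfl
    intro z _
    by_cases hz : z = x
    · subst hz; simp [df]
    · simp [df, Function.update_of_ne hz]

/-- Elements of the lattice. -/
abbrev LL (adj : N → N → Prop) (pos : Finset (N × ℕ)) (k : ℕ) : Type := Elt adj pos k (fun _ => True)

/-- Rational values. -/
def qv (t : LL adj pos k) : {x : N × ℕ // x ∈ pos} → ℚ := fun x => (t.1 x : ℚ)

/-- Position `x` can be raised. -/
def canUp (x : {x : N × ℕ // x ∈ pos}) (t : LL adj pos k) : Prop :=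
  t.1 x < k ∧ ∀ y : {x : N × ℕ // x ∈ pos}, adj y.1.1 x.1.1 → x.1.2 = y.1.2 + 1 → t.1 x < t.1 y

/-- Position `x` can be lowered. -/
def canDown (x : {x : N × ℕ // x ∈ pos}) (t : LL adj pos k) : Prop :=
  0 < t.1 x ∧ ∀ y : {x : N × ℕ // x ∈ pos}, adj x.1.1 y.1.1 → y.1.2 = x.1.2 + 1 → t.1 y < t.1 x

theorem mono_step (t : LL adj pos k) (x y : {x : N × ℕ // x ∈ pos}) (h : adj x.1.1 y.1.1)
    (h2 : y.1.2 = x.1.2 + 1) : t.1 y ≤ t.1 x :=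
  t.2.2.1 y x (Relation.ReflTransGen.single ⟨x.2, y.2, h, h2⟩)

theorem mono_reach (t : LL adj pos k) (n : ℕ) (x y : {x : N × ℕ // x ∈ pos})
    (h : reach adj pos n x.1 y.1) : t.1 y ≤ t.1 x :=
  t.2.2.1 y x (reach_ple adj pos n _ _ x.2 h)

theorem canUp_lt (hg : Good adj pos cb ct T) (x : {x : N × ℕ // x ∈ pos}) (t : LL adj pos k)
    (h : canUp x t) (n : ℕ) (y : {x : N × ℕ // x ∈ pos}) (hr : reach adj pos n y.1 x.1) (hyx : y ≠ x) :
    t.1 x < t.1 y := by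
  have := reach_ple adj pos n _ _ y.2 hr
  rcases Relation.ReflTransGen.cases_tail this with h1 | ⟨w, hw, hs⟩
  · exact absurd (Subtype.ext h1.symm) hyx
  · exact lt_of_lt_of_le (h.2 ⟨w, hs.1⟩ hs.2.2.1 hs.2.2.2) (t.2.2.1 ⟨w, hs.1⟩ y hw)

theorem G_zero_of_nf (x : {x : N × ℕ // x ∈ pos}) (w : ℚ) (c : {x : N × ℕ // x ∈ pos} → ℚ)
    (o) (h : nf adj pos cb ct T k x w c o = 0) : G adj pos cb ct T k x w c = 0 := by
  unfold G
  rw [Finset.prod_eq_zero (Finset.mem_univ o) h]; simp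

theorem G_up_zero (hg : Good adj pos cb ct T) (x : {x : N × ℕ // x ∈ pos}) (t : LL adj pos k)
    (h : ¬ canUp x t) : G adj pos cb ct T k x (t.1 x : ℚ) (qv t) = 0 := by
  have main : ∀ y : {x : N × ℕ // x ∈ pos}, adj y.1.1 x.1.1 → x.1.2 = y.1.2 + 1 → t.1 x = t.1 y →
      G adj pos cb ct T k x (t.1 x : ℚ) (qv t) = 0 := by
    intro y ha hr he
    apply G_zero_of_nf _ _ _ (some (some y))
    have hb := hg.symm _ _ ha
    simp only [nf, isN, hb, if_true, bv, nval, rk1, qv, hr, he]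
    push_cast; ring
  by_cases hk : t.1 x < k
  · have : ∃ y : {x : N × ℕ // x ∈ pos}, adj y.1.1 x.1.1 ∧ x.1.2 = y.1.2 + 1 ∧ ¬ t.1 x < t.1 y := by
      by_contra hcon
      push Not at hcon
      exact h ⟨hk, fun y h1 h2 => hcon y h1 h2⟩
    obtain ⟨y, h1, h2, h3⟩ := this
    exact main y h1 h2 (le_antisymm (mono_step t y x h1 h2) (not_lt.1 h3))
  · have hk : t.1 x = k := le_antisymm (t.2.1 x) (not_lt.1 hk)
    rcases hg.low x.1 x.2 with ⟨y, hy, h1, h2⟩ | ⟨h1, h2⟩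
    · exact main ⟨y, hy⟩ h1 h2 (le_antisymm (mono_step t ⟨y, hy⟩ x h1 h2) (by rw [hk]; exact t.2.1 _))
    · apply G_zero_of_nf _ _ _ none
      simp [nf, isN, h1, h2, bv, nval, rk1, hk]

theorem G_down_zero (hg : Good adj pos cb ct T) (x : {x : N × ℕ // x ∈ pos}) (t : LL adj pos k)
    (h : ¬ canDown x t) : G adj pos cb ct T k x ((t.1 x : ℚ) - 1) (qv t) = 0 := by
  have main : ∀ y : {x : N × ℕ // x ∈ pos}, adj x.1.1 y.1.1 → y.1.2 = x.1.2 + 1 → t.1 x = t.1 y →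
      G adj pos cb ct T k x ((t.1 x : ℚ) - 1) (qv t) = 0 := by
    intro y ha hr he
    apply G_zero_of_nf _ _ _ (some (some y))
    simp only [nf, isN, ha, if_true, bv, nval, rk1, qv, hr, he]
    push_cast; ring
  by_cases hk : 0 < t.1 x
  · have : ∃ y : {x : N × ℕ // x ∈ pos}, adj x.1.1 y.1.1 ∧ y.1.2 = x.1.2 + 1 ∧ ¬ t.1 y < t.1 x := by
      by_contra hcon
      push Not at hcon
      exact h ⟨hk, fun y h1 h2 => hcon y h1 h2⟩
    obtain ⟨y, h1, h2, h3⟩ := this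
    exact main y h1 h2 (le_antisymm (not_lt.1 h3) (mono_step t x y h1 h2))
  · have hk : t.1 x = 0 := by omega
    rcases hg.up x.1 x.2 with ⟨y, hy, h1, h2⟩ | ⟨h1, h2⟩
    · have := mono_step t x ⟨y, hy⟩ h1 h2
      exact main ⟨y, hy⟩ h1 h2 (by omega)
    · apply G_zero_of_nf _ _ _ (some none)
      simp [nf, isN, h1, h2, bv, nval, rk1, hk]
      ring

theorem prod_neg_of_odd {ι : Type} (S : Finset ι) (q : ι → Prop) [DecidablePred q] (f : ι → ℚ)
    (ho : Odd (S.filter q).card) (h1 : ∀ i ∈ S, q i → f i < 0) (h2 : ∀ i ∈ S, ¬ q i → 0 < f i) :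
    ∏ i ∈ S, f i < 0 := by
  rw [← Finset.prod_filter_mul_prod_filter_not S q]
  apply mul_neg_of_neg_of_pos
  · have : ∏ i ∈ S.filter q, f i = - ∏ i ∈ S.filter q, (- f i) := by
      rw [Finset.prod_neg, ho.neg_one_pow]; ring
    rw [this, neg_lt_zero]
    apply Finset.prod_pos
    intro i hi
    have := Finset.mem_filter.1 hi
    have := h1 i this.1 this.2
    linarith
  · apply Finset.prod_pos
    intro i hi
    have := Finset.mem_filter.1 hi
    exact h2 i this.1 this.2

theorem G_pos (hg : Good adj pos cb ct T) (x : {x : N × ℕ // x ∈ pos}) (t : LL adj pos k)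
    (h : canUp x t) : 0 < G adj pos cb ct T k x (t.1 x : ℚ) (qv t) := by
  unfold G
  apply div_pos
  · rw [neg_pos]
    have e : ∏ o, nf adj pos cb ct T k x (t.1 x : ℚ) (qv t) o =
      ∏ o ∈ Finset.univ.filter (isN adj pos cb ct x.1.1),
        ((t.1 x : ℚ) - (x.1.2 : ℚ) / 2 - bv pos T k (qv t) o) := by
      rw [Finset.prod_filter]; rfl
    rw [e]
    apply prod_neg_of_odd _ (below pos x.1)
    · rw [Finset.filter_filter]; exact hg.odd x.1 x.2
    · intro o ho hb
      have ho := (Finset.mem_filter.1 ho).2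
      rcases o with _ | _ | y
      · have : (t.1 x : ℚ) < k := by exact_mod_cast h.1
        have : (0 : ℚ) ≤ x.1.2 := by positivity
        simp only [bv, nval, rk1]; push_cast; linarith
      · exact hb.elim
      · have hb : y.1.2 < x.1.2 := hb
        have ho : adj x.1.1 y.1.1 := ho
        have hr := (hg.adjc _ y.2 _ x.2 (hg.symm _ _ ho)).2 hb
        have h1 := canUp_lt hg x t h _ y hr (by rintro rfl; exact lt_irrefl _ hb)
        have h1 : (t.1 x : ℚ) < t.1 y := by exact_mod_cast h1
        have h2 : (y.1.2 : ℚ) + 1 ≤ x.1.2 := by exact_mod_cast hb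
        simp only [bv, nval, rk1, qv]; push_cast; linarith
    · intro o ho hb
      have ho := (Finset.mem_filter.1 ho).2
      rcases o with _ | _ | y
      · exact (hb trivial).elim
      · have h1 : (x.1.2 : ℚ) ≤ T := by exact_mod_cast hg.le _ x.2
        have h2 : (0 : ℚ) ≤ t.1 x := by positivity
        simp only [bv, nval, rk1]; push_cast; linarith
      · have ho : adj x.1.1 y.1.1 := ho
        have hb : ¬ y.1.2 < x.1.2 := hb
        have hr := (hg.adjc _ x.2 _ y.2 ho)
        have hlt : x.1.2 < y.1.2 := by have := hr.1; omega
        have h1 := mono_reach t _ x y (hr.2 hlt)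
        have h1 : (t.1 y : ℚ) ≤ t.1 x := by exact_mod_cast h1
        have h2 : (x.1.2 : ℚ) + 1 ≤ y.1.2 := by exact_mod_cast hlt
        simp only [bv, nval, rk1, qv]; push_cast; linarith
  · apply Finset.prod_pos
    intro z _
    unfold df
    split_ifs with hz
    · rcases lt_trichotomy z.1.2 x.1.2 with hlt | heq | hlt
      · obtain ⟨h2, hr⟩ := hg.same _ z.2 _ x.2 hz.1 hlt
        have h1 := canUp_lt hg x t h _ z hr hz.2
        have h1 : (t.1 x : ℚ) < t.1 z := by exact_mod_cast h1
        have h2 : (z.1.2 : ℚ) + 2 ≤ x.1.2 := by exact_mod_cast h2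
        apply mul_pos_of_neg_of_neg <;> simp only [qv] <;> linarith
      · exact absurd (Subtype.ext (Prod.ext hz.1 heq)) hz.2
      · obtain ⟨h2, hr⟩ := hg.same _ x.2 _ z.2 hz.1.symm hlt
        have h1 := mono_reach t _ x z hr
        have h1 : (t.1 z : ℚ) ≤ t.1 x := by exact_mod_cast h1
        have h2 : (x.1.2 : ℚ) + 2 ≤ z.1.2 := by exact_mod_cast h2
        apply mul_pos <;> simp only [qv] <;> linarith
    · exact one_pos

/-- The linear expression for the weight. -/
def wtM (adj : N → N → Prop) [DecidableRel adj] (pos : Finset (N × ℕ)) (cb ct : N) (k : ℕ) (i : N)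
    (c : {x : N × ℕ // x ∈ pos} → ℚ) : ℚ :=
  ∑ x ∈ Finset.univ.filter (fun x : {x : N × ℕ // x ∈ pos} => x.1.1 = i), 2 * c x -
    ∑ o ∈ Finset.univ.filter (isN adj pos cb ct i), nval pos k c o

end Coeffs

end CL

theorem good6p : CL.Good adj6 pos16p N6.m6 N6.m1 10 where
  irr := by decide
  symm := by decide
  same := by decide +kernel
  adjc := by decide +kernel
  two := by decide +kernel
  low := by decide +kernel
  up := by decide +kernel
  le := by decide +kernel
  count := by decide +kernel
  ranks := by decide +kernel
  odd := by decide +kernel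

theorem good6pp : CL.Good adj6 pos16pp N6.m1 N6.m6 10 where
  irr := by decide
  symm := by decide
  same := by decide +kernel
  adjc := by decide +kernel
  two := by decide +kernel
  low := by decide +kernel
  up := by decide +kernel
  le := by decide +kernel
  count := by decide +kernel
  ranks := by decide +kernel
  odd := by decide +kernel

namespace CL

section Sums

set_option linter.unusedSectionVars false
set_option linter.unusedVariables false

variable {N : Type} [DecidableEq N] [Fintype N]
variable {adj : N → N → Prop} [DecidableRel adj] {pos : Finset (N × ℕ)} {cb ct : N} {T k : ℕ}

/-- Shifted values. -/
def av (t : LL adj pos k) (x : {x : N × ℕ // x ∈ pos}) : ℚ := (t.1 x : ℚ) - (x.1.2 : ℚ) / 2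

/-- The poles. -/
def pole (t : LL adj pos k) (j : {x : N × ℕ // x ∈ pos} × Bool) : ℚ :=
  av t j.1 - (if j.2 then 1 else 0)

theorem av_cmp (hg : Good adj pos cb ct T) (t : LL adj pos k) (x z : {x : N × ℕ // x ∈ pos})
    (h : x.1.1 = z.1.1) (hne : x ≠ z) : av t z + 1 ≤ av t x ∨ av t x + 1 ≤ av t z := by
  unfold av
  rcases lt_trichotomy x.1.2 z.1.2 with hlt | heq | hlt
  · obtain ⟨h2, hr⟩ := hg.same _ x.2 _ z.2 h hlt
    have h1 : (t.1 z : ℚ) ≤ t.1 x := by exact_mod_cast mono_reach t _ x z hr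
    have h2 : (x.1.2 : ℚ) + 2 ≤ z.1.2 := by exact_mod_cast h2
    left; linarith
  · exact absurd (Subtype.ext (Prod.ext h heq)) hne
  · obtain ⟨h2, hr⟩ := hg.same _ z.2 _ x.2 h.symm hlt
    have h1 : (t.1 x : ℚ) ≤ t.1 z := by exact_mod_cast mono_reach t _ z x hr
    have h2 : (z.1.2 : ℚ) + 2 ≤ x.1.2 := by exact_mod_cast h2
    right; linarith

theorem collide (hg : Good adj pos cb ct T) (t : LL adj pos k) (i : N) (x z : {x : N × ℕ // x ∈ pos})
    (hx : x.1.1 = i) (hz : z.1.1 = i) (he : av t x - 1 = av t z) :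
    (∃ y ∈ Finset.univ.filter (isN adj pos cb ct i), ∃ y' ∈ Finset.univ.filter (isN adj pos cb ct i),
      y ≠ y' ∧ bv pos T k (qv t) y = av t z ∧ bv pos T k (qv t) y' = av t z) := by
  have hne : x ≠ z := by rintro rfl; linarith
  have hxz := hx.trans hz.symm
  have hlt : x.1.2 < z.1.2 := by
    rcases lt_trichotomy x.1.2 z.1.2 with hlt | heq | hlt
    · exact hlt
    · exact absurd (Subtype.ext (Prod.ext hxz heq)) hne
    · exfalso
      obtain ⟨h2, hr⟩ := hg.same _ z.2 _ x.2 hxz.symm hlt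
      have h1 : (t.1 x : ℚ) ≤ t.1 z := by exact_mod_cast mono_reach t _ z x hr
      have h2 : (z.1.2 : ℚ) + 2 ≤ x.1.2 := by exact_mod_cast h2
      unfold av at he; linarith
  obtain ⟨h2, hr⟩ := hg.same _ x.2 _ z.2 hxz hlt
  have h1 : (t.1 z : ℚ) ≤ t.1 x := by exact_mod_cast mono_reach t _ x z hr
  have h2' : (x.1.2 : ℚ) + 2 ≤ z.1.2 := by exact_mod_cast h2
  have e1 : z.1.2 = x.1.2 + 2 := by
    have : (z.1.2 : ℚ) ≤ x.1.2 + 2 := by unfold av at he; linarith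
    have : z.1.2 ≤ x.1.2 + 2 := by exact_mod_cast this
    omega
  have e2 : t.1 x = t.1 z := by
    have : (z.1.2 : ℚ) = x.1.2 + 2 := by exact_mod_cast e1
    have : (t.1 x : ℚ) = t.1 z := by unfold av at he; linarith
    exact_mod_cast this
  obtain ⟨y, hy, y', hy', hyy, ⟨a1, r1⟩, ⟨a2, r2⟩⟩ := hg.two _ x.2 _ z.2 hxz e1
  have main : ∀ y : {x : N × ℕ // x ∈ pos}, adj x.1.1 y.1.1 → y.1.2 = x.1.2 + 1 →
      bv pos T k (qv t) (some (some y)) = av t z := by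
    intro y ha hr
    have m1 := mono_step t x y ha hr
    have m2 := mono_step t y z (hg.symm _ _ (hxz ▸ ha)) (by omega)
    have e3 : t.1 y = t.1 z := by omega
    simp only [bv, nval, rk1, qv, av, e3, hr, e1]
  refine ⟨some (some ⟨y, hy⟩), Finset.mem_filter.2 ⟨Finset.mem_univ _, ?_⟩, some (some ⟨y', hy'⟩),
    Finset.mem_filter.2 ⟨Finset.mem_univ _, ?_⟩, ?_, main ⟨y, hy⟩ a1 r1, main ⟨y', hy'⟩ a2 r2⟩
  · show adj i y.1
    rw [← hx]; exact a1
  · show adj i y'.1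
    rw [← hx]; exact a2
  · intro h
    simp only [Option.some.injEq, Subtype.mk.injEq] at h
    exact hyy h

theorem G_sum (hg : Good adj pos cb ct T) (t : LL adj pos k) (i : N) :
    ∑ x ∈ Finset.univ.filter (fun x : {x : N × ℕ // x ∈ pos} => x.1.1 = i),
      (G adj pos cb ct T k x ((t.1 x : ℚ) - 1) (qv t) - G adj pos cb ct T k x (t.1 x : ℚ) (qv t)) =
    wtM adj pos cb ct k i (qv t) := by
  set A := Finset.univ.filter (fun x : {x : N × ℕ // x ∈ pos} => x.1.1 = i) with hA
  set B := Finset.univ.filter (isN adj pos cb ct i) with hB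
  have hAm : ∀ x, x ∈ A ↔ x.1.1 = i := by intro x; simp [hA]
  have hcard : (A ×ˢ (Finset.univ : Finset Bool)).card = B.card := by
    rw [Finset.card_product, ← hg.count i, Finset.card_univ, Fintype.card_bool, mul_comm]
  have key := residue _ (A ×ˢ (Finset.univ : Finset Bool)) B (pole t) (bv pos T k (qv t)) rfl hcard (by
    rintro ⟨x, β⟩ hx0 ⟨z, γ⟩ hz0 hne he
    have hx : x.1.1 = i := (hAm _).1 (Finset.mem_product.1 hx0).1
    have hz : z.1.1 = i := (hAm _).1 (Finset.mem_product.1 hz0).1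
    have hxz : x ≠ z := by
      rintro rfl
      cases β <;> cases γ <;> simp [pole] at he hne <;> linarith
    have third : ∀ l ∈ A ×ˢ (Finset.univ : Finset Bool), pole t l = pole t (x, β) →
        l = (x, β) ∨ l = (z, γ) := by
      rintro ⟨w, δ⟩ hw0 hp
      have hw : w.1.1 = i := (hAm _).1 (Finset.mem_product.1 hw0).1
      by_cases h1 : w = x
      · subst h1
        left
        cases β <;> cases δ <;> simp [pole] at hp ⊢ <;> linarith
      · by_cases h2 : w = z
        · subst h2
          right
          rw [he] at hp
          cases γ <;> cases δ <;> simp [pole] at hp ⊢ <;> linarith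
        · exfalso
          have c1 := av_cmp hg t w x (hw.trans hx.symm) h1
          have c2 := av_cmp hg t w z (hw.trans hz.symm) h2
          have c3 := av_cmp hg t x z (hx.trans hz.symm) hxz
          cases β <;> cases γ <;> cases δ <;> simp [pole] at hp he <;>
            rcases c1 with c1 | c1 <;> rcases c2 with c2 | c2 <;> rcases c3 with c3 | c3 <;> linarith
    refine ⟨?_, third⟩
    have c3 := av_cmp hg t x z (hx.trans hz.symm) hxz
    cases β <;> cases γ
    · exfalso; simp [pole] at he; rcases c3 with c3 | c3 <;> linarith
    · have he' : av t z - 1 = av t x := by simpa [pole] using he.symm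
      simpa [pole, hB] using collide (T := T) (cb := cb) (ct := ct) hg t i z x hz hx he'
    · have he' : av t x - 1 = av t z := by simpa [pole] using he
      have := collide hg t i x z hx hz he'
      rw [← he'] at this
      simpa [pole, hB] using this
    · exfalso; simp [pole] at he; rcases c3 with c3 | c3 <;> linarith)
  have hden : ∀ x ∈ A, ∀ β, ∏ j ∈ (A ×ˢ (Finset.univ : Finset Bool)).erase (x, β), (pole t (x, β) - pole t j)
      = (if β then -1 else 1) * ∏ z, df pos x ((t.1 x : ℚ) - (if β then 1 else 0)) (qv t) z := by
    intro x hx β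
    have hmem : (x, !β) ∈ (A ×ˢ (Finset.univ : Finset Bool)).erase (x, β) := by
      refine Finset.mem_erase.2 ⟨by simp, Finset.mem_product.2 ⟨hx, Finset.mem_univ _⟩⟩
    rw [← Finset.mul_prod_erase _ _ hmem]
    have hE : ((A ×ˢ (Finset.univ : Finset Bool)).erase (x, β)).erase (x, !β) =
        (A.erase x) ×ˢ (Finset.univ : Finset Bool) := by
      ext ⟨w, δ⟩
      cases β <;> cases δ <;> simp [Finset.mem_erase, Finset.mem_product] 
    rw [hE, Finset.prod_product]
    congr 1
    · cases β <;> simp [pole]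
    · have : A.erase x = Finset.univ.filter (fun z : {x : N × ℕ // x ∈ pos} => z.1.1 = x.1.1 ∧ z ≠ x) := by
        ext z
        simp only [Finset.mem_erase, hAm, Finset.mem_filter, Finset.mem_univ, true_and, (hAm x).1 hx]
        tauto
      rw [this, Finset.prod_filter]
      apply Finset.prod_congr rfl
      intro z _
      unfold df
      by_cases hz : z.1.1 = x.1.1 ∧ z ≠ x
      · rw [if_pos hz, if_pos hz, Fintype.prod_bool]
        cases β <;> simp [pole, av, qv] <;> ring
      · rw [if_neg hz, if_neg hz]
  have hnum : ∀ x ∈ A, ∀ β : Bool, ∏ y ∈ B, (pole t (x, β) - bv pos T k (qv t) y) =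
      ∏ o, nf adj pos cb ct T k x ((t.1 x : ℚ) - (if β then 1 else 0)) (qv t) o := by
    intro x hx β
    rw [hB, Finset.prod_filter]
    apply Finset.prod_congr rfl
    intro o _
    unfold nf
    rw [(hAm x).1 hx]
    by_cases ho : isN adj pos cb ct i o
    · rw [if_pos ho, if_pos ho]; simp only [pole, av]; ring
    · rw [if_neg ho, if_neg ho]
  rw [Finset.sum_product, Finset.sum_product] at key
  have hl : ∀ x ∈ A, ∑ β : Bool, (∏ y ∈ B, (pole t (x, β) - bv pos T k (qv t) y)) /
      (∏ j ∈ (A ×ˢ (Finset.univ : Finset Bool)).erase (x, β), (pole t (x, β) - pole t j)) =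
      G adj pos cb ct T k x ((t.1 x : ℚ) - 1) (qv t) - G adj pos cb ct T k x (t.1 x : ℚ) (qv t) := by
    intro x hx
    rw [Fintype.sum_bool, hden x hx, hden x hx, hnum x hx, hnum x hx]
    unfold G
    simp only [if_true, Bool.false_eq_true, if_false, sub_zero, one_mul, neg_one_mul, div_neg, neg_div]
    ring
  rw [Finset.sum_congr rfl hl] at key
  rw [key]
  have hr := hg.ranks i
  rw [← hA, ← hB] at hr
  have hr' : 2 * ∑ x ∈ A, ((x.1.2 : ℚ) + 1) = ∑ o ∈ B, (rk1 pos T o : ℚ) := by exact_mod_cast hr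
  unfold wtM
  rw [← hA, ← hB]
  have e1 : ∑ x ∈ A, ∑ β : Bool, pole t (x, β) = ∑ x ∈ A, 2 * qv t x - ∑ x ∈ A, ((x.1.2 : ℚ) + 1) := by
    rw [← Finset.sum_sub_distrib]
    apply Finset.sum_congr rfl
    intro x _
    simp [pole, av, qv]; ring
  have e2 : ∑ o ∈ B, bv pos T k (qv t) o = ∑ o ∈ B, nval pos k (qv t) o - (∑ o ∈ B, (rk1 pos T o : ℚ)) / 2 := by
    rw [Finset.sum_div, ← Finset.sum_sub_distrib]
    rfl
  rw [e1, e2, ← hr']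
  ring

end Sums

end CL

namespace CL

section Moves

set_option linter.unusedSectionVars false
set_option linter.unusedVariables false

variable {N : Type} [DecidableEq N] [Fintype N]
variable {adj : N → N → Prop} [DecidableRel adj] {pos : Finset (N × ℕ)} {cb ct : N} {T k : ℕ}

/-- Build a lattice element from a labelling which reverses the generating steps. -/
def ofSteps (c : {x : N × ℕ // x ∈ pos} → ℕ) (h1 : ∀ x, c x ≤ k)
    (h2 : ∀ x y : {x : N × ℕ // x ∈ pos}, adj x.1.1 y.1.1 → y.1.2 = x.1.2 + 1 → c y ≤ c x) :
    LL adj pos k :=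
  ⟨c, h1, by
    have : ∀ x y : N × ℕ, ple adj pos x y → ∀ (hx : x ∈ pos) (hy : y ∈ pos), c ⟨y, hy⟩ ≤ c ⟨x, hx⟩ := by
      intro x y h
      induction h with
      | refl => intro _ _; exact le_rfl
      | tail _ hs ih =>
        intro hx hy
        exact (h2 ⟨_, hs.1⟩ ⟨_, hy⟩ hs.2.2.1 hs.2.2.2).trans (ih hx hs.1)
    intro x y h
    exact this _ _ h y.2 x.2, trivial⟩

/-- `s` is `r` raised by one at position `x`. -/
def relU (x : {x : N × ℕ // x ∈ pos}) (s r : LL adj pos k) : Prop :=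
  s.1 = Function.update r.1 x (r.1 x + 1)

instance (x : {x : N × ℕ // x ∈ pos}) (s r : LL adj pos k) : Decidable (relU x s r) := by
  unfold relU; infer_instance

theorem relU_self {x : {x : N × ℕ // x ∈ pos}} {s r : LL adj pos k} (h : relU x s r) :
    s.1 x = r.1 x + 1 := by rw [h, Function.update_self]

theorem relU_ne {x y : {x : N × ℕ // x ∈ pos}} {s r : LL adj pos k} (h : relU x s r) (hy : y ≠ x) :
    s.1 y = r.1 y := by rw [h, Function.update_of_ne hy]

theorem relU_intro {x : {x : N × ℕ // x ∈ pos}} {s r : LL adj pos k} (h : s.1 x = r.1 x + 1)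
    (h2 : ∀ y, y ≠ x → s.1 y = r.1 y) : relU x s r := by
  funext y
  by_cases hy : y = x
  · subst hy; rw [h, Function.update_self]
  · rw [h2 y hy, Function.update_of_ne hy]

theorem relU_left {x : {x : N × ℕ // x ∈ pos}} {s s' r : LL adj pos k} (h : relU x s r)
    (h' : relU x s' r) : s = s' := Subtype.ext (h.trans h'.symm)

theorem relU_right {x : {x : N × ℕ // x ∈ pos}} {s r r' : LL adj pos k} (h : relU x s r)
    (h' : relU x s r') : r = r' := by
  apply Subtype.ext; funext y
  by_cases hy : y = x
  · subst hy; have := relU_self h; have := relU_self h'; omega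
  · rw [← relU_ne h hy, ← relU_ne h' hy]

theorem relU_pos {x y : {x : N × ℕ // x ∈ pos}} {s r : LL adj pos k} (h : relU x s r)
    (h' : relU y s r) : x = y := by
  by_contra hne
  have := relU_self h; have := relU_ne h' hne; omega

theorem edge_iff (i : N) (r s : LL adj pos k) : edge i r s ↔ ∃ x, x.1.1 = i ∧ relU x s r := by
  constructor
  · rintro ⟨x, hx, h1, h2⟩; exact ⟨x, hx, relU_intro h1 h2⟩
  · rintro ⟨x, hx, h⟩; exact ⟨x, hx, relU_self h, fun y hy => relU_ne h hy⟩

theorem canUp_iff (hg : Good adj pos cb ct T) (x : {x : N × ℕ // x ∈ pos}) (r : LL adj pos k) :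
    canUp x r ↔ ∃ s : LL adj pos k, relU x s r := by
  constructor
  · intro h
    refine ⟨ofSteps (Function.update r.1 x (r.1 x + 1)) ?_ ?_, rfl⟩
    · intro y
      by_cases hy : y = x
      · subst hy; rw [Function.update_self]; exact h.1
      · rw [Function.update_of_ne hy]; exact r.2.1 y
    · intro y z ha hr
      have h0 := mono_step r y z ha hr
      by_cases hz : z = x
      · subst hz
        have : y ≠ z := by rintro rfl; omega
        rw [Function.update_self, Function.update_of_ne this]
        exact h.2 y ha hr
      · rw [Function.update_of_ne hz]
        by_cases hy : y = x
        · subst hy; rw [Function.update_self]; omega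
        · rwa [Function.update_of_ne hy]
  · rintro ⟨s, hs⟩
    have h1 := relU_self hs
    refine ⟨?_, ?_⟩
    · have := s.2.1 x; omega
    · intro y ha hr
      have := mono_step s y x ha hr
      rw [relU_ne hs (show y ≠ x by rintro rfl; omega)] at this
      omega

theorem canDown_iff (hg : Good adj pos cb ct T) (x : {x : N × ℕ // x ∈ pos}) (s : LL adj pos k) :
    canDown x s ↔ ∃ r : LL adj pos k, relU x s r := by
  constructor
  · intro h
    have h0 := h.1
    refine ⟨ofSteps (Function.update s.1 x (s.1 x - 1)) ?_ ?_, relU_intro ?_ ?_⟩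
    · intro y
      by_cases hy : y = x
      · subst hy; rw [Function.update_self]; have := s.2.1 y; omega
      · rw [Function.update_of_ne hy]; exact s.2.1 y
    · intro y z ha hr
      have h0 := mono_step s y z ha hr
      by_cases hy : y = x
      · subst hy
        have : z ≠ y := by rintro rfl; omega
        rw [Function.update_self, Function.update_of_ne this]
        have := h.2 z ha hr; omega
      · rw [Function.update_of_ne hy]
        by_cases hz : z = x
        · subst hz; rw [Function.update_self]; omega
        · rwa [Function.update_of_ne hz]
    · show s.1 x = Function.update s.1 x (s.1 x - 1) x + 1
      rw [Function.update_self]; omega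
    · intro y hy
      show s.1 y = Function.update s.1 x (s.1 x - 1) y
      rw [Function.update_of_ne hy]
  · rintro ⟨r, hs⟩
    have h1 := relU_self hs
    refine ⟨by omega, ?_⟩
    intro y ha hr
    have := mono_step r x y ha hr
    rw [← relU_ne hs (show y ≠ x by rintro rfl; omega)] at this
    omega

variable (cb ct T) in
/-- Coefficient for raising `x`. -/
def Gu (x : {x : N × ℕ // x ∈ pos}) (t : LL adj pos k) : ℚ := G adj pos cb ct T k x (t.1 x : ℚ) (qv t)

variable (cb ct T) in
/-- Coefficient for lowering `x`. -/
def Gd (x : {x : N × ℕ // x ∈ pos}) (t : LL adj pos k) : ℚ :=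
  G adj pos cb ct T k x ((t.1 x : ℚ) - 1) (qv t)

theorem qv_relU {x : {x : N × ℕ // x ∈ pos}} {s r : LL adj pos k} (h : relU x s r) :
    qv s = Function.update (qv r) x (qv r x + 1) := by
  funext y
  by_cases hy : y = x
  · subst hy; rw [Function.update_self]; simp [qv, relU_self h]
  · rw [Function.update_of_ne hy]; simp [qv, relU_ne h hy]

theorem Gd_relU (hg : Good adj pos cb ct T) {x : {x : N × ℕ // x ∈ pos}} {s r : LL adj pos k}
    (h : relU x s r) : Gd cb ct T x s = Gu cb ct T x r := by
  unfold Gd Gu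
  rw [qv_relU h, G_update hg, relU_self h]
  push_cast
  rw [add_sub_cancel_right]

theorem sum_out (hg : Good adj pos cb ct T) (x : {x : N × ℕ // x ∈ pos}) (r : LL adj pos k) :
    ∑ s : LL adj pos k, (if relU x s r then Gu cb ct T x r else 0) = Gu cb ct T x r := by
  by_cases h : canUp x r
  · obtain ⟨s, hs⟩ := (canUp_iff hg x r).1 h
    rw [Finset.sum_eq_single s]
    · rw [if_pos hs]
    · intro b _ hb
      rw [if_neg]; intro h'; exact hb (relU_left h' hs)
    · simp
  · rw [show Gu cb ct T x r = 0 from G_up_zero hg x r h]; simp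

theorem sum_inn (hg : Good adj pos cb ct T) (x : {x : N × ℕ // x ∈ pos}) (s : LL adj pos k) :
    ∑ r : LL adj pos k, (if relU x s r then Gu cb ct T x r else 0) = Gd cb ct T x s := by
  by_cases h : canDown x s
  · obtain ⟨r, hs⟩ := (canDown_iff hg x s).1 h
    rw [Finset.sum_eq_single r]
    · rw [if_pos hs, Gd_relU hg hs]
    · intro b _ hb
      rw [if_neg]; intro h'; exact hb (relU_right h' hs)
    · simp
  · rw [show Gd cb ct T x s = 0 from G_down_zero hg x s h]
    apply Finset.sum_eq_zero
    intro r _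
    rw [if_neg]
    intro hr; exact h ((canDown_iff hg x s).2 ⟨r, hr⟩)

/-- Elements agreeing with `t` off color `i`. -/
def agree (i : N) (t u : LL adj pos k) : Prop := ∀ y, y.1.1 ≠ i → u.1 y = t.1 y

open Classical in
theorem agree_sum (hg : Good adj pos cb ct T) (i : N) (t : LL adj pos k) :
    ∑ u ∈ Finset.univ.filter (agree i t), wtM adj pos cb ct k i (qv u) = 0 := by
  have h1 : ∀ u : LL adj pos k, wtM adj pos cb ct k i (qv u) =
      ∑ x ∈ Finset.univ.filter (fun x : {x : N × ℕ // x ∈ pos} => x.1.1 = i),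
        (Gd cb ct T x u - Gu cb ct T x u) := fun u => (G_sum hg u i).symm
  rw [Finset.sum_congr rfl (fun u _ => h1 u), Finset.sum_comm]
  apply Finset.sum_eq_zero
  intro x hx
  have hx : x.1.1 = i := (Finset.mem_filter.1 hx).2
  rw [Finset.sum_sub_distrib, sub_eq_zero,
    Finset.sum_congr rfl (fun u _ => (sum_inn hg x u).symm),
    Finset.sum_congr rfl (fun u _ => (sum_out hg x u).symm)]
  rw [Finset.sum_filter, Finset.sum_filter]
  have e : ∀ (u : LL adj pos k) (f : LL adj pos k → ℚ), (if agree i t u then ∑ s, f s else 0) =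
      ∑ s, if agree i t u then f s else 0 := by
    intro u f; split_ifs <;> simp
  simp only [e]
  rw [Finset.sum_comm]
  apply Finset.sum_congr rfl
  intro r _
  apply Finset.sum_congr rfl
  intro s _
  by_cases h : relU x s r
  · have : agree i t s ↔ agree i t r := by
      unfold agree
      refine forall_congr' fun y => ?_
      by_cases hy : y = x
      · subst hy; simp [hx]
      · rw [relU_ne h hy]
    simp [h, this]
  · simp [h]

theorem comp_agree (i : N) (t s : LL adj pos k) (h : s ∈ comp i t) : agree i t s := by
  have h2 : Relation.ReflTransGen (fun a b => edge i a b ∨ edge i b a) t s := h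
  clear h
  induction h2 with
  | refl => intro y _; rfl
  | tail _ hs ih =>
    intro y hy
    rw [← ih y hy]
    rcases hs with hs | hs
    · obtain ⟨x, hx, h⟩ := (edge_iff _ _ _).1 hs
      exact relU_ne h (by rintro rfl; exact hy hx)
    · obtain ⟨x, hx, h⟩ := (edge_iff _ _ _).1 hs
      exact (relU_ne h (by rintro rfl; exact hy hx)).symm

theorem rk_relU {x : {x : N × ℕ // x ∈ pos}} {s r : LL adj pos k} (h : relU x s r) :
    rk s = rk r + 1 := by
  unfold rk
  rw [← Finset.add_sum_erase _ _ (Finset.mem_attach pos x), ← Finset.add_sum_erase _ (r.1) (Finset.mem_attach pos x),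
    relU_self h, Finset.sum_congr rfl (fun y hy => relU_ne h (Finset.mem_erase.1 hy).1)]
  ring

theorem rk_agree (hg : Good adj pos cb ct T) (i : N) (t u : LL adj pos k) (h : agree i t u) :
    wtM adj pos cb ct k i (qv u) = wtM adj pos cb ct k i (qv t) + 2 * (rk u : ℚ) - 2 * (rk t : ℚ) := by
  have e1 : (rk u : ℚ) - rk t = ∑ x ∈ Finset.univ.filter (fun x : {x : N × ℕ // x ∈ pos} => x.1.1 = i),
      (qv u x - qv t x) := by
    unfold rk
    push_cast
    rw [← Finset.sum_sub_distrib, Finset.sum_filter, Finset.univ_eq_attach]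
    apply Finset.sum_congr rfl
    intro x _
    split_ifs with hx
    · rfl
    · rw [h x hx, sub_self]
  have e2 : ∑ o ∈ Finset.univ.filter (isN adj pos cb ct i), nval pos k (qv u) o =
      ∑ o ∈ Finset.univ.filter (isN adj pos cb ct i), nval pos k (qv t) o := by
    apply Finset.sum_congr rfl
    intro o ho
    have ho := (Finset.mem_filter.1 ho).2
    rcases o with _ | _ | y
    · rfl
    · rfl
    · have ho : adj i y.1.1 := ho
      have : y.1.1 ≠ i := by intro h; rw [h] at ho; exact hg.irr _ ho
      simp [nval, qv, h y this]
  unfold wtM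
  rw [e2, ← Finset.mul_sum, ← Finset.mul_sum]
  rw [Finset.sum_sub_distrib] at e1
  linarith

open Classical in
theorem mwt_eq (hg : Good adj pos cb ct T) (i : N) (t : LL adj pos k) :
    ((mwt i t : ℤ) : ℚ) = wtM adj pos cb ct k i (qv t) := by
  have hne : (rk '' comp i t).Nonempty := ⟨rk t, t, Relation.ReflTransGen.refl, rfl⟩
  have hbd : BddAbove (rk '' comp i t) := (Set.toFinite _).bddAbove
  obtain ⟨s, hs, hsr⟩ := Nat.sInf_mem hne
  obtain ⟨s', hs', hsr'⟩ := Nat.sSup_mem hne hbd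
  have as := comp_agree i t s hs
  have as' := comp_agree i t s' hs'
  have nd : ∀ x : {x : N × ℕ // x ∈ pos}, x.1.1 = i → ¬ canDown x s := by
    intro x hx hd
    obtain ⟨r, hr⟩ := (canDown_iff hg x s).1 hd
    have hm : r ∈ comp i t := Relation.ReflTransGen.tail hs (Or.inr ((edge_iff _ _ _).2 ⟨x, hx, hr⟩))
    have h1 := Nat.sInf_le (Set.mem_image_of_mem rk hm)
    have h2 := rk_relU hr
    omega
  have nu : ∀ x : {x : N × ℕ // x ∈ pos}, x.1.1 = i → ¬ canUp x s' := by
    intro x hx hd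
    obtain ⟨r, hr⟩ := (canUp_iff hg x s').1 hd
    have hm : r ∈ comp i t := Relation.ReflTransGen.tail hs' (Or.inl ((edge_iff _ _ _).2 ⟨x, hx, hr⟩))
    have h1 := le_csSup hbd (Set.mem_image_of_mem rk hm)
    have h2 := rk_relU hr
    omega
  have lo : ∀ u, agree i t u → ∀ x, s.1 x ≤ u.1 x := by
    intro u hu x
    by_cases hx : x.1.1 = i
    · by_cases h0 : 0 < s.1 x
      · by_contra hcon
        apply nd x hx
        refine ⟨h0, ?_⟩
        intro y ha hr
        have hy : y.1.1 ≠ i := by intro h; rw [hx, h] at ha; exact hg.irr _ ha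
        have := mono_step u x y ha hr
        rw [hu y hy, ← as y hy] at this
        omega
      · omega
    · rw [hu x hx, as x hx]
  have hi : ∀ u, agree i t u → ∀ x, u.1 x ≤ s'.1 x := by
    intro u hu x
    by_cases hx : x.1.1 = i
    · by_contra hcon
      apply nu x hx
      refine ⟨by have := u.2.1 x; omega, ?_⟩
      intro y ha hr
      have hy : y.1.1 ≠ i := by intro h; rw [hx, h] at ha; exact hg.irr _ ha
      have := mono_step u y x ha hr
      rw [hu y hy, ← as' y hy] at this
      omega
    · rw [hu x hx, as' x hx]
  let σ : ∀ u : LL adj pos k, agree i t u → LL adj pos k := fun u hu =>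
    ofSteps (fun x => s.1 x + s'.1 x - u.1 x) (by
      intro x; have := lo u hu x; have := s'.2.1 x; omega) (by
      intro x y ha hr
      have b1 := lo u hu x
      have b2 := lo u hu y
      have b3 := hi u hu x
      have b4 := hi u hu y
      by_cases hx : x.1.1 = i
      · have hy : y.1.1 ≠ i := by intro h; rw [hx, h] at ha; exact hg.irr _ ha
        have e1 := hu y hy
        have e2 := as y hy
        have e3 := as' y hy
        have := mono_step s x y ha hr
        show s.1 y + s'.1 y - u.1 y ≤ s.1 x + s'.1 x - u.1 x
        omega
      · have e1 := hu x hx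
        have e2 := as x hx
        have e3 := as' x hx
        have := mono_step s' x y ha hr
        show s.1 y + s'.1 y - u.1 y ≤ s.1 x + s'.1 x - u.1 x
        omega)
  have σv : ∀ u hu x, (σ u hu).1 x = s.1 x + s'.1 x - u.1 x := fun _ _ _ => rfl
  have σa : ∀ u hu, agree i t (σ u hu) := by
    intro u hu y hy
    rw [σv u hu y, hu y hy, as y hy, as' y hy]; omega
  have σσ : ∀ u hu, σ (σ u hu) (σa u hu) = u := by
    intro u hu
    apply Subtype.ext; funext x
    rw [σv (σ u hu) (σa u hu) x, σv u hu x]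
    have b1 := lo u hu x
    have b3 := hi u hu x
    omega
  have σr : ∀ u hu, rk (σ u hu) + rk u = rk s + rk s' := by
    intro u hu
    unfold rk
    rw [← Finset.sum_add_distrib, ← Finset.sum_add_distrib]
    apply Finset.sum_congr rfl
    intro x _
    rw [σv u hu x]
    have b1 := lo u hu x
    have b3 := hi u hu x
    omega
  have inv : ∑ u ∈ Finset.univ.filter (agree i t), (rk u : ℚ) =
      ∑ u ∈ Finset.univ.filter (agree i t), ((rk s : ℚ) + rk s' - rk u) := by
    refine Finset.sum_bij' (fun u hu => σ u (Finset.mem_filter.1 hu).2)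
      (fun u hu => σ u (Finset.mem_filter.1 hu).2) ?_ ?_ ?_ ?_ ?_
    · intro u hu; exact Finset.mem_filter.2 ⟨Finset.mem_univ _, σa u (Finset.mem_filter.1 hu).2⟩
    · intro u hu; exact Finset.mem_filter.2 ⟨Finset.mem_univ _, σa u (Finset.mem_filter.1 hu).2⟩
    · intro u hu; exact σσ u (Finset.mem_filter.1 hu).2
    · intro u hu; exact σσ u (Finset.mem_filter.1 hu).2
    · intro u hu
      have := σr u (Finset.mem_filter.1 hu).2
      have : (rk (σ u (Finset.mem_filter.1 hu).2) : ℚ) + rk u = rk s + rk s' := by exact_mod_cast this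
      linarith
  have tot := agree_sum hg i t
  rw [Finset.sum_congr rfl (fun u hu => rk_agree hg i t u (Finset.mem_filter.1 hu).2)] at tot
  rw [Finset.sum_sub_distrib, Finset.sum_const, nsmul_eq_mul] at inv
  rw [Finset.sum_sub_distrib, Finset.sum_add_distrib, Finset.sum_const, Finset.sum_const, nsmul_eq_mul,
    nsmul_eq_mul, ← Finset.mul_sum] at tot
  have hc : ((Finset.univ.filter (agree i t)).card : ℚ) ≠ 0 := by
    rw [Nat.cast_ne_zero]
    exact (Finset.card_pos.2 ⟨t, Finset.mem_filter.2 ⟨Finset.mem_univ _, fun _ _ => rfl⟩⟩).ne'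
  have fin : wtM adj pos cb ct k i (qv t) = 2 * (rk t : ℚ) - rk s - rk s' := by
    apply mul_left_cancel₀ hc
    linarith
  unfold mwt
  rw [fin, ← hsr, ← hsr']
  push_cast; ring

theorem wtM_relU (hg : Good adj pos cb ct T) (i : N) {x : {x : N × ℕ // x ∈ pos}} {s r : LL adj pos k}
    (h : relU x s r) : wtM adj pos cb ct k i (qv s) = wtM adj pos cb ct k i (qv r) +
      (if x.1.1 = i then 2 else if adj i x.1.1 then -1 else 0) := by
  have e1 : ∑ y ∈ Finset.univ.filter (fun x : {x : N × ℕ // x ∈ pos} => x.1.1 = i), 2 * qv s y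
      = ∑ y ∈ Finset.univ.filter (fun x : {x : N × ℕ // x ∈ pos} => x.1.1 = i), 2 * qv r y +
        if x.1.1 = i then 2 else 0 := by
    rw [← sub_eq_iff_eq_add', ← Finset.sum_sub_distrib, Finset.sum_filter,
      Finset.sum_eq_single x]
    · split_ifs
      · rw [qv_relU h, Function.update_self]; ring
      · rfl
    · intro y _ hy
      rw [qv_relU h, Function.update_of_ne hy]; simp
    · simp
  have e2 : ∑ o ∈ Finset.univ.filter (isN adj pos cb ct i), nval pos k (qv s) o
      = ∑ o ∈ Finset.univ.filter (isN adj pos cb ct i), nval pos k (qv r) o +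
        if adj i x.1.1 then 1 else 0 := by
    rw [← sub_eq_iff_eq_add', ← Finset.sum_sub_distrib, Finset.sum_filter,
      Finset.sum_eq_single (some (some x))]
    · have e3 : nval pos k (qv s) (some (some x)) - nval pos k (qv r) (some (some x)) = 1 := by
        show qv s x - qv r x = 1
        rw [qv_relU h, Function.update_self]; ring
      rw [e3]
      by_cases h3 : adj i x.1.1
      · rw [if_pos h3, if_pos (show isN adj pos cb ct i (some (some x)) from h3)]
      · rw [if_neg h3, if_neg (show ¬ isN adj pos cb ct i (some (some x)) from h3)]
    · intro o _ ho
      rcases o with _ | _ | y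
      · simp [nval]
      · simp [nval]
      · have hy : y ≠ x := by rintro rfl; exact ho rfl
        simp only [nval]
        rw [qv_relU h, Function.update_of_ne hy]; simp
    · simp
  unfold wtM
  rw [e1, e2]
  by_cases h1 : x.1.1 = i
  · have : ¬ adj i x.1.1 := by rw [h1]; exact hg.irr i
    simp [h1, this, hg.irr i]; ring
  · by_cases h2 : adj i x.1.1 <;> simp [h1, h2]
    ring

end Moves

end CL

namespace CL

section Ops

set_option linter.unusedSectionVars false
set_option linter.unusedVariables false

variable {N : Type} [DecidableEq N] [Fintype N]
variable {adj : N → N → Prop} [DecidableRel adj] {pos : Finset (N × ℕ)} {cb ct : N} {T k : ℕ}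

theorem Gu_pos (hg : Good adj pos cb ct T) {x : {x : N × ℕ // x ∈ pos}} {s r : LL adj pos k}
    (h : relU x s r) : 0 < Gu cb ct T x r := G_pos hg x r ((canUp_iff hg x r).2 ⟨s, h⟩)

/-- Lower completion of a square. -/
theorem square_low {x y : {x : N × ℕ // x ∈ pos}} (hxy : x ≠ y) {s t u : LL adj pos k}
    (h1 : relU y u s) (h2 : relU x u t) : ∃ r : LL adj pos k, relU x s r ∧ relU y t r := by
  refine ⟨ofSteps (fun z => min (s.1 z) (t.1 z)) ?_ ?_, relU_intro ?_ ?_, relU_intro ?_ ?_⟩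
  · intro z; exact (min_le_left _ _).trans (s.2.1 z)
  · intro z w ha hr
    exact min_le_min (mono_step s z w ha hr) (mono_step t z w ha hr)
  · show s.1 x = min (s.1 x) (t.1 x) + 1
    have := relU_ne h1 hxy; have := relU_self h2; omega
  · intro z hz
    show s.1 z = min (s.1 z) (t.1 z)
    have a := relU_ne h2 hz
    by_cases hzy : z = y
    · subst hzy; have := relU_self h1; omega
    · have := relU_ne h1 hzy; omega
  · show t.1 y = min (s.1 y) (t.1 y) + 1
    have := relU_ne h2 hxy.symm; have := relU_self h1; omega
  · intro z hz
    show t.1 z = min (s.1 z) (t.1 z)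
    have a := relU_ne h1 hz
    by_cases hzy : z = x
    · subst hzy; have := relU_self h2; omega
    · have := relU_ne h2 hzy; omega

/-- Upper completion of a square. -/
theorem square_up {x y : {x : N × ℕ // x ∈ pos}} (hxy : x ≠ y) {s t r : LL adj pos k}
    (h1 : relU x s r) (h2 : relU y t r) : ∃ u : LL adj pos k, relU y u s ∧ relU x u t := by
  refine ⟨ofSteps (fun z => max (s.1 z) (t.1 z)) ?_ ?_, relU_intro ?_ ?_, relU_intro ?_ ?_⟩
  · intro z; exact max_le (s.2.1 z) (t.2.1 z)
  · intro z w ha hr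
    exact max_le_max (mono_step s z w ha hr) (mono_step t z w ha hr)
  · show max (s.1 y) (t.1 y) = s.1 y + 1
    have := relU_ne h1 hxy.symm; have := relU_self h2; omega
  · intro z hz
    show max (s.1 z) (t.1 z) = s.1 z
    have a := relU_ne h2 hz
    by_cases hzy : z = x
    · subst hzy; have := relU_self h1; omega
    · have := relU_ne h1 hzy; omega
  · show max (s.1 x) (t.1 x) = t.1 x + 1
    have := relU_ne h2 hxy; have := relU_self h1; omega
  · intro z hz
    show max (s.1 z) (t.1 z) = t.1 z
    have a := relU_ne h1 hz
    by_cases hzy : z = y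
    · subst hzy; have := relU_self h2; omega
    · have := relU_ne h2 hzy; omega

variable (cb ct T) in
/-- Elementary raising matrix at a position. -/
def Em (x : {x : N × ℕ // x ∈ pos}) : Matrix (LL adj pos k) (LL adj pos k) ℂ :=
  fun s r => if relU x s r then ((Real.sqrt ((Gu cb ct T x r : ℚ) : ℝ) : ℝ) : ℂ) else 0

theorem Em_comm (hg : Good adj pos cb ct T) {x y : {x : N × ℕ // x ∈ pos}} (hxy : x ≠ y) :
    (Em cb ct T x : Matrix (LL adj pos k) (LL adj pos k) ℂ) * (Em cb ct T y).transpose =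
      (Em cb ct T y).transpose * Em cb ct T x := by
  ext s t
  rw [Matrix.mul_apply, Matrix.mul_apply]
  simp only [Matrix.transpose_apply]
  by_cases h : ∃ r, relU x s r ∧ relU y t r
  · obtain ⟨r, h1, h2⟩ := h
    obtain ⟨u, h3, h4⟩ := square_up hxy h1 h2
    rw [Finset.sum_eq_single r, Finset.sum_eq_single u]
    · simp only [Em, h1, h2, h3, h4, if_true]
      rw [← Complex.ofReal_mul, ← Complex.ofReal_mul]
      congr 1
      rw [← Real.sqrt_mul (by exact_mod_cast (Gu_pos hg h1).le),
        ← Real.sqrt_mul (by exact_mod_cast (Gu_pos hg h3).le)]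
      congr 1
      have e := G_diamond (k := k) hg (qv r) x y hxy
      rw [← qv_relU h1, ← qv_relU h2] at e
      have e' : Gu cb ct T x r * Gu cb ct T y r = Gu cb ct T y s * Gu cb ct T x t := by
        unfold Gu
        rw [relU_ne h1 hxy.symm, relU_ne h2 hxy, mul_comm (G adj pos cb ct T k y _ (qv s))]
        exact e
      exact_mod_cast e'
    · intro b _ hb
      simp only [Em]
      rw [if_neg (fun h' => hb (relU_left h' h3)), zero_mul]
    · simp
    · intro b _ hb
      simp only [Em]
      rw [if_neg (fun h' => hb (relU_right h' h1)), zero_mul]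
    · simp
  · rw [Finset.sum_eq_zero, Finset.sum_eq_zero]
    · intro u _
      simp only [Em]
      by_cases h3 : relU y u s
      · by_cases h4 : relU x u t
        · exact absurd (square_low hxy h3 h4) h
        · simp [h4]
      · simp [h3]
    · intro r _
      simp only [Em]
      by_cases h3 : relU x s r
      · by_cases h4 : relU y t r
        · exact absurd ⟨r, h3, h4⟩ h
        · simp [h4]
      · simp [h3]

theorem Em_self (hg : Good adj pos cb ct T) (x : {x : N × ℕ // x ∈ pos}) :
    (Em cb ct T x : Matrix (LL adj pos k) (LL adj pos k) ℂ) * (Em cb ct T x).transpose -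
      (Em cb ct T x).transpose * Em cb ct T x =
    Matrix.diagonal fun t => ((Gd cb ct T x t - Gu cb ct T x t : ℚ) : ℂ) := by
  have sq : ∀ s r : LL adj pos k, relU x s r →
      ((Real.sqrt ((Gu cb ct T x r : ℚ) : ℝ) : ℝ) : ℂ) * ((Real.sqrt ((Gu cb ct T x r : ℚ) : ℝ) : ℝ) : ℂ)
        = ((Gu cb ct T x r : ℚ) : ℂ) := by
    intro s r h
    rw [← Complex.ofReal_mul, Real.mul_self_sqrt (by exact_mod_cast (Gu_pos hg h).le)]
    norm_cast
  ext s t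
  rw [Matrix.sub_apply, Matrix.mul_apply, Matrix.mul_apply]
  simp only [Matrix.transpose_apply]
  by_cases hst : s = t
  · subst hst
    rw [Matrix.diagonal_apply_eq, Rat.cast_sub, ← sum_inn hg x s, ← sum_out hg x s, Rat.cast_sum, Rat.cast_sum]
    congr 1
    · apply Finset.sum_congr rfl
      intro r _
      simp only [Em]
      split_ifs with h
      · exact sq _ _ h
      · simp
    · apply Finset.sum_congr rfl
      intro r _
      simp only [Em]
      split_ifs with h
      · exact sq _ _ h
      · simp
  · rw [Matrix.diagonal_apply_ne _ hst, Finset.sum_eq_zero, Finset.sum_eq_zero, sub_zero]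
    · intro u _
      simp only [Em]
      by_cases h3 : relU x u s
      · by_cases h4 : relU x u t
        · exact absurd (relU_right h3 h4) hst
        · simp [h4]
      · simp [h3]
    · intro u _
      simp only [Em]
      by_cases h3 : relU x s u
      · by_cases h4 : relU x t u
        · exact absurd (relU_left h3 h4) hst
        · simp [h4]
      · simp [h3]

variable (cb ct T) in
/-- Raising matrix of a color. -/
def Xm (i : N) : Matrix (LL adj pos k) (LL adj pos k) ℂ :=
  ∑ x ∈ Finset.univ.filter (fun x : {x : N × ℕ // x ∈ pos} => x.1.1 = i), Em cb ct T x

variable (cb ct T) in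
/-- Weight matrix of a color. -/
def Hm (i : N) : Matrix (LL adj pos k) (LL adj pos k) ℂ :=
  Matrix.diagonal fun t => ((mwt i t : ℤ) : ℂ)

variable (cb ct T) in
/-- The edge coefficients. -/
def Pc (r s : LL adj pos k) : ℚ := ∑ x, if relU x s r then Gu cb ct T x r else 0

theorem Pc_relU {x : {x : N × ℕ // x ∈ pos}} {s r : LL adj pos k} (h : relU x s r) :
    Pc cb ct T r s = Gu cb ct T x r := by
  unfold Pc
  rw [Finset.sum_eq_single x]
  · rw [if_pos h]
  · intro b _ hb; rw [if_neg]; intro h'; exact hb (relU_pos h' h)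
  · simp

theorem Pc_pos (hg : Good adj pos cb ct T) (r s : LL adj pos k) (h : ∃ i, edge i r s) :
    0 < Pc cb ct T r s := by
  obtain ⟨i, hi⟩ := h
  obtain ⟨x, _, hx⟩ := (edge_iff _ _ _).1 hi
  rw [Pc_relU hx]; exact Gu_pos hg hx

theorem Xm_apply (i : N) (s r : LL adj pos k) : Xm cb ct T i s r =
    if edge i r s then (↑(Real.sqrt (Pc cb ct T r s)) : ℂ) else 0 := by
  unfold Xm
  rw [Matrix.sum_apply]
  split_ifs with h
  · obtain ⟨x, hxi, hx⟩ := (edge_iff _ _ _).1 h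
    rw [Finset.sum_eq_single x]
    · rw [Pc_relU hx]; simp [Em, hx]
    · intro b _ hb; simp only [Em]; rw [if_neg]; intro h'; exact hb (relU_pos h' hx)
    · intro h'; exact (h' (by simp [hxi])).elim
  · apply Finset.sum_eq_zero
    intro x hx
    simp only [Em]; rw [if_neg]; intro h'
    exact h ((edge_iff _ _ _).2 ⟨x, (Finset.mem_filter.1 hx).2, h'⟩)

theorem opX_eq (i : N) : opX (Pc cb ct T : LL adj pos k → LL adj pos k → ℚ) i =
    Matrix.toLinAlgEquiv' (Xm cb ct T i) := by
  unfold opX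
  have : (fun s r => if edge i r s then (↑(Real.sqrt (Pc cb ct T r s)) : ℂ) else 0) =
      (Xm cb ct T i : Matrix (LL adj pos k) (LL adj pos k) ℂ) := by
    ext s r; rw [Xm_apply]
  rw [this]; rfl

theorem opY_eq (i : N) : opY (Pc cb ct T : LL adj pos k → LL adj pos k → ℚ) i =
    Matrix.toLinAlgEquiv' (Xm cb ct T i).transpose := by
  unfold opY
  have : (fun r s => if edge i r s then (↑(Real.sqrt (Pc cb ct T r s)) : ℂ) else 0) =
      (Xm cb ct T i : Matrix (LL adj pos k) (LL adj pos k) ℂ).transpose := by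
    ext s r; rw [Matrix.transpose_apply, Xm_apply]
  rw [this]; rfl

theorem opH_eq (i : N) : (opH i : Module.End ℂ (LL adj pos k → ℂ)) =
    Matrix.toLinAlgEquiv' (Hm i) := rfl

theorem Xm_Ym_ne (hg : Good adj pos cb ct T) {i j : N} (hij : i ≠ j) :
    (Xm cb ct T i : Matrix (LL adj pos k) (LL adj pos k) ℂ) * (Xm cb ct T j).transpose =
      (Xm cb ct T j).transpose * Xm cb ct T i := by
  unfold Xm
  rw [Matrix.transpose_sum, Finset.sum_mul_sum, Finset.sum_mul_sum, Finset.sum_comm]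
  apply Finset.sum_congr rfl; intro y hy
  apply Finset.sum_congr rfl; intro x hx
  apply Em_comm hg
  rintro rfl
  exact hij ((Finset.mem_filter.1 hx).2.symm.trans (Finset.mem_filter.1 hy).2)

theorem Xm_Ym_self (hg : Good adj pos cb ct T) (i : N) :
    (Xm cb ct T i : Matrix (LL adj pos k) (LL adj pos k) ℂ) * (Xm cb ct T i).transpose -
      (Xm cb ct T i).transpose * Xm cb ct T i = Hm i := by
  unfold Xm
  rw [Matrix.transpose_sum, Finset.sum_mul_sum, Finset.sum_mul_sum]
  rw [Finset.sum_comm (f := fun a b => Em cb ct T a * (Em cb ct T b).transpose), ← Finset.sum_sub_distrib]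
  have : ∀ x ∈ Finset.univ.filter (fun x : {x : N × ℕ // x ∈ pos} => x.1.1 = i),
      (∑ y ∈ Finset.univ.filter (fun x : {x : N × ℕ // x ∈ pos} => x.1.1 = i),
        (Em cb ct T y : Matrix (LL adj pos k) (LL adj pos k) ℂ) * (Em cb ct T x).transpose) -
      (∑ y ∈ Finset.univ.filter (fun x : {x : N × ℕ // x ∈ pos} => x.1.1 = i),
        (Em cb ct T x).transpose * (Em cb ct T y : Matrix (LL adj pos k) (LL adj pos k) ℂ)) =
      Matrix.diagonal fun t => ((Gd cb ct T x t - Gu cb ct T x t : ℚ) : ℂ) := by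
    intro x hx
    rw [← Finset.sum_sub_distrib, Finset.sum_eq_single x]
    · exact Em_self hg x
    · intro y _ hy
      rw [Em_comm hg hy, sub_self]
    · intro h; exact absurd hx h
  rw [Finset.sum_congr rfl this]
  ext s t
  rw [Matrix.sum_apply]
  unfold Hm
  by_cases hst : s = t
  · subst hst
    simp only [Matrix.diagonal_apply_eq]
    have e := (G_sum hg s i).trans (mwt_eq hg i s).symm
    have e2 := congrArg (Rat.cast : ℚ → ℂ) e
    rw [Rat.cast_sum, Rat.cast_intCast] at e2
    exact e2
  · simp [Matrix.diagonal_apply_ne _ hst]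

theorem edge_mwt (hg : Good adj pos cb ct T) (i j : N) {r s : LL adj pos k} (h : edge j r s) :
    mwt i s - mwt i r = if j = i then 2 else if adj i j then -1 else 0 := by
  obtain ⟨x, hxi, hx⟩ := (edge_iff _ _ _).1 h
  have e := wtM_relU hg i hx
  rw [← mwt_eq hg, ← mwt_eq hg, hxi] at e
  have : ((mwt i s - mwt i r : ℤ) : ℚ) = ((if j = i then 2 else if adj i j then -1 else 0 : ℤ) : ℚ) := by
    push_cast; rw [e]; ring
  exact_mod_cast this

theorem Hm_Xm (hg : Good adj pos cb ct T) (i j : N) :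
    (Hm i : Matrix (LL adj pos k) (LL adj pos k) ℂ) * Xm cb ct T j - Xm cb ct T j * Hm i =
      (if j = i then 2 else if adj i j then -1 else 0 : ℤ) • Xm cb ct T j := by
  ext s r
  unfold Hm
  rw [Matrix.sub_apply, Matrix.diagonal_mul, Matrix.mul_diagonal, Matrix.smul_apply, Xm_apply]
  split_ifs with h1 h2 h3 h3 <;> first
    | (have e := edge_mwt hg i j h1
       simp only [*, if_true, if_false] at e
       have e' := congrArg (Int.cast : ℤ → ℂ) e
       push_cast at e'
       rw [zsmul_eq_mul]
       push_cast
       linear_combination (↑(Real.sqrt (Pc cb ct T r s)) : ℂ) * e')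
    | simp

theorem Hm_Ym (hg : Good adj pos cb ct T) (i j : N) :
    (Hm i : Matrix (LL adj pos k) (LL adj pos k) ℂ) * (Xm cb ct T j).transpose -
      (Xm cb ct T j).transpose * Hm i =
      - ((if j = i then 2 else if adj i j then -1 else 0 : ℤ) • (Xm cb ct T j).transpose) := by
  have e := congrArg Matrix.transpose (Hm_Xm (k := k) hg i j)
  have eH : (Hm i : Matrix (LL adj pos k) (LL adj pos k) ℂ).transpose = Hm i := by
    unfold Hm; exact Matrix.diagonal_transpose _
  rw [Matrix.transpose_sub, Matrix.transpose_mul, Matrix.transpose_mul, eH, Matrix.transpose_smul] at e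
  rw [← e, neg_sub]

theorem Hm_Hm (i j : N) :
    (Hm i : Matrix (LL adj pos k) (LL adj pos k) ℂ) * Hm j = Hm j * Hm i := by
  unfold Hm
  rw [Matrix.diagonal_mul_diagonal, Matrix.diagonal_mul_diagonal]
  simp only [mul_comm]

end Ops

section Serre

variable {B : Type*} [Ring B] [Algebra ℂ B] [Module.Finite ℂ B]

theorem prim_zero (X Y H u : B) (hXY : ⁅X, Y⁆ = H) (hHX : ⁅H, X⁆ = (2 : ℂ) • X)
    (hHY : ⁅H, Y⁆ = (-2 : ℂ) • Y) (c : ℕ) (hc : c ≠ 0) (hu : ⁅H, u⁆ = (c : ℂ) • u) (hYu : ⁅Y, u⁆ = 0) :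
    u = 0 := by
  by_contra hne
  by_cases hH : H = 0
  · rw [hH, zero_lie] at hu
    have := smul_eq_zero.1 hu.symm
    rcases this with h | h
    · exact hc (by exact_mod_cast h)
    · exact hne h
  have tr : IsSl2Triple (-H) Y X := by
    refine ⟨neg_ne_zero.2 hH, ?_, ?_, ?_⟩
    · rw [← lie_skew, hXY]
    · rw [neg_lie, hHY, neg_smul, neg_neg, two_smul, two_nsmul]
    · rw [neg_lie, hHX, two_smul, two_nsmul]
  have pv : tr.HasPrimitiveVectorWith u (-(c : ℂ)) := by
    refine ⟨hne, ?_, hYu⟩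
    rw [neg_lie, hu, neg_smul]
  obtain ⟨n, hn⟩ := pv.exists_nat
  have : ((n + c : ℕ) : ℂ) = 0 := by push_cast; rw [← hn]; ring
  have : n + c = 0 := by exact_mod_cast this
  omega

theorem serre_zero (X Y H Z : B) (hXY : ⁅X, Y⁆ = H) (hHX : ⁅H, X⁆ = (2 : ℂ) • X)
    (hHY : ⁅H, Y⁆ = (-2 : ℂ) • Y) (a : ℤ) (ha : a = 0 ∨ a = -1) (hZ : ⁅H, Z⁆ = (a : ℂ) • Z)
    (hYZ : ⁅Y, Z⁆ = 0) : ((LieAlgebra.ad ℂ B X) ^ (1 - a).toNat) Z = 0 := by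
  have hYX : ⁅Y, X⁆ = -H := by rw [← lie_skew, hXY]
  rcases ha with rfl | rfl
  · show ((LieAlgebra.ad ℂ B X) ^ 1) Z = 0
    rw [pow_one, LieAlgebra.ad_apply]
    rw [Int.cast_zero, zero_smul] at hZ
    apply prim_zero X Y H _ hXY hHX hHY 2 (by norm_num)
    · rw [leibniz_lie, hHX, hZ, lie_zero, add_zero, smul_lie]; norm_num
    · rw [leibniz_lie, hYX, hYZ, lie_zero, neg_lie, hZ]; simp
  · show ((LieAlgebra.ad ℂ B X) ^ 2) Z = 0
    rw [pow_two, Module.End.mul_apply, LieAlgebra.ad_apply, LieAlgebra.ad_apply]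
    have e1 : ⁅H, ⁅X, Z⁆⁆ = ⁅X, Z⁆ := by
      rw [leibniz_lie, hHX, hZ, smul_lie, lie_smul, ← add_smul]; norm_num
    have e2 : ⁅Y, ⁅X, Z⁆⁆ = Z := by
      rw [leibniz_lie, hYX, hYZ, lie_zero, neg_lie, hZ]; simp
    apply prim_zero X Y H _ hXY hHX hHY 3 (by norm_num)
    · rw [leibniz_lie, hHX, e1, smul_lie]; push_cast; module
    · rw [leibniz_lie, hYX, neg_lie, e1, e2, neg_add_cancel]

end Serre

end CL

namespace CL

section Phi

theorem exists_phi {I : Type} {B : Type*} [LieRing B] [LieAlgebra ℂ B] (A : I → I → ℤ) (X Y H : I → B)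
    (hHH : ∀ i j, ⁅H i, H j⁆ = 0) (hXY : ∀ i, ⁅X i, Y i⁆ = H i) (hXY' : ∀ i j, i ≠ j → ⁅X i, Y j⁆ = 0)
    (hHX : ∀ i j, ⁅H i, X j⁆ = A j i • X j) (hHY : ∀ i j, ⁅H i, Y j⁆ = -(A j i • Y j))
    (hX : ∀ i j, i ≠ j → ((LieAlgebra.ad ℂ B (X i)) ^ (1 - A j i).toNat) (X j) = 0)
    (hY : ∀ i j, i ≠ j → ((LieAlgebra.ad ℂ B (Y i)) ^ (1 - A j i).toNat) (Y j) = 0) :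
    ∃ φ : gLie A →ₗ⁅ℂ⁆ B, ∀ i, φ (px A i) = X i ∧ φ (py A i) = Y i ∧ φ (ph A i) = H i := by
  let g : SGen I → B := fun a => match a with
    | SGen.X i => X i
    | SGen.Y i => Y i
    | SGen.H i => H i
  let f : FreeLieAlgebra ℂ (SGen I) →ₗ⁅ℂ⁆ B := FreeLieAlgebra.lift ℂ g
  have fx : ∀ i, f (gx i) = X i := fun i => FreeLieAlgebra.lift_of_apply g (SGen.X i)
  have fy : ∀ i, f (gy i) = Y i := fun i => FreeLieAlgebra.lift_of_apply g (SGen.Y i)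
  have fh : ∀ i, f (gh i) = H i := fun i => FreeLieAlgebra.lift_of_apply g (SGen.H i)
  have fad : ∀ (n : ℕ) (a b : FreeLieAlgebra ℂ (SGen I)),
      f (((LieAlgebra.ad ℂ (FreeLieAlgebra ℂ (SGen I)) a) ^ n) b) =
        ((LieAlgebra.ad ℂ B (f a)) ^ n) (f b) := by
    intro n a b
    induction n with
    | zero => simp
    | succ n ih =>
      rw [pow_succ', pow_succ', Module.End.mul_apply, Module.End.mul_apply, LieAlgebra.ad_apply,
        LieAlgebra.ad_apply, LieHom.map_lie, ih]
  have hle : serreIdeal A ≤ f.ker := by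
    unfold serreIdeal
    rw [LieSubmodule.lieSpan_le]
    intro z hz
    show z ∈ f.ker
    rw [LieHom.mem_ker]
    rcases hz with (((((⟨i, j, rfl⟩ | ⟨i, rfl⟩) | ⟨i, j, hij, rfl⟩) | ⟨i, j, rfl⟩) | ⟨i, j, rfl⟩) |
      ⟨i, j, hij, rfl⟩) | ⟨i, j, hij, rfl⟩
    · rw [LieHom.map_lie, fh, fh, hHH]
    · rw [map_sub, LieHom.map_lie, fx, fy, fh, hXY, sub_self]
    · rw [LieHom.map_lie, fx, fy, hXY' i j hij]
    · rw [map_sub, LieHom.map_lie, map_zsmul, fh, fx, hHX, sub_self]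
    · rw [map_add, LieHom.map_lie, map_zsmul, fh, fy, hHY, neg_add_cancel]
    · rw [fad, fx, fx, hX i j hij]
    · rw [fad, fy, fy, hY i j hij]
  have hle' : (serreIdeal A).toSubmodule ≤ LinearMap.ker (f : FreeLieAlgebra ℂ (SGen I) →ₗ[ℂ] B) := by
    intro z hz
    have := hle hz
    rw [LieHom.mem_ker] at this
    exact this
  let φ0 : gLie A →ₗ[ℂ] B := (serreIdeal A).toSubmodule.liftQ (f : FreeLieAlgebra ℂ (SGen I) →ₗ[ℂ] B) hle'
  have φm : ∀ z, φ0 (LieSubmodule.Quotient.mk (N := serreIdeal A) z) = f z := fun z => rfl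
  refine ⟨{ φ0 with map_lie' := ?_ }, fun i => ⟨fx i, fy i, fh i⟩⟩
  intro a b
  show φ0 ⁅a, b⁆ = ⁅φ0 a, φ0 b⁆
  obtain ⟨a, rfl⟩ := LieSubmodule.Quotient.surjective_mk' (serreIdeal A) a
  obtain ⟨b, rfl⟩ := LieSubmodule.Quotient.surjective_mk' (serreIdeal A) b
  exact LieHom.map_lie f a b

variable {N : Type} [DecidableEq N] [Fintype N]
variable {adj : N → N → Prop} [DecidableRel adj] {pos : Finset (N × ℕ)} {cb ct : N} {T k : ℕ}

theorem phi_exists (hg : Good adj pos cb ct T) (A : N → N → ℤ)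
    (hA : ∀ i j, A i j = if i = j then 2 else if adj i j then -1 else 0) :
    ∃ φ : gLie A →ₗ⁅ℂ⁆ Module.End ℂ (LL adj pos k → ℂ),
      ∀ i : N, φ (px A i) = opX (Pc cb ct T) i ∧ φ (py A i) = opY (Pc cb ct T) i ∧
          φ (ph A i) = opH i := by
  have hA' : ∀ i j, (if j = i then 2 else if adj i j then -1 else 0) = A j i := by
    intro i j
    rw [hA]
    have : adj i j ↔ adj j i := ⟨hg.symm _ _, hg.symm _ _⟩
    simp only [this]
  have h1 : ∀ i j, ⁅(opH i : Module.End ℂ (LL adj pos k → ℂ)), (opH j : Module.End ℂ (LL adj pos k → ℂ))⁆ = 0 := by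
    intro i j
    rw [Ring.lie_def, opH_eq, opH_eq, ← map_mul, ← map_mul, Hm_Hm, sub_self]
  have h2 : ∀ i, ⁅opX (Pc cb ct T : LL adj pos k → LL adj pos k → ℚ) i, opY (Pc cb ct T : LL adj pos k → LL adj pos k → ℚ) i⁆ = opH i := by
    intro i
    rw [Ring.lie_def, opX_eq, opY_eq, opH_eq, ← map_mul, ← map_mul, ← map_sub, Xm_Ym_self hg]
  have h3 : ∀ i j, i ≠ j → ⁅opX (Pc cb ct T : LL adj pos k → LL adj pos k → ℚ) i, opY (Pc cb ct T : LL adj pos k → LL adj pos k → ℚ) j⁆ = 0 := by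
    intro i j hij
    rw [Ring.lie_def, opX_eq, opY_eq, ← map_mul, ← map_mul, Xm_Ym_ne hg hij, sub_self]
  have h4 : ∀ i j, ⁅(opH i : Module.End ℂ (LL adj pos k → ℂ)), opX (Pc cb ct T : LL adj pos k → LL adj pos k → ℚ) j⁆ =
      A j i • opX (Pc cb ct T) j := by
    intro i j
    rw [Ring.lie_def, opX_eq, opH_eq, ← map_mul, ← map_mul, ← map_sub, Hm_Xm hg, map_zsmul, hA']
  have h5 : ∀ i j, ⁅(opH i : Module.End ℂ (LL adj pos k → ℂ)), opY (Pc cb ct T : LL adj pos k → LL adj pos k → ℚ) j⁆ =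
      -(A j i • opY (Pc cb ct T) j) := by
    intro i j
    rw [Ring.lie_def, opY_eq, opH_eq, ← map_mul, ← map_mul, ← map_sub, Hm_Ym hg, map_neg, map_zsmul, hA']
  have hd : ∀ i, A i i = 2 := by intro i; rw [hA, if_pos rfl]
  have hn : ∀ i j, i ≠ j → A j i = 0 ∨ A j i = -1 := by
    intro i j hij
    rw [hA, if_neg hij.symm]
    split_ifs <;> simp
  have zc : ∀ (a : ℤ) (v : Module.End ℂ (LL adj pos k → ℂ)), (a : ℂ) • v = a • v :=
    fun a v => Int.cast_smul_eq_zsmul ℂ a v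
  refine exists_phi A _ _ _ h1 h2 h3 h4 h5 ?_ ?_
  · intro i j hij
    refine serre_zero _ (opY (Pc cb ct T) i) (opH i) _ (h2 i) ?_ ?_ _ (hn i j hij) ?_ ?_
    · rw [h4, hd, ← zc]; norm_num
    · rw [h5, hd, ← zc, neg_smul]; norm_num
    · rw [h4, zc]
    · rw [← lie_skew, h3 j i hij.symm, neg_zero]
  · intro i j hij
    refine serre_zero _ (opX (Pc cb ct T) i) (-opH i) _ ?_ ?_ ?_ _ (hn i j hij) ?_ ?_
    · rw [← lie_skew, h2]
    · rw [neg_lie, h5, hd, ← zc, neg_neg]; norm_num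
    · rw [neg_lie, h4, hd, ← zc, neg_smul]; norm_num
    · rw [neg_lie, h5, zc, neg_neg]
    · exact h3 i j hij

end Phi

end CL

namespace CL

section Irr

set_option linter.unusedSectionVars false
set_option linter.unusedVariables false

variable {N : Type} [DecidableEq N] [Fintype N]
variable {adj : N → N → Prop} [DecidableRel adj] {pos : Finset (N × ℕ)} {cb ct : N} {T k : ℕ}

/-- The maximal element. -/
def topL (adj : N → N → Prop) (pos : Finset (N × ℕ)) (k : ℕ) : LL adj pos k :=
  ⟨fun _ => k, fun _ => le_rfl, fun _ _ _ => le_rfl, trivial⟩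

theorem opX_apply (P : LL adj pos k → LL adj pos k → ℚ) (i : N) (v : LL adj pos k → ℂ)
    (s : LL adj pos k) : opX P i v s =
      ∑ r, (if edge i r s then (↑(Real.sqrt (P r s)) : ℂ) else 0) * v r := rfl

theorem opX_top (P : LL adj pos k → LL adj pos k → ℚ) (i : N) :
    opX P i (Pi.single (topL adj pos k) 1 : LL adj pos k → ℂ) = 0 := by
  funext s
  rw [opX_apply]
  apply Finset.sum_eq_zero
  intro r _
  by_cases hr : r = topL adj pos k
  · subst hr
    rw [if_neg, zero_mul]
    intro h
    obtain ⟨x, _, hx⟩ := (edge_iff _ _ _).1 h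
    have h1 := relU_self hx
    have h2 := s.2.1 x
    have h3 : (topL adj pos k).1 x = k := rfl
    omega
  · rw [Pi.single_eq_of_ne hr, mul_zero]

theorem hw_support (hg : Good adj pos cb ct T) (P : LL adj pos k → LL adj pos k → ℚ)
    (hP : ∀ r s, (∃ i, edge i r s) → 0 < P r s) (v : LL adj pos k → ℂ) (hv : v ≠ 0)
    (hX : ∀ i, opX P i v = 0) : v (topL adj pos k) ≠ 0 := by
  have key : ∀ q : ℕ, ∃ t : LL adj pos k, v t ≠ 0 ∧
      ∀ x : {x : N × ℕ // x ∈ pos}, x.1.2 < q → t.1 x = k := by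
    intro q
    induction q with
    | zero =>
      obtain ⟨t, ht⟩ := Function.ne_iff.1 hv
      exact ⟨t, ht, fun x hx => absurd hx (Nat.not_lt_zero _)⟩
    | succ q ih =>
      classical
      let F : Finset (LL adj pos k) := Finset.univ.filter fun t => v t ≠ 0 ∧
        ∀ x : {x : N × ℕ // x ∈ pos}, x.1.2 < q → t.1 x = k
      have hF : F.Nonempty := by
        obtain ⟨t, ht⟩ := ih
        exact ⟨t, Finset.mem_filter.2 ⟨Finset.mem_univ _, ht⟩⟩
      obtain ⟨t, htF, hmax⟩ := Finset.exists_max_image F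
        (fun t => ∑ x ∈ Finset.univ.filter (fun x : {x : N × ℕ // x ∈ pos} => x.1.2 = q), t.1 x) hF
      have ht := (Finset.mem_filter.1 htF).2
      refine ⟨t, ht.1, ?_⟩
      intro x hx
      rcases Nat.lt_succ_iff_lt_or_eq.1 hx with hx | hx
      · exact ht.2 x hx
      by_contra hk
      have hlt : t.1 x < k := lt_of_le_of_ne (t.2.1 x) hk
      have hup : canUp x t := by
        refine ⟨hlt, fun y _ hr => ?_⟩
        rw [ht.2 y (by omega)]; exact hlt
      obtain ⟨s, hs⟩ := (canUp_iff hg x t).1 hup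
      have e := congrFun (hX x.1.1) s
      have hed : edge x.1.1 t s := (edge_iff _ _ _).2 ⟨x, rfl, hs⟩
      rw [opX_apply, Finset.sum_eq_single t] at e
      · rw [if_pos hed] at e
        rcases mul_eq_zero.1 e with h | h
        · have hp := hP t s ⟨_, hed⟩
          have : (0 : ℝ) < Real.sqrt (P t s) := Real.sqrt_pos.2 (by exact_mod_cast hp)
          exact this.ne' (by exact_mod_cast h)
        · exact ht.1 h
      · intro r _ hrt
        by_cases hr : edge x.1.1 r s
        · obtain ⟨y, hyc, hy⟩ := (edge_iff _ _ _).1 hr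
          have hyx : y ≠ x := by rintro rfl; exact hrt (relU_right hy hs)
          rcases lt_trichotomy y.1.2 q with hq | hq | hq
          · exfalso
            have h2 := (hg.same y.1 y.2 x.1 x.2 hyc (by omega)).1
            rcases hg.up y.1 y.2 with ⟨z, hz, ha, hzr⟩ | ⟨_, h3⟩
            · have m := mono_step r y ⟨z, hz⟩ ha hzr
              have n1 : (⟨z, hz⟩ : {x : N × ℕ // x ∈ pos}) ≠ y := by
                intro h; have := congrArg (fun w => w.1.2) h; simp at this; omega
              have n2 : (⟨z, hz⟩ : {x : N × ℕ // x ∈ pos}) ≠ x := by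
                intro h; have := congrArg (fun w => w.1.2) h; simp at this; omega
              have a1 := relU_ne hy n1
              have a2 := relU_ne hs n2
              have a3 := ht.2 ⟨z, hz⟩ (by show z.2 < q; omega)
              have a4 := relU_self hy
              have a5 := s.2.1 y
              omega
            · have := hg.le x.1 x.2; omega
          · exact absurd (Subtype.ext (Prod.ext hyc (by omega))) hyx
          · have : v r = 0 := by
              by_contra hvr
              have hrF : r ∈ F := by
                refine Finset.mem_filter.2 ⟨Finset.mem_univ _, hvr, ?_⟩
                intro z hz
                rw [← relU_ne hy (show z ≠ y by rintro rfl; omega),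
                  relU_ne hs (show z ≠ x by rintro rfl; omega)]
                exact ht.2 z hz
              have hle := hmax r hrF
              have hlt2 : ∑ x ∈ Finset.univ.filter (fun x : {x : N × ℕ // x ∈ pos} => x.1.2 = q), t.1 x <
                  ∑ x ∈ Finset.univ.filter (fun x : {x : N × ℕ // x ∈ pos} => x.1.2 = q), r.1 x := by
                apply Finset.sum_lt_sum
                · intro z hz
                  have hz := (Finset.mem_filter.1 hz).2
                  rw [← relU_ne hy (show z ≠ y by rintro rfl; omega)]
                  by_cases hzx : z = x
                  · subst hzx; rw [relU_self hs]; omega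
                  · rw [relU_ne hs hzx]
                · refine ⟨x, Finset.mem_filter.2 ⟨Finset.mem_univ _, hx⟩, ?_⟩
                  rw [← relU_ne hy hyx.symm, relU_self hs]; omega
              exact absurd hle (not_le.2 hlt2)
            rw [this, mul_zero]
        · rw [if_neg hr, zero_mul]
      · simp
  obtain ⟨t, ht, h⟩ := key (T + 1)
  have : t = topL adj pos k := by
    apply Subtype.ext; funext x
    exact h x (Nat.lt_succ_of_le (hg.le x.1 x.2))
  rwa [← this]

theorem ker_top (hg : Good adj pos cb ct T) (P : LL adj pos k → LL adj pos k → ℚ)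
    (hP : ∀ r s, (∃ i, edge i r s) → 0 < P r s) (v : LL adj pos k → ℂ)
    (hX : ∀ i, opX P i v = 0) :
    v = v (topL adj pos k) • (Pi.single (topL adj pos k) 1 : LL adj pos k → ℂ) := by
  by_contra hne
  refine hw_support hg P hP _ (sub_ne_zero.2 hne) ?_ ?_
  · intro i
    rw [map_sub, map_smul, opX_top, hX, smul_zero, sub_zero]
  · simp

theorem rk_le_top (t : LL adj pos k) : rk t ≤ rk (topL adj pos k) :=
  Finset.sum_le_sum fun x _ => t.2.1 x

theorem top_mem (hg : Good adj pos cb ct T) (P : LL adj pos k → LL adj pos k → ℚ)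
    (hP : ∀ r s, (∃ i, edge i r s) → 0 < P r s) (U : Submodule ℂ (LL adj pos k → ℂ))
    (hU : ∀ i, ∀ v ∈ U, opX P i v ∈ U) (hne : U ≠ ⊥) :
    (Pi.single (topL adj pos k) 1 : LL adj pos k → ℂ) ∈ U := by
  have key : ∀ n : ℕ, ∀ v ∈ U, v ≠ 0 →
      (∀ t, v t ≠ 0 → rk (topL adj pos k) + 1 ≤ rk t + n) →
      (Pi.single (topL adj pos k) 1 : LL adj pos k → ℂ) ∈ U := by
    intro n
    induction n with
    | zero =>
      intro v _ hv h
      obtain ⟨t, ht⟩ := Function.ne_iff.1 hv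
      have := h t ht
      have := rk_le_top t
      omega
    | succ n ih =>
      intro v hvU hv h
      by_cases hX : ∀ i, opX P i v = 0
      · have h1 := ker_top hg P hP v hX
        have h2 := hw_support hg P hP v hv hX
        have := U.smul_mem (v (topL adj pos k))⁻¹ hvU
        rw [h1, smul_smul] at this
        simpa [h2] using this
      · push Not at hX
        obtain ⟨i, hi⟩ := hX
        refine ih _ (hU i v hvU) hi ?_
        intro s hs
        rw [opX_apply] at hs
        obtain ⟨r, _, hr⟩ := Finset.exists_ne_zero_of_sum_ne_zero hs
        have hvr := right_ne_zero_of_mul hr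
        have he : edge i r s := by
          by_contra hc; rw [if_neg hc, zero_mul] at hr; exact hr rfl
        obtain ⟨x, _, hx⟩ := (edge_iff _ _ _).1 he
        have := rk_relU hx
        have := h r hvr
        omega
  obtain ⟨v, hvU, hv⟩ := U.ne_bot_iff.1 hne
  exact key (rk (topL adj pos k) + 1) v hvU hv (fun t _ => by omega)

theorem adjoint_XY (P : LL adj pos k → LL adj pos k → ℚ) (i : N) (v w : LL adj pos k → ℂ) :
    (opX P i v) ⬝ᵥ w = v ⬝ᵥ (opY P i w) := by
  let M : Matrix (LL adj pos k) (LL adj pos k) ℂ :=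
    Matrix.of fun s r => if edge i r s then (↑(Real.sqrt (P r s)) : ℂ) else 0
  show (M.mulVec v) ⬝ᵥ w = v ⬝ᵥ (M.transpose.mulVec w)
  rw [Matrix.dotProduct_mulVec, Matrix.vecMul_transpose]

theorem irred (hg : Good adj pos cb ct T) (P : LL adj pos k → LL adj pos k → ℚ)
    (hP : ∀ r s, (∃ i, edge i r s) → 0 < P r s) (U : Submodule ℂ (LL adj pos k → ℂ))
    (hX : ∀ i, ∀ v ∈ U, opX P i v ∈ U) (hY : ∀ i, ∀ v ∈ U, opY P i v ∈ U) : U = ⊥ ∨ U = ⊤ := by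
  by_cases hb : U = ⊥
  · exact Or.inl hb
  right
  by_contra ht
  have hmem := top_mem hg P hP U hX hb
  obtain ⟨f, hf, hUf⟩ := Submodule.exists_le_ker_of_lt_top U (lt_top_iff_ne_top.2 ht)
  let U' : Submodule ℂ (LL adj pos k → ℂ) :=
    { carrier := {w | ∀ u ∈ U, w ⬝ᵥ u = 0}
      add_mem' := by
        intro a b ha hb u hu
        rw [add_dotProduct, ha u hu, hb u hu, add_zero]
      zero_mem' := by intro u _; exact zero_dotProduct u
      smul_mem' := by
        intro c a ha u hu
        rw [smul_dotProduct, ha u hu, smul_zero] }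
  have hinv : ∀ i, ∀ v ∈ U', opX P i v ∈ U' := by
    intro i v hv u hu
    rw [adjoint_XY]
    exact hv _ (hY i u hu)
  have hfe : ∀ u : LL adj pos k → ℂ,
      (fun t => f (Pi.single t 1)) ⬝ᵥ u = f u := by
    intro u
    conv_rhs => rw [← Finset.univ_sum_single u]
    rw [map_sum]
    apply Finset.sum_congr rfl
    intro t _
    have : (Pi.single t (u t) : LL adj pos k → ℂ) = u t • Pi.single t 1 := by
      rw [← Pi.single_smul, smul_eq_mul, mul_one]
    rw [this, map_smul, smul_eq_mul, mul_comm]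
  have hne : U' ≠ ⊥ := by
    rw [Submodule.ne_bot_iff]
    refine ⟨fun t => f (Pi.single t 1), ?_, ?_⟩
    · intro u hu
      rw [hfe]
      exact LinearMap.mem_ker.1 (hUf hu)
    · intro h0
      apply hf
      refine LinearMap.ext fun u => ?_
      rw [← hfe, h0]; simp
  have h1 := top_mem hg P hP U' hinv hne _ hmem
  simp at h1

theorem mwt_top (hg : Good adj pos cb ct T) (i : N) :
    mwt i (topL adj pos k) = if i = ct then (k : ℤ) else 0 := by
  have e := mwt_eq hg i (topL adj pos k)
  have e1 : wtM adj pos cb ct k i (qv (topL adj pos k)) = if i = ct then (k : ℚ) else 0 := by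
    unfold wtM
    have a1 : ∑ x ∈ Finset.univ.filter (fun x : {x : N × ℕ // x ∈ pos} => x.1.1 = i),
        2 * qv (topL adj pos k) x = (2 * (Finset.univ.filter fun x : {x : N × ℕ // x ∈ pos} => x.1.1 = i).card : ℕ) * (k : ℚ) := by
      rw [Finset.sum_congr rfl (fun x _ => show 2 * qv (topL adj pos k) x = 2 * (k : ℚ) from rfl),
        Finset.sum_const, nsmul_eq_mul]
      push_cast; ring
    have a2 : ∑ o ∈ Finset.univ.filter (isN adj pos cb ct i), nval pos k (qv (topL adj pos k)) o =
        ((Finset.univ.filter (isN adj pos cb ct i)).card : ℚ) * k - if i = ct then (k : ℚ) else 0 := by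
      have a3 : ∀ o, nval pos k (qv (topL adj pos k)) o = (k : ℚ) - if o = some none then (k : ℚ) else 0 := by
        intro o
        rcases o with _ | _ | y
        · simp [nval]
        · simp [nval]
        · simp [nval, qv, topL]
      rw [Finset.sum_congr rfl (fun o _ => a3 o), Finset.sum_sub_distrib, Finset.sum_const, nsmul_eq_mul,
        Finset.sum_ite_eq']
      congr 1
      by_cases h : i = ct
      · rw [if_pos h, if_pos]
        exact Finset.mem_filter.2 ⟨Finset.mem_univ _, h⟩
      · rw [if_neg h, if_neg]
        intro h'; exact h (Finset.mem_filter.1 h').2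
    rw [a1, a2, hg.count i]
    ring
  rw [e1] at e
  have : ((mwt i (topL adj pos k) : ℤ) : ℚ) = ((if i = ct then (k : ℤ) else 0 : ℤ) : ℚ) := by
    rw [e]; push_cast; rfl
  exact_mod_cast this

theorem opH_top (i : N) : opH i (Pi.single (topL adj pos k) 1 : LL adj pos k → ℂ) =
    ((mwt i (topL adj pos k) : ℤ) : ℂ) • (Pi.single (topL adj pos k) 1 : LL adj pos k → ℂ) := by
  unfold opH
  rw [Matrix.mulVecLin_apply]
  funext s
  rw [Matrix.mulVec_diagonal]
  by_cases h : s = topL adj pos k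
  · subst h; simp
  · simp [Pi.single_eq_of_ne h]

theorem main (hg : Good adj pos cb ct T) (A : N → N → ℤ)
    (hA : ∀ i j, A i j = if i = j then 2 else if adj i j then -1 else 0) :
    ∃ P : LL adj pos k → LL adj pos k → ℚ,
      (∀ r s : LL adj pos k, (∃ i, edge i r s) → 0 < P r s) ∧
      (∃ φ : gLie A →ₗ⁅ℂ⁆ Module.End ℂ (LL adj pos k → ℂ),
        ∀ i : N, φ (px A i) = opX P i ∧ φ (py A i) = opY P i ∧ φ (ph A i) = opH i) ∧
      ∀ P' : LL adj pos k → LL adj pos k → ℚ, (∀ r s : LL adj pos k, (∃ i, edge i r s) → 0 < P' r s) →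
        ∀ φ : gLie A →ₗ⁅ℂ⁆ Module.End ℂ (LL adj pos k → ℂ),
          (∀ i : N, φ (px A i) = opX P' i ∧ φ (py A i) = opY P' i ∧ φ (ph A i) = opH i) →
          (∀ U : Submodule ℂ (LL adj pos k → ℂ), (∀ g : gLie A, ∀ v ∈ U, φ g v ∈ U) →
            U = ⊥ ∨ U = ⊤) ∧
          (∀ i : N, opX P' i ((Pi.single (topL adj pos k) 1 : LL adj pos k → ℂ)) = 0) ∧
          opH ct ((Pi.single (topL adj pos k) 1 : LL adj pos k → ℂ)) =
            (k : ℂ) • (Pi.single (topL adj pos k) 1 : LL adj pos k → ℂ) ∧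
          (∀ j : N, j ≠ ct → opH j ((Pi.single (topL adj pos k) 1 : LL adj pos k → ℂ)) = 0) := by
  refine ⟨Pc cb ct T, Pc_pos hg, phi_exists hg A hA, ?_⟩
  intro P' hP' φ hφ
  refine ⟨?_, opX_top P', ?_, ?_⟩
  · intro U hU
    refine irred hg P' hP' U ?_ ?_
    · intro i v hv; rw [← (hφ i).1]; exact hU _ v hv
    · intro i v hv; rw [← (hφ i).2.1]; exact hU _ v hv
  · rw [opH_top, mwt_top hg, if_pos rfl, Int.cast_natCast]
  · intro j hj
    rw [opH_top, mwt_top hg, if_neg hj, Int.cast_zero, zero_smul]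

end Irr

end CL

/-- Corollary 4.5 for `L6'(k)` and `L6''(k)`: positive rational edge
coefficients exist on each lattice whose square roots define representations of `𝔤(E₆)`;
any such representation is irreducible, with highest weight `kω₁'` resp. `kω₆'`. -/
theorem statement_13 (k : ℕ) :
    (∃ P : L6p k → L6p k → ℚ,
      (∀ r s : L6p k, (∃ i, CL.edge i r s) → 0 < P r s) ∧
      (∃ φ : CL.gLie A6 →ₗ⁅ℂ⁆ Module.End ℂ (L6p k → ℂ),
        ∀ i : N6, φ (CL.px A6 i) = CL.opX P i ∧ φ (CL.py A6 i) = CL.opY P i ∧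
          φ (CL.ph A6 i) = CL.opH i) ∧
      ∀ P' : L6p k → L6p k → ℚ, (∀ r s : L6p k, (∃ i, CL.edge i r s) → 0 < P' r s) →
        ∀ φ : CL.gLie A6 →ₗ⁅ℂ⁆ Module.End ℂ (L6p k → ℂ),
          (∀ i : N6, φ (CL.px A6 i) = CL.opX P' i ∧ φ (CL.py A6 i) = CL.opY P' i ∧
            φ (CL.ph A6 i) = CL.opH i) →
          (∀ U : Submodule ℂ (L6p k → ℂ), (∀ g : CL.gLie A6, ∀ v ∈ U, φ g v ∈ U) →
            U = ⊥ ∨ U = ⊤) ∧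
          (∀ i : N6, CL.opX P' i ((Pi.single (top6p k) 1 : L6p k → ℂ)) = 0) ∧
          CL.opH m1 ((Pi.single (top6p k) 1 : L6p k → ℂ)) = (k : ℂ) • (Pi.single (top6p k) 1 : L6p k → ℂ) ∧
          (∀ j : N6, j ≠ m1 → CL.opH j ((Pi.single (top6p k) 1 : L6p k → ℂ)) = 0)) ∧
    (∃ P : L6pp k → L6pp k → ℚ,
      (∀ r s : L6pp k, (∃ i, CL.edge i r s) → 0 < P r s) ∧
      (∃ φ : CL.gLie A6 →ₗ⁅ℂ⁆ Module.End ℂ (L6pp k → ℂ),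
        ∀ i : N6, φ (CL.px A6 i) = CL.opX P i ∧ φ (CL.py A6 i) = CL.opY P i ∧
          φ (CL.ph A6 i) = CL.opH i) ∧
      ∀ P' : L6pp k → L6pp k → ℚ, (∀ r s : L6pp k, (∃ i, CL.edge i r s) → 0 < P' r s) →
        ∀ φ : CL.gLie A6 →ₗ⁅ℂ⁆ Module.End ℂ (L6pp k → ℂ),
          (∀ i : N6, φ (CL.px A6 i) = CL.opX P' i ∧ φ (CL.py A6 i) = CL.opY P' i ∧
            φ (CL.ph A6 i) = CL.opH i) →
          (∀ U : Submodule ℂ (L6pp k → ℂ), (∀ g : CL.gLie A6, ∀ v ∈ U, φ g v ∈ U) →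
            U = ⊥ ∨ U = ⊤) ∧
          (∀ i : N6, CL.opX P' i ((Pi.single (top6pp k) 1 : L6pp k → ℂ)) = 0) ∧
          CL.opH m6 ((Pi.single (top6pp k) 1 : L6pp k → ℂ)) = (k : ℂ) • (Pi.single (top6pp k) 1 : L6pp k → ℂ) ∧
          (∀ j : N6, j ≠ m6 → CL.opH j ((Pi.single (top6pp k) 1 : L6pp k → ℂ)) = 0)) := by
  exact ⟨CL.main good6p A6 (fun _ _ => rfl), CL.main good6pp A6 (fun _ _ => rfl)⟩

end
end

section
/- Fix a nonnegative integer k, let ℓ := 27k, and for 0 ≤ i ≤ ℓ let N_i := #{t ∈ L7(k) : Σ_{x∈P7} t(x) = i}. Then: (i) L7(k) is rank symmetric: N_i = N_{ℓ−i} for all 0 ≤ i ≤ ℓ; (ii) L7(k) is rank unimodal: there exists u with N_0 ≤ N_1 ≤ … ≤ N_u ≥ N_{u+1} ≥ … ≥ N_ℓ; (iii) L7(k) is strongly Sperner: for every positive integer m and all antichains A_1, …, A_m of L7(k), the cardinality of A_1 ∪ … ∪ A_m is at most the maximum, over m-element subsets S of {0,1,…,ℓ}, of Σ_{i∈S} N_i.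 -/
noncomputable section

/-! ### Type `E₇` data -/

/-- The nodes `1, 2, 3, 4, 5, 5', 6'` of the `E₇` Dynkin diagram. -/
inductive N7 : Type
  | n1 | n2 | n3 | n4 | n5 | n5p | n6p
  deriving DecidableEq

instance : Fintype N7 where
  elems := ⟨[N7.n1, N7.n2, N7.n3, N7.n4, N7.n5, N7.n5p, N7.n6p], by decide⟩
  complete := by intro x; cases x <;> decide

open N7

/-- Adjacency in the `E₇` Dynkin diagram: edges `1-2, 2-3, 3-4, 4-5, 4-5', 5'-6'`. -/
abbrev adj7 : N7 → N7 → Prop := fun a b =>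
  (a, b) ∈ ([(n1, n2), (n2, n3), (n3, n4), (n4, n5), (n4, n5p), (n5p, n6p)] : List (N7 × N7)) ∨
  (b, a) ∈ ([(n1, n2), (n2, n3), (n3, n4), (n4, n5), (n4, n5p), (n5p, n6p)] : List (N7 × N7))

/-- The 27 (color, rank) positions of the minuscule poset `P₇ = P_{E₇}(ω₁)`. -/
def pos7 : Finset (N7 × ℕ) :=
  {(n1, 0), (n2, 1), (n3, 2), (n4, 3), (n5, 4), (n5p, 4), (n4, 5), (n6p, 5), (n3, 6),
   (n5p, 6), (n2, 7), (n4, 7), (n1, 8), (n3, 8), (n5, 8), (n2, 9), (n4, 9), (n3, 10),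
   (n5p, 10), (n4, 11), (n6p, 11), (n5, 12), (n5p, 12), (n4, 13), (n3, 14), (n2, 15), (n1, 16)}

/-- The lattice `L7(k) = L_{E₇}(kω₁)` of order-reversing labellings of `P₇` by `{0,…,k}`. -/
abbrev L7 (k : ℕ) : Type := CL.Elt adj7 pos7 k (fun _ => True)

/-- The Cartan matrix of type `E₇`, indexed by the nodes. -/
def A7 : N7 → N7 → ℤ := fun i j => if i = j then 2 else if adj7 i j then -1 else 0

/-- The number of elements of `L7(k)` of rank `i`. -/
def nrk7 (k i : ℕ) : ℕ := Nat.card {t : L7 k // CL.rk t = i}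


namespace Peck

open Matrix

/-- An `sl₂`-like pair of matrices on a ranked finite poset. -/
structure SL2 {Q : Type} [Fintype Q] [DecidableEq Q] [PartialOrder Q] (rk : Q → ℕ) (l : ℕ)
    (X Y : Matrix Q Q ℚ) : Prop where
  rk_le : ∀ t, rk t ≤ l
  X_lt : ∀ s t, X s t ≠ 0 → t < s
  X_rk : ∀ s t, X s t ≠ 0 → rk s = rk t + 1
  Y_rk : ∀ s t, Y s t ≠ 0 → rk t = rk s + 1
  comm : X * Y - Y * X = diagonal (fun t => 2 * (rk t : ℚ) - l)

theorem rank_add_le' {m n : Type} [Fintype m] [Fintype n] (A B : Matrix m n ℚ) :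
    (A + B).rank ≤ A.rank + B.rank := by
  unfold Matrix.rank
  rw [Matrix.mulVecLin_add]
  refine (Submodule.finrank_mono (LinearMap.range_add_le _ _)).trans ?_
  exact Submodule.finrank_add_le_finrank_add_finrank _ _

/-- Rank of a strictly order-raising matrix versus antichains. -/
theorem antichain_rank {Q : Type} [Fintype Q] [DecidableEq Q] [PartialOrder Q]
    (X : Matrix Q Q ℚ) (hX : ∀ s t, X s t ≠ 0 → t < s) (A : Finset Q)
    (hA : ∀ s ∈ A, ∀ t ∈ A, ¬ s < t) : X.rank + A.card ≤ Fintype.card Q := by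
  classical
  let D : Finset Q := Finset.univ.filter (fun q => ∃ a ∈ A, q < a)
  let R : Finset Q := (D ∪ A)ᶜ
  have hDA : Disjoint D A := by
    rw [Finset.disjoint_left]
    intro q hq hqA
    simp only [D, Finset.mem_filter, Finset.mem_univ, true_and] at hq
    obtain ⟨a, ha, hlt⟩ := hq
    exact hA q hqA a ha hlt
  let dD : Matrix Q Q ℚ := diagonal (fun q => if q ∈ D then 1 else 0)
  let dR : Matrix Q Q ℚ := diagonal (fun q => if q ∈ R then 1 else 0)
  have hdec : X = X * dD + dR * (X * (1 - dD)) := by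
    ext s t
    have h1 : (1 - dD : Matrix Q Q ℚ) = diagonal (fun q => if q ∈ D then 0 else 1) := by
      simp only [dD]
      rw [← diagonal_one, diagonal_sub]
      congr 1
      ext q
      split_ifs <;> simp
    rw [h1]
    simp only [dD, dR, Matrix.add_apply, mul_diagonal, diagonal_mul]
    by_cases h0 : X s t = 0
    · simp [h0]
    have hlt := hX s t h0
    by_cases htD : t ∈ D
    · simp [htD]
    · have hsR : s ∈ R := by
        simp only [R, Finset.mem_compl, Finset.mem_union, not_or]
        constructor
        · intro hsD
          apply htD
          simp only [D, Finset.mem_filter, Finset.mem_univ, true_and] at hsD ⊢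
          obtain ⟨a, ha, h⟩ := hsD
          exact ⟨a, ha, hlt.trans h⟩
        · intro hsA
          apply htD
          simp only [D, Finset.mem_filter, Finset.mem_univ, true_and]
          exact ⟨s, hsA, hlt⟩
      simp [htD, hsR]
  have hrD : dD.rank = D.card := by
    simp only [dD]
    rw [Matrix.rank_diagonal]
    rw [Fintype.card_subtype]
    congr 1
    ext q
    simp
  have hrR : dR.rank = R.card := by
    simp only [dR]
    rw [Matrix.rank_diagonal]
    rw [Fintype.card_subtype]
    congr 1
    ext q
    simp
  have h1 : X.rank ≤ D.card + R.card := by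
    calc X.rank = (X * dD + dR * (X * (1 - dD))).rank := by rw [← hdec]
      _ ≤ (X * dD).rank + (dR * (X * (1 - dD))).rank := rank_add_le' _ _
      _ ≤ D.card + R.card :=
        add_le_add (hrD ▸ Matrix.rank_mul_le_right _ _) (hrR ▸ Matrix.rank_mul_le_left _ _)
  have h2 : R.card = Fintype.card Q - (D.card + A.card) := by
    simp only [R]
    rw [Finset.card_compl, Finset.card_union_of_disjoint hDA]
  have h3 : D.card + A.card ≤ Fintype.card Q := by
    rw [← Finset.card_union_of_disjoint hDA]
    exact Finset.card_le_univ _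
  omega

section
variable {Q : Type} [Fintype Q] [DecidableEq Q] [PartialOrder Q] {rk : Q → ℕ} {l : ℕ}
    {X Y : Matrix Q Q ℚ}

/-- projection to the rank `r` part -/
def proj (rk : Q → ℕ) (r : ℕ) (v : Q → ℚ) : Q → ℚ := fun t => if rk t = r then v t else 0

theorem SL2.X_proj (h : SL2 rk l X Y) (r : ℕ) (v : Q → ℚ) :
    X *ᵥ proj rk r v = proj rk (r + 1) (X *ᵥ v) := by
  ext s
  simp only [mulVec, dotProduct, proj]
  split_ifs with hs
  · refine Finset.sum_congr rfl fun t _ => ?_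
    by_cases h0 : X s t = 0
    · simp [h0]
    · have := h.X_rk s t h0
      rw [if_pos (by omega)]
  · refine Finset.sum_eq_zero fun t _ => ?_
    by_cases h0 : X s t = 0
    · simp [h0]
    · have := h.X_rk s t h0
      rw [if_neg (by omega), mul_zero]

theorem SL2.Y_proj (h : SL2 rk l X Y) (r : ℕ) (v : Q → ℚ) :
    Y *ᵥ proj rk (r + 1) v = proj rk r (Y *ᵥ v) := by
  ext s
  simp only [mulVec, dotProduct, proj]
  split_ifs with hs
  · refine Finset.sum_congr rfl fun t _ => ?_
    by_cases h0 : Y s t = 0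
    · simp [h0]
    · have := h.Y_rk s t h0
      rw [if_pos (by omega)]
  · refine Finset.sum_eq_zero fun t _ => ?_
    by_cases h0 : Y s t = 0
    · simp [h0]
    · have := h.Y_rk s t h0
      rw [if_neg (by omega), mul_zero]

theorem SL2.Y_proj_zero (h : SL2 rk l X Y) (v : Q → ℚ) :
    Y *ᵥ proj rk 0 v = 0 := by
  ext s
  simp only [mulVec, dotProduct, proj]
  refine Finset.sum_eq_zero fun t _ => ?_
  by_cases h0 : Y s t = 0
  · simp [h0]
  · have := h.Y_rk s t h0
    rw [if_neg (by omega), mul_zero]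

theorem SL2.comm_vec (h : SL2 rk l X Y) (r : ℕ) (v : Q → ℚ) (hv : proj rk r v = v) :
    X *ᵥ (Y *ᵥ v) = Y *ᵥ (X *ᵥ v) + (2 * (r : ℚ) - l) • v := by
  have h1 : (X * Y - Y * X) *ᵥ v = (2 * (r : ℚ) - l) • v := by
    rw [h.comm]
    ext t
    rw [mulVec_diagonal, Pi.smul_apply, smul_eq_mul, ← hv]
    simp only [proj]
    split_ifs with hr
    · rw [hr]
    · simp
  rw [← h1, sub_mulVec, mulVec_mulVec, mulVec_mulVec]
  simp

theorem SL2.low (h : SL2 rk l X Y) : ∀ (r : ℕ) (c : ℚ) (v : Q → ℚ), proj rk r v = v →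
    2 * r < l → 0 ≤ c → Y *ᵥ (X *ᵥ v) = -c • v → v = 0 := by
  intro r
  induction r with
  | zero =>
    intro c v hv hr hc he
    have h1 := h.comm_vec 0 v hv
    have h2 : Y *ᵥ v = 0 := by rw [← hv]; exact h.Y_proj_zero v
    rw [h2, he, mulVec_zero, ← add_smul] at h1
    have h3 : (-c + (2 * ((0 : ℕ) : ℚ) - l)) ≠ 0 := by
      have : (0 : ℚ) < l := by exact_mod_cast (by omega : 0 < l)
      push_cast
      linarith
    exact (smul_eq_zero.mp h1.symm).resolve_left h3
  | succ r ih =>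
    intro c v hv hr hc he
    have hr' : (2 * ((r + 1 : ℕ) : ℚ)) < l := by exact_mod_cast hr
    have h1 := h.comm_vec (r + 1) v hv
    rw [he, ← add_smul] at h1
    have hw : proj rk r (Y *ᵥ v) = Y *ᵥ v := by
      rw [← h.Y_proj, hv]
    have h2 : Y *ᵥ v = 0 := by
      refine ih (c + l - 2 * ((r + 1 : ℕ) : ℚ)) (Y *ᵥ v) hw (by omega) (by linarith) ?_
      rw [h1, mulVec_smul]
      congr 1
      ring
    rw [h2, mulVec_zero] at h1
    exact (smul_eq_zero.mp h1.symm).resolve_left (by linarith)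

theorem SL2.high (h : SL2 rk l X Y) : ∀ (n r : ℕ) (c : ℚ) (v : Q → ℚ), l < r + n →
    proj rk r v = v →
    l < 2 * r → 0 ≤ c → X *ᵥ (Y *ᵥ v) = -c • v → v = 0 := by
  intro n
  induction n with
  | zero =>
    intro r c v hn hv hr hc he
    rw [← hv]
    ext t
    have := h.rk_le t
    simp only [proj]
    rw [if_neg (by omega)]
    rfl
  | succ n ih =>
    intro r c v hn hv hr hc he
    have hr' : (l : ℚ) < (2 * (r : ℚ)) := by exact_mod_cast hr
    have h1 := h.comm_vec r v hv
    have h1' : Y *ᵥ (X *ᵥ v) = (-(c + 2 * r - l)) • v := by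
      rw [he] at h1
      rw [eq_comm, ← eq_sub_iff_add_eq] at h1
      rw [h1, ← sub_smul]
      congr 1
      ring
    have hw : proj rk (r + 1) (X *ᵥ v) = X *ᵥ v := by
      rw [← h.X_proj, hv]
    have h2 : X *ᵥ v = 0 := by
      refine ih (r + 1) (c + 2 * r - l) (X *ᵥ v) (by omega) hw (by omega) (by linarith) ?_
      rw [h1', mulVec_smul]
    rw [h2, mulVec_zero] at h1'
    exact (smul_eq_zero.mp h1'.symm).resolve_left (by linarith)

/-- The rank sizes are increasing in the lower half. -/
theorem SL2.card_le (h : SL2 rk l X Y) (r : ℕ) (hr : 2 * r < l) :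
    Nat.card {t : Q // rk t = r} ≤ Nat.card {t : Q // rk t = r + 1} := by
  classical
  let M : Matrix {t : Q // rk t = r + 1} {t : Q // rk t = r} ℚ := X.submatrix Subtype.val Subtype.val
  have hinj : Function.Injective M.mulVecLin := by
    rw [← LinearMap.ker_eq_bot, LinearMap.ker_eq_bot']
    intro v hv
    let w : Q → ℚ := fun t => if ht : rk t = r then v ⟨t, ht⟩ else 0
    have hw : proj rk r w = w := by
      ext t
      simp only [proj, w]
      split_ifs <;> rfl
    have hX : X *ᵥ w = 0 := by
      rw [← hw, h.X_proj]
      ext s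
      simp only [proj]
      split_ifs with hs
      · have := congrFun hv ⟨s, hs⟩
        simp only [mulVecLin_apply, M, mulVec, dotProduct, submatrix_apply, Pi.zero_apply] at this
        simp only [mulVec, dotProduct, Pi.zero_apply]
        rw [← this]
        calc ∑ x, X s x * w x = ∑ x ∈ Finset.univ.filter (fun t => rk t = r), X s x * w x := by
              refine (Finset.sum_filter_of_ne ?_).symm
              intro x _ hx
              by_contra hne
              apply hx
              simp [w, hne]
          _ = ∑ i : {t : Q // rk t = r}, X s i.1 * w i.1 := Finset.sum_subtype _ (by simp) _
          _ = _ := by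
              refine Finset.sum_congr rfl fun i _ => ?_
              simp [w, i.2]
      · rfl
    have h0 := h.low r 0 w hw hr le_rfl (by rw [hX]; simp)
    ext t
    have := congrFun h0 t.1
    simp only [w, t.2, dite_true] at this
    exact this
  have := LinearMap.finrank_le_finrank_of_injective hinj
  simpa [Nat.card_eq_fintype_card] using this

/-- The rank of `X` is at least the number of elements outside the middle rank. -/
theorem SL2.rank_ge (h : SL2 rk l X Y) :
    Fintype.card Q ≤ X.rank + Nat.card {t : Q // rk t = l / 2} := by
  classical
  let dlo : Matrix Q Q ℚ := diagonal (fun t => if rk t < l / 2 then 1 else 0)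
  let dhi : Matrix Q Q ℚ := diagonal (fun t => if l / 2 < rk t then 1 else 0)
  let dmid : Matrix Q Q ℚ := diagonal (fun t => if rk t = l / 2 then 1 else 0)
  let Z : Matrix Q Q ℚ := X * (dlo + Y * dhi)
  have hZ : Z.rank ≤ X.rank := Matrix.rank_mul_le_left _ _
  have hmid : dmid.rank = Nat.card {t : Q // rk t = l / 2} := by
    simp only [dmid]
    rw [Matrix.rank_diagonal, Nat.card_eq_fintype_card]
    refine Fintype.card_congr (Equiv.subtypeEquivRight ?_)
    intro t
    simp
  have hker : LinearMap.ker Z.mulVecLin ≤ LinearMap.range dmid.mulVecLin := by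
    intro v hv
    have hv' : X *ᵥ (dlo *ᵥ v) + X *ᵥ (Y *ᵥ (dhi *ᵥ v)) = 0 := by
      have : Z *ᵥ v = 0 := by simpa using hv
      rw [← this]
      simp only [Z]
      rw [← mulVec_mulVec, add_mulVec, mulVec_add, ← mulVec_mulVec]
    have hproj : ∀ r, proj rk r (dlo *ᵥ v) = (if r < l / 2 then proj rk r v else 0) := by
      intro r
      ext t
      simp only [proj, dlo, mulVec_diagonal]
      split_ifs <;> simp_all [proj]
    have hproj2 : ∀ r, proj rk r (dhi *ᵥ v) = (if l / 2 < r then proj rk r v else 0) := by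
      intro r
      ext t
      simp only [proj, dhi, mulVec_diagonal]
      split_ifs <;> simp_all [proj]
    have hadd : ∀ r (a b : Q → ℚ), proj rk r (a + b) = proj rk r a + proj rk r b := by
      intro r a b
      ext t
      simp only [proj, Pi.add_apply]
      split_ifs <;> simp
    have hzero : ∀ r, proj rk r (0 : Q → ℚ) = 0 := by
      intro r
      ext t
      simp [proj]
    have hpp : ∀ r, proj rk r (proj rk r v) = proj rk r v := by
      intro r
      ext t
      simp only [proj]
      split_ifs <;> rfl
    have hkey : ∀ r, X *ᵥ (if r < l / 2 then proj rk r v else 0)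
        + X *ᵥ (Y *ᵥ (if l / 2 < r + 1 then proj rk (r + 1) v else 0)) = 0 := by
      intro r
      rw [← hproj, ← hproj2, h.X_proj, h.Y_proj, h.X_proj, ← hadd, hv', hzero]
    have hlow : ∀ r, r ≠ l / 2 → proj rk r v = 0 := by
      intro r hr
      rcases lt_or_gt_of_ne hr with hr | hr
      · have := hkey r
        rw [if_pos hr, if_neg (by omega), mulVec_zero, mulVec_zero, add_zero] at this
        exact h.low r 0 _ (hpp r) (by omega) le_rfl (by rw [this]; simp)
      · obtain ⟨r, rfl⟩ : ∃ r', r = r' + 1 := ⟨r - 1, by omega⟩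
        have := hkey r
        rw [if_neg (by omega), if_pos hr, mulVec_zero, zero_add] at this
        exact h.high (l + 1) (r + 1) 0 _ (by omega) (hpp _) (by omega) le_rfl (by rw [this]; simp)
    refine ⟨v, ?_⟩
    ext t
    simp only [mulVecLin_apply, dmid, mulVec_diagonal]
    split_ifs with ht
    · simp
    · have := congrFun (hlow _ ht) t
      simp only [proj, if_true, Pi.zero_apply] at this
      rw [this]; simp
  have h1 : Module.finrank ℚ (LinearMap.ker Z.mulVecLin) ≤ dmid.rank :=
    Submodule.finrank_mono hker
  have h2 := LinearMap.finrank_range_add_finrank_ker Z.mulVecLin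
  rw [Module.finrank_fintype_fun_eq_card] at h2
  change Z.rank + _ = _ at h2
  omega

theorem SL2.antichain (h : SL2 rk l X Y) (A : Finset Q) (hA : ∀ s ∈ A, ∀ t ∈ A, ¬ s < t) :
    A.card ≤ Nat.card {t : Q // rk t = l / 2} := by
  have h1 := h.rank_ge
  have h2 := antichain_rank X h.X_lt A hA
  omega

end

/-- raising matrix of a chain -/
def chE (m : ℕ) : Matrix (Fin m) (Fin m) ℚ :=
  fun i j => if (i : ℕ) = j + 1 then 1 else 0

/-- lowering matrix of a chain -/
def chF (m : ℕ) : Matrix (Fin m) (Fin m) ℚ :=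
  fun i j => if (j : ℕ) = i + 1 then (j : ℚ) * (m - j) else 0

theorem chain_comm (m : ℕ) : chE m * chF m - chF m * chE m =
    diagonal (fun j : Fin m => 2 * ((j : ℕ) : ℚ) - (m - 1)) := by
  ext i j
  rw [Matrix.sub_apply, Matrix.mul_apply, Matrix.mul_apply, diagonal_apply]
  simp only [chE, chF]
  have e1 : ∑ x : Fin m, (if (i : ℕ) = x + 1 then (1 : ℚ) else 0) *
      (if (j : ℕ) = x + 1 then (j : ℚ) * (m - j) else 0) =
      if i = j then (j : ℚ) * (m - j) else 0 := by
    rcases Nat.eq_zero_or_pos (i : ℕ) with hi | hi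
    · rw [Finset.sum_eq_zero]
      · split_ifs with hij
        · subst hij; simp [hi]
        · rfl
      · intro x _
        rw [if_neg (by omega), zero_mul]
    · have hlt := i.2
      rw [Finset.sum_eq_single (⟨i - 1, by omega⟩ : Fin m)]
      · simp only [Fin.ext_iff]
        rw [if_pos (by omega), one_mul]
        refine if_congr ?_ rfl rfl
        constructor <;> intro <;> omega
      · intro b _ hb
        have : (b : ℕ) ≠ i - 1 := fun h => hb (Fin.ext h)
        rw [if_neg (by omega), zero_mul]
      · simp
  have e2 : ∑ x : Fin m, (if (x : ℕ) = i + 1 then (x : ℚ) * (m - x) else 0) *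
      (if (x : ℕ) = j + 1 then (1 : ℚ) else 0) =
      if i = j then ((j : ℚ) + 1) * (m - (j + 1)) else 0 := by
    by_cases hi : (i : ℕ) + 1 < m
    · rw [Finset.sum_eq_single (⟨i + 1, hi⟩ : Fin m)]
      · simp only [Fin.ext_iff]
        by_cases hij : (i : ℕ) = j
        · rw [if_pos trivial, if_pos (by omega), if_pos hij, ← hij]; push_cast; ring
        · rw [if_neg (by omega : ¬ (i : ℕ) + 1 = j + 1), if_neg hij, mul_zero]
      · intro b _ hb
        have : (b : ℕ) ≠ i + 1 := fun h => hb (Fin.ext h)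
        rw [if_neg (by omega), zero_mul]
      · simp
    · rw [Finset.sum_eq_zero]
      · split_ifs with hij
        · subst hij
          have : (i : ℕ) + 1 = m := by have := i.2; omega
          have h2 : ((i : ℕ) : ℚ) + 1 = m := by exact_mod_cast this
          rw [← h2]; ring
        · rfl
      · intro x _
        have := x.2
        rw [if_neg (by omega), zero_mul]
  rw [e1, e2]
  split_ifs with hij
  · subst hij; ring
  · ring

open scoped Kronecker

/-- The product of an `SL2` poset with a chain. -/
theorem SL2.prod {Q : Type} [Fintype Q] [DecidableEq Q] [PartialOrder Q] {rk : Q → ℕ} {l : ℕ}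
    {X Y : Matrix Q Q ℚ} (h : SL2 rk l X Y) (m : ℕ) :
    SL2 (Q := Q × Fin (m + 1)) (fun p => rk p.1 + p.2) (l + m)
      (X ⊗ₖ 1 + 1 ⊗ₖ chE (m + 1)) (Y ⊗ₖ 1 + 1 ⊗ₖ chF (m + 1)) where
  rk_le := by
    rintro ⟨t, j⟩
    have := h.rk_le t
    have := j.2
    simp only
    omega
  X_lt := by
    rintro ⟨s, i⟩ ⟨t, j⟩ hne
    rw [Matrix.add_apply, kroneckerMap_apply, kroneckerMap_apply] at hne
    by_cases h0 : X s t * (1 : Matrix (Fin (m + 1)) (Fin (m + 1)) ℚ) i j = 0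
    · rw [h0, zero_add] at hne
      obtain ⟨h1, h2⟩ := mul_ne_zero_iff.mp hne
      have hst : s = t := by
        by_contra hh
        exact h1 (Matrix.one_apply_ne hh)
      have : (i : ℕ) = j + 1 := by
        by_contra hh
        exact h2 (if_neg hh)
      subst hst
      exact Prod.mk_lt_mk_iff_right.mpr (Fin.lt_def.mpr (by omega))
    · obtain ⟨h1, h2⟩ := mul_ne_zero_iff.mp h0
      have hst : i = j := by
        by_contra hh
        exact h2 (Matrix.one_apply_ne hh)
      subst hst
      exact Prod.mk_lt_mk_iff_left.mpr (h.X_lt _ _ h1)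
  X_rk := by
    rintro ⟨s, i⟩ ⟨t, j⟩ hne
    rw [Matrix.add_apply, kroneckerMap_apply, kroneckerMap_apply] at hne
    by_cases h0 : X s t * (1 : Matrix (Fin (m + 1)) (Fin (m + 1)) ℚ) i j = 0
    · rw [h0, zero_add] at hne
      obtain ⟨h1, h2⟩ := mul_ne_zero_iff.mp hne
      have hst : s = t := by
        by_contra hh
        exact h1 (Matrix.one_apply_ne hh)
      have : (i : ℕ) = j + 1 := by
        by_contra hh
        exact h2 (if_neg hh)
      subst hst
      simp only
      omega
    · obtain ⟨h1, h2⟩ := mul_ne_zero_iff.mp h0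
      have hst : i = j := by
        by_contra hh
        exact h2 (Matrix.one_apply_ne hh)
      subst hst
      have := h.X_rk _ _ h1
      simp only
      omega
  Y_rk := by
    rintro ⟨s, i⟩ ⟨t, j⟩ hne
    rw [Matrix.add_apply, kroneckerMap_apply, kroneckerMap_apply] at hne
    by_cases h0 : Y s t * (1 : Matrix (Fin (m + 1)) (Fin (m + 1)) ℚ) i j = 0
    · rw [h0, zero_add] at hne
      obtain ⟨h1, h2⟩ := mul_ne_zero_iff.mp hne
      have hst : s = t := by
        by_contra hh
        exact h1 (Matrix.one_apply_ne hh)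
      have : (j : ℕ) = i + 1 := by
        by_contra hh
        exact h2 (if_neg hh)
      subst hst
      simp only
      omega
    · obtain ⟨h1, h2⟩ := mul_ne_zero_iff.mp h0
      have hst : i = j := by
        by_contra hh
        exact h2 (Matrix.one_apply_ne hh)
      subst hst
      have := h.Y_rk _ _ h1
      simp only
      omega
  comm := by
    have hXY : X * Y = Y * X + diagonal (fun t => 2 * (rk t : ℚ) - l) := by
      rw [← h.comm]; abel
    have hEF : chE (m + 1) * chF (m + 1) = chF (m + 1) * chE (m + 1) +
        diagonal (fun j : Fin (m + 1) => 2 * ((j : ℕ) : ℚ) - (((m + 1 : ℕ) : ℚ) - 1)) := by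
      rw [← chain_comm]; abel
    simp only [add_mul, mul_add, ← mul_kronecker_mul, mul_one, one_mul]
    rw [hXY, hEF, add_kronecker, kronecker_add]
    rw [← diagonal_one, ← diagonal_one, diagonal_kronecker_diagonal, diagonal_kronecker_diagonal]
    have : diagonal (fun t : Q × Fin (m + 1) => 2 * ((rk t.1 + (t.2 : ℕ) : ℕ) : ℚ) - ((l + m : ℕ) : ℚ))
      = diagonal (fun mn : Q × Fin (m + 1) => (2 * (rk mn.1 : ℚ) - l) * 1)
        + diagonal (fun mn : Q × Fin (m + 1) =>
          1 * (2 * ((mn.2 : ℕ) : ℚ) - (((m + 1 : ℕ) : ℚ) - 1))) := by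
      rw [diagonal_add]
      congr 1
      ext t
      push_cast
      ring
    rw [this]
    abel

/-- A finite union of `m + 1` antichains has a strictly monotone level function to `Fin (m+1)`. -/
theorem level {Q : Type} [Fintype Q] [PartialOrder Q] (m : ℕ) (A : Fin (m + 1) → Set Q)
    (hA : ∀ a, ∀ s ∈ A a, ∀ t ∈ A a, ¬ s < t) :
    ∃ f : (⋃ a, A a : Set Q) → Fin (m + 1), StrictMono f := by
  classical
  have hcol : ∀ x : (⋃ a, A a : Set Q), ∃ a, x.1 ∈ A a := fun x => Set.mem_iUnion.mp x.2
  choose g hg using hcol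
  have hlt : ∀ x : (⋃ a, A a : Set Q), Order.height x < ((m + 1 : ℕ) : ℕ∞) := by
    intro x
    have : Order.height x ≤ (m : ℕ∞) := by
      apply Order.height_le
      intro p _
      have hinj : Function.Injective (fun i => g (p i)) := by
        intro i j hij
        by_contra hne
        simp only at hij
        rcases lt_or_gt_of_ne hne with h | h
        · have h1 : p i < p j := p.strictMono h
          exact hA (g (p i)) _ (hg _) _ (hij ▸ hg (p j)) h1
        · have h1 : p j < p i := p.strictMono h
          exact hA (g (p i)) _ (hij ▸ hg (p j)) _ (hg _) h1
      have := Fintype.card_le_of_injective _ hinj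
      simp only [Fintype.card_fin] at this
      exact_mod_cast (by omega : p.length ≤ m)
    refine lt_of_le_of_lt this ?_
    exact_mod_cast Nat.lt_succ_self m
  refine ⟨fun x => ⟨(Order.height x).toNat, ?_⟩, ?_⟩
  · have h1 := hlt x
    have h2 : Order.height x ≠ ⊤ := h1.ne_top
    rw [← ENat.natCast_toNat h2] at h1
    exact_mod_cast h1
  · intro x y hxy
    have h1 := Order.height_strictMono hxy ((hlt x).trans_le le_top)
    rw [← ENat.natCast_toNat (hlt x).ne_top, ← ENat.natCast_toNat (hlt y).ne_top] at h1
    rw [Fin.lt_def]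
    exact_mod_cast h1

/-- Strong Sperner property of `SL2` posets. -/
theorem SL2.sperner {Q : Type} [Fintype Q] [DecidableEq Q] [PartialOrder Q] {rk : Q → ℕ} {l : ℕ}
    {X Y : Matrix Q Q ℚ} (h : SL2 rk l X Y) (m : ℕ) (A : Fin (m + 1) → Set Q)
    (hA : ∀ a, ∀ s ∈ A a, ∀ t ∈ A a, ¬ s < t) :
    ∃ S : Finset ℕ, S ⊆ Finset.range (l + 1) ∧ S.card ≤ m + 1 ∧
      Nat.card (⋃ a, A a : Set Q) ≤ ∑ i ∈ S, Nat.card {t : Q // rk t = i} := by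
  classical
  obtain ⟨f, hf⟩ := level m A hA
  let emb : (⋃ a, A a : Set Q) → Q × Fin (m + 1) := fun x => (x.1, (f x).rev)
  have hemb : Function.Injective emb := by
    intro x y hxy
    exact Subtype.ext (congrArg Prod.fst hxy)
  let B : Finset (Q × Fin (m + 1)) := Finset.univ.image emb
  have hB : ∀ s ∈ B, ∀ t ∈ B, ¬ s < t := by
    intro s hs t ht hlt
    simp only [B, Finset.mem_image, Finset.mem_univ, true_and] at hs ht
    obtain ⟨x, rfl⟩ := hs
    obtain ⟨y, rfl⟩ := ht
    have hle : x ≤ y := (Prod.le_def.mp hlt.le).1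
    have hle2 : (f x).rev ≤ (f y).rev := (Prod.le_def.mp hlt.le).2
    rw [Fin.rev_le_rev] at hle2
    have hne : x ≠ y := fun hxy => by
      subst hxy
      exact lt_irrefl _ hlt
    exact absurd (hf (lt_of_le_of_ne hle hne)) (not_lt.mpr hle2)
  have hcard := (h.prod m).antichain B hB
  have hBc : B.card = Nat.card (⋃ a, A a : Set Q) := by
    simp only [B]
    rw [Finset.card_image_of_injective _ hemb, Nat.card_eq_fintype_card, Finset.card_univ]
  set M := (l + m) / 2 with hM
  refine ⟨(Finset.range (l + 1)).filter (fun i => i ≤ M ∧ M ≤ i + m), Finset.filter_subset _ _,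
    ?_, ?_⟩
  · calc _ ≤ (Finset.Icc (M - m) M).card := by
          apply Finset.card_le_card
          intro i hi
          simp only [Finset.mem_filter, Finset.mem_Icc] at hi ⊢
          omega
      _ ≤ m + 1 := by rw [Nat.card_Icc]; omega
  · rw [← hBc]
    refine hcard.trans ?_
    simp only [Nat.card_eq_fintype_card, Fintype.card_subtype]
    rw [← Finset.card_biUnion]
    · refine Finset.card_le_card_of_injOn Prod.fst ?_ ?_
      · rintro ⟨t, j⟩ ht
        have h1 := h.rk_le t
        have h2 := j.2
        simp only [Finset.coe_filter, Finset.mem_univ, true_and, Set.mem_ofPred_eq] at ht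
        simp only [Finset.coe_biUnion, Finset.mem_coe, Set.mem_iUnion, Finset.mem_filter,
          Finset.mem_range, Finset.mem_univ, true_and, exists_prop]
        exact ⟨rk t, ⟨by omega, by omega, by omega⟩, rfl⟩
      · rintro ⟨t, j⟩ ht ⟨t', j'⟩ ht' hEq
        simp only [Finset.coe_filter, Finset.mem_univ, true_and, Set.mem_ofPred_eq] at ht ht'
        simp only at hEq
        subst hEq
        have : j = j' := Fin.ext (by omega)
        rw [this]
    · intro i _ j _ hij
      rw [Function.onFun, Finset.disjoint_left]
      intro t ht ht'
      simp only [Finset.mem_filter, Finset.mem_univ, true_and] at ht ht'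
      exact hij (ht.symm.trans ht')

end Peck

namespace Lag

open Polynomial

theorem lag_inj {ι κ : Type} [DecidableEq ι] (s : Finset ι) (W : Finset κ)
    (u : ι → ℚ) (om : κ → ℚ) (hc : W.card = s.card) (hu : Set.InjOn u s) :
    ∑ a ∈ s, (∏ w ∈ W, (u a - om w)) * (∏ b ∈ s.erase a, (u a - u b))⁻¹ =
      ∑ a ∈ s, u a - ∑ w ∈ W, om w := by
  rcases Nat.eq_zero_or_pos s.card with h0 | hpos
  · rw [h0] at hc
    rw [Finset.card_eq_zero] at h0 hc
    subst h0 hc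
    simp
  set R : ℚ[X] := ∏ w ∈ W, (X - C (om w)) - ∏ a ∈ s, (X - C (u a)) with hR
  have hdeg : R.degree < s.card := by
    have h1 : (∏ w ∈ W, (X - C (om w))).degree = (s.card : WithBot ℕ) := by
      rw [degree_prod]; simp [hc]
    have h2 : (∏ a ∈ s, (X - C (u a))).degree = (s.card : WithBot ℕ) := by
      rw [degree_prod]; simp
    rw [← h1]
    apply degree_sub_lt
    · rw [h1, h2]
    · exact (monic_prod_X_sub_C _ _).ne_zero
    · rw [(monic_prod_X_sub_C _ _).leadingCoeff, (monic_prod_X_sub_C _ _).leadingCoeff]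
  have h := Lagrange.coeff_eq_sum hu hdeg
  have hco : R.coeff (s.card - 1) = ∑ a ∈ s, u a - ∑ w ∈ W, om w := by
    rw [hR, coeff_sub, prod_X_sub_C_coeff_card_pred _ _ hpos, ← hc,
      prod_X_sub_C_coeff_card_pred _ _ (hc ▸ hpos)]
    ring
  rw [hco] at h
  rw [h]
  refine Finset.sum_congr rfl fun a ha => ?_
  rw [div_eq_mul_inv]
  congr 1
  rw [hR, eval_sub, eval_prod, eval_prod, Finset.prod_eq_zero ha (by simp)]
  simp

theorem lag {ι κ : Type} [DecidableEq ι] [DecidableEq κ] (u : ι → ℚ) (om : κ → ℚ) :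
    ∀ (n : ℕ) (s : Finset ι) (W : Finset κ), s.card = n → W.card = s.card →
    (∀ a ∈ s, ∀ b ∈ s, a ≠ b → u a = u b →
      (∀ e ∈ s, e ≠ a → e ≠ b → u e ≠ u a) ∧
      ∃ c ∈ W, ∃ d ∈ W, c ≠ d ∧ om c = u a ∧ om d = u a) →
    ∑ a ∈ s, (∏ w ∈ W, (u a - om w)) * (∏ b ∈ s.erase a, (u a - u b))⁻¹ =
      ∑ a ∈ s, u a - ∑ w ∈ W, om w := by
  intro n
  induction n using Nat.strong_induction_on with
  | _ n ih =>
    intro s W hn hc H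
    by_cases hu : Set.InjOn u s
    · exact lag_inj s W u om hc hu
    rw [Set.InjOn] at hu
    push Not at hu
    obtain ⟨a, ha, b, hb, hab, hne⟩ := hu
    rw [Finset.mem_coe] at ha hb
    obtain ⟨h3, c, hcW, d, hdW, hcd, hoc, hod⟩ := H a ha b hb hne hab
    have hb' : b ∈ s.erase a := Finset.mem_erase.mpr ⟨hne.symm, hb⟩
    have hd' : d ∈ W.erase c := Finset.mem_erase.mpr ⟨hcd.symm, hdW⟩
    have c1 := Finset.card_erase_add_one ha
    have c2 := Finset.card_erase_add_one hb'
    have c3 := Finset.card_erase_add_one hcW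
    have c4 := Finset.card_erase_add_one hd'
    have IH := ih ((s.erase a).erase b).card (by omega) ((s.erase a).erase b)
      ((W.erase c).erase d) rfl (by omega) (by
        intro x hx y hy hxy hu
        simp only [Finset.mem_erase] at hx hy
        obtain ⟨g3, c', hc', d', hd', hcd', ho1, ho2⟩ := H x hx.2.2 y hy.2.2 hxy hu
        have hxa : u x ≠ u a := h3 x hx.2.2 hx.2.1 hx.1
        refine ⟨fun e he h1 h2 => g3 e ?_ h1 h2, c', ?_, d', ?_, hcd', ho1, ho2⟩
        · simp only [Finset.mem_erase] at he
          exact he.2.2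
        · simp only [Finset.mem_erase]
          refine ⟨?_, ?_, hc'⟩
          · rintro rfl; exact hxa (ho1.symm.trans hod)
          · rintro rfl; exact hxa (ho1.symm.trans hoc)
        · simp only [Finset.mem_erase]
          refine ⟨?_, ?_, hd'⟩
          · rintro rfl; exact hxa (ho2.symm.trans hod)
          · rintro rfl; exact hxa (ho2.symm.trans hoc))
    have hsum : ∀ f : ι → ℚ, ∑ x ∈ s, f x = f a + (f b + ∑ x ∈ (s.erase a).erase b, f x) := by
      intro f
      rw [Finset.add_sum_erase _ _ hb', Finset.add_sum_erase _ _ ha]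
    have hsumW : ∑ x ∈ W, om x = om c + (om d + ∑ x ∈ (W.erase c).erase d, om x) := by
      rw [Finset.add_sum_erase _ _ hd', Finset.add_sum_erase _ _ hcW]
    rw [hsum, hsum u, hsumW]
    have t1 : (∏ y ∈ s.erase a, (u a - u y)) = 0 :=
      Finset.prod_eq_zero hb' (by rw [hab, sub_self])
    have t2 : (∏ y ∈ s.erase b, (u b - u y)) = 0 :=
      Finset.prod_eq_zero (Finset.mem_erase.mpr ⟨hne, ha⟩) (by rw [hab, sub_self])
    rw [t1, t2, inv_zero, mul_zero, mul_zero, hoc, hod, ← hab]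
    have : ∑ x ∈ (s.erase a).erase b, (∏ w ∈ W, (u x - om w)) * (∏ y ∈ s.erase x, (u x - u y))⁻¹
      = ∑ x ∈ (s.erase a).erase b, (∏ w ∈ (W.erase c).erase d, (u x - om w)) *
        (∏ y ∈ ((s.erase a).erase b).erase x, (u x - u y))⁻¹ := by
      refine Finset.sum_congr rfl fun x hx => ?_
      simp only [Finset.mem_erase] at hx
      have hxa : u x - u a ≠ 0 := sub_ne_zero.mpr (h3 x hx.2.2 hx.2.1 hx.1)
      rw [← Finset.mul_prod_erase W _ hcW, ← Finset.mul_prod_erase (W.erase c) _ hd', hoc, hod]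
      have hax : a ∈ s.erase x := Finset.mem_erase.mpr ⟨fun h => hx.2.1 h.symm, ha⟩
      have hbx : b ∈ (s.erase x).erase a :=
        Finset.mem_erase.mpr ⟨hne.symm, Finset.mem_erase.mpr ⟨fun h => hx.1 h.symm, hb⟩⟩
      rw [← Finset.mul_prod_erase (s.erase x) _ hax, ← Finset.mul_prod_erase _ _ hbx, ← hab]
      have hs : ((s.erase x).erase a).erase b = ((s.erase a).erase b).erase x := by
        ext y
        simp only [Finset.mem_erase]
        tauto
      rw [hs]
      simp only [mul_inv]
      field_simp
    rw [this, IH]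
    ring

end Lag

namespace E7

/-- An orientation of the Dynkin diagram. -/
abbrev out7 (a b : N7) : Prop :=
  (a, b) ∈ ([(n1, n2), (n2, n3), (n3, n4), (n4, n5), (n4, n5p), (n5p, n6p)] : List (N7 × N7))

theorem adj7_iff (a b : N7) : adj7 a b ↔ (out7 a b ∨ out7 b a) := Iff.rfl

theorem not_out_self : ∀ a, ¬ out7 a a := by decide
theorem not_adj_self : ∀ a, ¬ adj7 a a := by decide
theorem not_out_both : ∀ a b, out7 a b → ¬ out7 b a := by decide

/-- factor of the raising coefficients -/
def gam (i j : N7) (e : ℚ) : ℚ := if i = j then e⁻¹ else if out7 i j then e + 1 / 2 else 1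

/-- factor of the lowering coefficients -/
def eta (i j : N7) (e : ℚ) : ℚ := if i = j then e⁻¹ else if out7 j i then e - 1 / 2 else 1

/-- boundary factor -/
def bd (k : ℕ) (i : N7) (z : ℚ) : ℚ := if i = n1 then (z - k) * (z + 9) else 1

theorem gam_eta (i j : N7) (e : ℚ) :
    gam i j (e + 1) * eta j i (-e) = gam i j e * eta j i (-e - 1) := by
  unfold gam eta
  by_cases h : i = j
  · subst h
    simp only [if_true]
    have : -e - 1 = -(e + 1) := by ring
    rw [this, inv_neg, inv_neg]
    ring
  · rw [if_neg h, if_neg (Ne.symm h), if_neg h, if_neg (Ne.symm h)]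
    split_ifs
    · ring
    · rfl

theorem gam_eta_diag (i j : N7) (e : ℚ) :
    gam i j e * eta i j (e + 1) =
      (if adj7 i j then (e + 1 / 2) else 1) * (if j = i then e⁻¹ * (e + 1)⁻¹ else 1) := by
  unfold gam eta
  by_cases h : i = j
  · subst h
    simp only [if_true]
    rw [if_neg (not_adj_self i), one_mul]
  · rw [if_neg h, if_neg h, if_neg (Ne.symm h), mul_one]
    simp only [adj7_iff]
    by_cases h1 : out7 i j
    · rw [if_pos h1, if_neg (not_out_both _ _ h1), if_pos (Or.inl h1)]
      ring
    · rw [if_neg h1]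
      by_cases h2 : out7 j i
      · rw [if_pos h2, if_pos (Or.inr h2)]
        ring
      · rw [if_neg h2, if_neg (by tauto)]
        ring

section
variable {P : Type} [Fintype P] [DecidableEq P] (col : P → N7) (k : ℕ)

/-- raising coefficient -/
def cc (x : P) (z : P → ℚ) : ℚ :=
  bd k (col x) (z x) * ∏ w ∈ Finset.univ.erase x, gam (col x) (col w) (z x - z w)

/-- lowering coefficient -/
def dd (y : P) (z : P → ℚ) : ℚ :=
  ∏ w ∈ Finset.univ.erase y, eta (col y) (col w) (z y - z w)

/-- product of raising and lowering coefficients -/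
def pp (x : P) (z : P → ℚ) : ℚ := cc col k x z * dd col x (z + (Pi.single x 1 : P → ℚ))

theorem cc_dd (x y : P) (hxy : x ≠ y) (z : P → ℚ) :
    cc col k x z * dd col y (z + (Pi.single y 1 : P → ℚ)) =
      cc col k x (z + (Pi.single y 1 : P → ℚ)) * dd col y (z + (Pi.single x 1 : P → ℚ) + (Pi.single y 1 : P → ℚ)) := by
  have hyx : y ∈ Finset.univ.erase x := Finset.mem_erase.mpr ⟨hxy.symm, Finset.mem_univ _⟩
  have hx : x ∈ Finset.univ.erase y := Finset.mem_erase.mpr ⟨hxy, Finset.mem_univ _⟩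
  unfold cc dd
  rw [← Finset.mul_prod_erase _ _ hyx, ← Finset.mul_prod_erase _ _ hyx,
    ← Finset.mul_prod_erase _ _ hx, ← Finset.mul_prod_erase _ _ hx]
  have e1 : ∏ w ∈ (Finset.univ.erase x).erase y,
      gam (col x) (col w) ((z + (Pi.single y 1 : P → ℚ)) x - (z + (Pi.single y 1 : P → ℚ)) w) =
      ∏ w ∈ (Finset.univ.erase x).erase y, gam (col x) (col w) (z x - z w) := by
    refine Finset.prod_congr rfl fun w hw => ?_
    simp only [Finset.mem_erase] at hw
    simp [hxy, hw.1]
  have e2 : ∏ w ∈ (Finset.univ.erase y).erase x, eta (col y) (col w)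
      ((z + (Pi.single x 1 : P → ℚ) + (Pi.single y 1 : P → ℚ)) y - (z + (Pi.single x 1 : P → ℚ) + (Pi.single y 1 : P → ℚ)) w) =
      ∏ w ∈ (Finset.univ.erase y).erase x, eta (col y) (col w)
      ((z + (Pi.single y 1 : P → ℚ)) y - (z + (Pi.single y 1 : P → ℚ)) w) := by
    refine Finset.prod_congr rfl fun w hw => ?_
    simp only [Finset.mem_erase] at hw
    simp [hxy.symm, hw.1, hw.2.1]
  rw [e1, e2]
  generalize ∏ w ∈ (Finset.univ.erase x).erase y, gam (col x) (col w) (z x - z w) = G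
  generalize ∏ w ∈ (Finset.univ.erase y).erase x, eta (col y) (col w)
      ((z + (Pi.single y 1 : P → ℚ)) y - (z + (Pi.single y 1 : P → ℚ)) w) = H
  have h := gam_eta (col x) (col y) (z x - z y - 1)
  simp only [Pi.add_apply, Pi.single_eq_same, Pi.single_eq_of_ne hxy, Pi.single_eq_of_ne hxy.symm,
    add_zero]
  have r1 : z x - z y - 1 + 1 = z x - z y := by ring
  have r2 : -(z x - z y - 1) = z y + 1 - z x := by ring
  have r3 : z y + 1 - z x - 1 = z y + 1 - (z x + 1) := by ring
  have r4 : z x - z y - 1 = z x - (z y + 1) := by ring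
  rw [r2, r1, r3, r4] at h
  linear_combination (bd k (col x) (z x) * G * H) * h

theorem pp_eq (x : P) (z : P → ℚ) :
    pp col k x z = bd k (col x) (z x) *
      (∏ w ∈ Finset.univ.filter (fun w => adj7 (col x) (col w)), (z x + 1 / 2 - z w)) *
      (∏ w ∈ (Finset.univ.filter (fun w => col w = col x)).erase x,
        (z x - z w) * (z x + 1 - z w))⁻¹ := by
  unfold pp cc dd
  rw [mul_assoc, ← Finset.prod_mul_distrib, mul_assoc]
  congr 1
  have : ∀ w ∈ Finset.univ.erase x, gam (col x) (col w) (z x - z w) *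
      eta (col x) (col w) ((z + (Pi.single x 1 : P → ℚ)) x - (z + (Pi.single x 1 : P → ℚ)) w) =
      (if adj7 (col x) (col w) then (z x + 1 / 2 - z w) else 1) *
      (if col w = col x then ((z x - z w) * (z x + 1 - z w))⁻¹ else 1) := by
    intro w hw
    have hw' := (Finset.mem_erase.mp hw).1
    have h := gam_eta_diag (col x) (col w) (z x - z w)
    have r1 : (z + (Pi.single x 1 : P → ℚ)) x - (z + (Pi.single x 1 : P → ℚ)) w = z x - z w + 1 := by
      simp [hw']; ring
    rw [r1, h, mul_inv]
    have r2 : z x - z w + 1 / 2 = z x + 1 / 2 - z w := by ring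
    have r3 : z x - z w + 1 = z x + 1 - z w := by ring
    rw [r2, r3]
  rw [Finset.prod_congr rfl this, Finset.prod_mul_distrib]
  congr 1
  · rw [← Finset.prod_filter]
    refine Finset.prod_congr ?_ fun _ _ => rfl
    ext w
    simp only [Finset.mem_filter, Finset.mem_erase, Finset.mem_univ, and_true, true_and]
    refine ⟨fun h => h.2, fun h => ⟨?_, h⟩⟩
    rintro rfl
    exact not_adj_self _ h
  · rw [← Finset.prod_filter, Finset.prod_inv_distrib]
    congr 1
    refine Finset.prod_congr ?_ fun _ _ => rfl
    ext w
    simp only [Finset.mem_filter, Finset.mem_erase, Finset.mem_univ, and_true, true_and]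

theorem color_sum (i : N7) (z : P → ℚ)
    (hcard : (Finset.univ.filter (fun w => adj7 i (col w))).card + (if i = n1 then 2 else 0) =
      2 * (Finset.univ.filter (fun w => col w = i)).card)
    (H1 : ∀ x y, col x = i → col y = i → x ≠ y → z x ≠ z y)
    (H2 : ∀ x y, col x = i → col y = i → z y = z x + 1 → ∃ c d, c ≠ d ∧ adj7 i (col c) ∧
      adj7 i (col d) ∧ z c = z x + 1 / 2 ∧ z d = z x + 1 / 2) :
    ∑ x ∈ Finset.univ.filter (fun w => col w = i),
      (pp col k x z - pp col k x (z - (Pi.single x 1 : P → ℚ))) =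
    2 * (∑ x ∈ Finset.univ.filter (fun w => col w = i), z x) -
      (∑ x ∈ Finset.univ.filter (fun w => adj7 i (col w)), z x) -
      (if i = n1 then (k : ℚ) - 8 else 0) := by
  set S := Finset.univ.filter (fun w => col w = i) with hS
  set T := Finset.univ.filter (fun w => adj7 i (col w)) with hT
  let Bd : Finset Bool := if i = n1 then Finset.univ else ∅
  let u : P × Bool → ℚ := fun p => z p.1 + (if p.2 then 1 / 2 else - (1 / 2))
  let om : P ⊕ Bool → ℚ := Sum.elim z (fun b => if b then (k : ℚ) + 1 / 2 else - (17 / 2))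
  have hmS : ∀ x, x ∈ S ↔ col x = i := by simp [hS]
  have hmT : ∀ x, x ∈ T ↔ adj7 i (col x) := by simp [hT]
  have hW : (T.disjSum Bd).card = (S ×ˢ (Finset.univ : Finset Bool)).card := by
    rw [Finset.card_disjSum, Finset.card_product, Finset.card_univ, Fintype.card_bool,
      mul_comm, ← hcard]
    congr 1
    simp only [Bd]
    split_ifs <;> simp
  have hpair : ∀ x y, col x = i → col y = i → z y = z x + 1 →
      ∃ c ∈ T.disjSum Bd, ∃ d ∈ T.disjSum Bd, c ≠ d ∧ om c = z x + 1 / 2 ∧ om d = z x + 1 / 2 := by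
    intro x y hx hy hxy
    obtain ⟨c, d, hcd, hc, hd, h1, h2⟩ := H2 x y hx hy hxy
    refine ⟨Sum.inl c, Finset.inl_mem_disjSum.mpr ((hmT c).mpr hc), Sum.inl d,
      Finset.inl_mem_disjSum.mpr ((hmT d).mpr hd), ?_, h1, h2⟩
    intro h
    exact hcd (Sum.inl_injective h)
  have hinj : ∀ x y, col x = i → col y = i → z x = z y → x = y := by
    intro x y hx hy h
    by_contra hne
    exact H1 x y hx hy hne h
  have L := Lag.lag u om _ (S ×ˢ (Finset.univ : Finset Bool)) (T.disjSum Bd) rfl hW (by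
    rintro ⟨x, b⟩ hx ⟨y, b'⟩ hy hne he
    have hx' : col x = i := (hmS x).mp (Finset.mem_product.mp hx).1
    have hy' : col y = i := (hmS y).mp (Finset.mem_product.mp hy).1
    have key : ∀ x y, col x = i → col y = i → z y = z x + 1 →
        ∀ e : P × Bool, e ∈ S ×ˢ (Finset.univ : Finset Bool) → e ≠ (x, true) → e ≠ (y, false) →
          u e ≠ z x + 1 / 2 := by
      rintro x y hx hy hxy ⟨e, b⟩ he h1 h2 h3
      have he' : col e = i := (hmS e).mp (Finset.mem_product.mp he).1
      cases b
      · apply h2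
        have : z e = z y := by simp [u] at h3; linarith
        rw [hinj e y he' hy this]
      · apply h1
        have : z e = z x := by simp [u] at h3; linarith
        rw [hinj e x he' hx this]
    cases b <;> cases b'
    · exfalso
      apply hne
      have : z x = z y := by simpa [u] using he
      rw [hinj x y hx' hy' this]
    · have h1 : z x = z y + 1 := by simp [u] at he; linarith
      have h2 : u (x, false) = z y + 1 / 2 := by simp [u]; linarith
      rw [h2]
      exact ⟨fun e he h3 h4 => key y x hy' hx' h1 e he h4 h3, hpair y x hy' hx' h1⟩
    · have h1 : z y = z x + 1 := by simp [u] at he; linarith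
      have h2 : u (x, true) = z x + 1 / 2 := by simp [u]
      rw [h2]
      exact ⟨fun e he h3 h4 => key x y hx' hy' h1 e he h3 h4, hpair x y hx' hy' h1⟩
    · exfalso
      apply hne
      have : z x = z y := by simpa [u] using he
      rw [hinj x y hx' hy' this])
  rw [Finset.sum_product, Finset.sum_product, Finset.sum_disjSum] at L
  simp only [Fintype.sum_bool, Finset.prod_disjSum] at L
  have hN : ∀ p : P × Bool, ∏ b ∈ Bd, (u p - om (Sum.inr b)) = bd k i (u p - 1 / 2) := by
    intro p
    simp only [Bd, bd]
    split_ifs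
    · rw [Fintype.prod_bool]
      simp only [om, Sum.elim_inr, if_true, Bool.false_eq_true, if_false]
      ring
    · simp
  have hD1 : ∀ x ∈ S, ∏ q ∈ (S ×ˢ (Finset.univ : Finset Bool)).erase (x, true), (u (x, true) - u q)
      = ∏ w ∈ S.erase x, (z x - z w) * (z x + 1 - z w) := by
    intro x hx
    have he : (S ×ˢ (Finset.univ : Finset Bool)).erase (x, true) =
        insert (x, false) ((S.erase x) ×ˢ (Finset.univ : Finset Bool)) := by
      ext ⟨w, b⟩
      by_cases hw : w = x
      · subst hw; cases b <;> simp [hx]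
      · simp [hw]
    rw [he, Finset.prod_insert (by simp), Finset.prod_product]
    simp only [Fintype.prod_bool, u, if_true, Bool.false_eq_true, if_false]
    rw [show (z x + 1 / 2 - (z x + -(1 / 2)) : ℚ) = 1 by ring, one_mul]
    refine Finset.prod_congr rfl fun w _ => ?_
    ring
  have hD2 : ∀ x ∈ S, ∏ q ∈ (S ×ˢ (Finset.univ : Finset Bool)).erase (x, false),
      (u (x, false) - u q)
      = - ∏ w ∈ S.erase x, (z x - 1 - z w) * (z x - z w) := by
    intro x hx
    have he : (S ×ˢ (Finset.univ : Finset Bool)).erase (x, false) =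
        insert (x, true) ((S.erase x) ×ˢ (Finset.univ : Finset Bool)) := by
      ext ⟨w, b⟩
      by_cases hw : w = x
      · subst hw; cases b <;> simp [hx]
      · simp [hw]
    rw [he, Finset.prod_insert (by simp), Finset.prod_product]
    simp only [Fintype.prod_bool, u, if_true, Bool.false_eq_true, if_false]
    rw [show (z x + -(1 / 2) - (z x + 1 / 2) : ℚ) = -1 by ring, neg_one_mul]
    congr 1
    refine Finset.prod_congr rfl fun w _ => ?_
    ring
  have hterm : ∀ x ∈ S, pp col k x z - pp col k x (z - (Pi.single x 1 : P → ℚ)) =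
      (((∏ w ∈ T, (u (x, true) - om (Sum.inl w))) * ∏ b ∈ Bd, (u (x, true) - om (Sum.inr b))) *
        (∏ q ∈ (S ×ˢ (Finset.univ : Finset Bool)).erase (x, true), (u (x, true) - u q))⁻¹ +
      ((∏ w ∈ T, (u (x, false) - om (Sum.inl w))) * ∏ b ∈ Bd, (u (x, false) - om (Sum.inr b))) *
        (∏ q ∈ (S ×ˢ (Finset.univ : Finset Bool)).erase (x, false), (u (x, false) - u q))⁻¹) := by
    intro x hx
    have hxi := (hmS x).mp hx
    rw [hD1 x hx, hD2 x hx, hN, hN, pp_eq, pp_eq, hxi, ← hS, ← hT]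
    have q1 : ∏ w ∈ T, ((z - (Pi.single x 1 : P → ℚ)) x + 1 / 2 - (z - (Pi.single x 1 : P → ℚ)) w) =
        ∏ w ∈ T, (u (x, false) - om (Sum.inl w)) := by
      refine Finset.prod_congr rfl fun w hw => ?_
      have hwx : w ≠ x := by
        rintro rfl
        exact not_adj_self i (hxi ▸ (hmT w).mp hw)
      simp [u, om, hwx]
      ring
    have q2 : ∏ w ∈ S.erase x, ((z - (Pi.single x 1 : P → ℚ)) x - (z - (Pi.single x 1 : P → ℚ)) w) *
        ((z - (Pi.single x 1 : P → ℚ)) x + 1 - (z - (Pi.single x 1 : P → ℚ)) w) =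
        ∏ w ∈ S.erase x, (z x - 1 - z w) * (z x - z w) := by
      refine Finset.prod_congr rfl fun w hw => ?_
      have hwx := (Finset.mem_erase.mp hw).1
      simp [hwx]
    rw [q1, q2]
    have q3 : u (x, true) - 1 / 2 = z x := by simp [u]
    have q4 : u (x, false) - 1 / 2 = (z - (Pi.single x 1 : P → ℚ)) x := by simp [u]; ring
    rw [q3, q4, inv_neg]
    have q5 : ∏ w ∈ T, (z x + 1 / 2 - z w) = ∏ w ∈ T, (u (x, true) - om (Sum.inl w)) := by
      simp [u, om]
    rw [q5]
    ring
  rw [Finset.sum_congr rfl hterm, L]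
  have hB : ∑ b ∈ Bd, om (Sum.inr b) = (if i = n1 then (k : ℚ) - 8 else 0) := by
    simp only [Bd]
    split_ifs
    · rw [Fintype.sum_bool]
      simp only [om, Sum.elim_inr, if_true, Bool.false_eq_true, if_false]
      ring
    · simp
  rw [hB, Finset.mul_sum]
  have hU : ∑ x ∈ S, (u (x, true) + u (x, false)) = ∑ x ∈ S, 2 * z x := by
    refine Finset.sum_congr rfl fun x _ => ?_
    simp [u]; ring
  rw [hU]
  simp only [om, Sum.elim_inl]
  ring

end
end E7

namespace E7

/-- positions -/
abbrev P7 : Type := {x : N7 × ℕ // x ∈ pos7}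

/-- color of a position -/
abbrev cl (x : P7) : N7 := x.1.1

/-- rank of a position -/
abbrev qq (x : P7) : ℕ := x.1.2

/-- covering relation on positions -/
abbrev st (x y : P7) : Prop := adj7 (cl x) (cl y) ∧ qq y = qq x + 1

theorem st_step {x y : P7} (h : st x y) : CL.step adj7 pos7 x.1 y.1 := ⟨x.2, y.2, h.1, h.2⟩

/-- reachability in `n` steps -/
def reach : ℕ → N7 × ℕ → N7 × ℕ → Bool
  | 0, x, y => decide (x = y)
  | n + 1, x, y => decide (∃ w ∈ pos7, (adj7 x.1 w.1 ∧ w.2 = x.2 + 1) ∧ reach n w y = true)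

theorem reach_ple : ∀ n x y, x ∈ pos7 → reach n x y = true → CL.ple adj7 pos7 x y := by
  intro n
  induction n with
  | zero =>
    intro x y _ h
    simp only [reach, decide_eq_true_eq] at h
    subst h
    exact Relation.ReflTransGen.refl
  | succ n ih =>
    intro x y hx h
    simp only [reach, decide_eq_true_eq] at h
    obtain ⟨w, hw, ⟨h1, h2⟩, h3⟩ := h
    exact Relation.ReflTransGen.head ⟨hx, hw, h1, h2⟩ (ih w y hw h3)

theorem fact_same : ∀ x ∈ pos7, ∀ y ∈ pos7, x.1 = y.1 → x.2 < y.2 →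
    x.2 + 2 ≤ y.2 ∧ reach (y.2 - x.2) x y = true := by decide +kernel

theorem fact_between : ∀ x ∈ pos7, ∀ y ∈ pos7, x.1 = y.1 → y.2 = x.2 + 2 →
    ∃ c ∈ pos7, ∃ d ∈ pos7, c ≠ d ∧ (adj7 x.1 c.1 ∧ c.2 = x.2 + 1) ∧
      (adj7 x.1 d.1 ∧ d.2 = x.2 + 1) := by decide +kernel

theorem fact_lower : ∀ x ∈ pos7, x ≠ (n1, 0) → ∃ w ∈ pos7, adj7 w.1 x.1 ∧ x.2 = w.2 + 1 := by
  decide +kernel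

theorem fact_upper : ∀ x ∈ pos7, x ≠ (n1, 16) → ∃ w ∈ pos7, adj7 x.1 w.1 ∧ w.2 = x.2 + 1 := by
  decide +kernel

theorem fact_flip : ∀ x ∈ pos7, x.2 ≤ 16 ∧ (x.1, 16 - x.2) ∈ pos7 := by decide +kernel

theorem fact_card : ∀ i : N7,
    (Finset.univ.filter (fun w : P7 => adj7 i (cl w))).card + (if i = n1 then 2 else 0) =
      2 * (Finset.univ.filter (fun w : P7 => cl w = i)).card := by decide +kernel

theorem fact_sumq : ∑ x : P7, qq x = 216 := by decide +kernel

theorem fact_card_all : Fintype.card P7 = 27 := by decide +kernel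

theorem adj_symm : ∀ i j : N7, adj7 i j → adj7 j i := fun _ _ h => h.symm

variable {k : ℕ}

/-- underlying labelling -/
def vl (t : L7 k) : P7 → ℕ := t.1

theorem vl_inj : Function.Injective (vl : L7 k → P7 → ℕ) := fun _ _ h => Subtype.ext h

theorem vl_le (t : L7 k) (x : P7) : vl t x ≤ k := t.2.1 x

theorem vl_st (t : L7 k) {x y : P7} (h : st x y) : vl t y ≤ vl t x :=
  t.2.2.1 y x (Relation.ReflTransGen.single (st_step h))

theorem vl_same (t : L7 k) {x y : P7} (h : cl x = cl y) (hq : qq x < qq y) :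
    qq x + 2 ≤ qq y ∧ vl t y ≤ vl t x := by
  have := fact_same x.1 x.2 y.1 y.2 h hq
  exact ⟨this.1, t.2.2.1 y x (reach_ple _ _ _ x.2 this.2)⟩

theorem mk7 (f : P7 → ℕ) (h1 : ∀ x, f x ≤ k) (h2 : ∀ x y, st x y → f y ≤ f x) :
    ∃ t : L7 k, vl t = f := by
  have key : ∀ a b : N7 × ℕ, CL.ple adj7 pos7 a b → ∀ (ha : a ∈ pos7) (hb : b ∈ pos7),
      f ⟨b, hb⟩ ≤ f ⟨a, ha⟩ := by
    intro a b hab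
    induction hab with
    | refl => intro _ _; exact le_rfl
    | tail _ hst ih =>
      intro ha hb
      exact (h2 ⟨_, hst.1⟩ ⟨_, hb⟩ ⟨hst.2.2.1, hst.2.2.2⟩).trans (ih ha hst.1)
  exact ⟨⟨f, h1, fun x y h => key _ _ h y.2 x.2, trivial⟩, rfl⟩

instance instPO : PartialOrder (L7 k) := PartialOrder.lift vl vl_inj

theorem le_iff (s t : L7 k) : s ≤ t ↔ ∀ x, vl s x ≤ vl t x := Iff.rfl

theorem rk_eq (t : L7 k) : CL.rk t = ∑ x : P7, vl t x := rfl

/-- elementary move -/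
def mv (x : P7) (r s : L7 k) : Prop := vl s = vl r + Pi.single x 1

instance (x : P7) (r s : L7 k) : Decidable (mv x r s) := by unfold mv; infer_instance

theorem mv_apply {x : P7} {r s : L7 k} (h : mv x r s) (w : P7) :
    vl s w = vl r w + if w = x then 1 else 0 := by
  rw [h, Pi.add_apply, Pi.single_apply]

theorem mv_rk {x : P7} {r s : L7 k} (h : mv x r s) : CL.rk s = CL.rk r + 1 := by
  rw [rk_eq, rk_eq, Finset.sum_congr rfl fun w _ => mv_apply h w, Finset.sum_add_distrib]
  simp

theorem mv_lt {x : P7} {r s : L7 k} (h : mv x r s) : r < s := by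
  refine lt_of_le_of_ne ((le_iff _ _).mpr fun w => ?_) ?_
  · rw [mv_apply h]; omega
  · rintro rfl
    have := mv_rk h
    omega

theorem mv_left {x : P7} {r r' s : L7 k} (h : mv x r s) (h' : mv x r' s) : r = r' := by
  apply vl_inj
  funext w
  have h1 := mv_apply h w
  have h2 := mv_apply h' w
  omega

theorem mv_right {x : P7} {r s s' : L7 k} (h : mv x r s) (h' : mv x r s') : s = s' :=
  vl_inj (h.trans h'.symm)

/-- squares of moves can be completed -/
theorem mv_square (x y : P7) (hxy : x ≠ y) (s t : L7 k) :
    (∃ r, mv x r s ∧ mv y r t) ↔ (∃ r, mv y s r ∧ mv x t r) := by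
  constructor
  · rintro ⟨r, h1, h2⟩
    obtain ⟨r', hr'⟩ := mk7 (k := k) (fun w => max (vl s w) (vl t w))
      (fun w => max_le (vl_le s w) (vl_le t w))
      (fun a b h => max_le_max (vl_st s h) (vl_st t h))
    refine ⟨r', ?_, ?_⟩ <;>
    · unfold mv
      rw [hr']
      funext w
      rw [Pi.add_apply, Pi.single_apply]
      have e1 := mv_apply h1 w
      have e2 := mv_apply h2 w
      by_cases hx : w = x <;> by_cases hy : w = y
      · exact absurd (hx.symm.trans hy) hxy
      all_goals simp only [hx, hy, if_true, if_false, e1, e2] at *; grind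
  · rintro ⟨r, h1, h2⟩
    obtain ⟨r', hr'⟩ := mk7 (k := k) (fun w => min (vl s w) (vl t w))
      (fun w => (min_le_left _ _).trans (vl_le s w))
      (fun a b h => min_le_min (vl_st s h) (vl_st t h))
    refine ⟨r', ?_, ?_⟩ <;>
    · unfold mv
      rw [hr']
      funext w
      rw [Pi.add_apply, Pi.single_apply]
      have e1 := mv_apply h1 w
      have e2 := mv_apply h2 w
      by_cases hx : w = x <;> by_cases hy : w = y
      · exact absurd (hx.symm.trans hy) hxy
      all_goals grind

/-- shifted labelling -/
def zt (t : L7 k) (x : P7) : ℚ := (vl t x : ℚ) - (qq x : ℚ) / 2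

theorem zt_mv {x : P7} {r s : L7 k} (h : mv x r s) : zt s = zt r + (Pi.single x 1 : P7 → ℚ) := by
  funext w
  rw [Pi.add_apply, Pi.single_apply, zt, zt, mv_apply h]
  push_cast
  ring

theorem pp_factor {x : P7} {z : P7 → ℚ} (h : pp cl k x z ≠ 0) :
    bd k (cl x) (z x) ≠ 0 ∧ ∀ w, adj7 (cl x) (cl w) → z x + 1 / 2 - z w ≠ 0 := by
  rw [pp_eq] at h
  have h1 := left_ne_zero_of_mul h
  refine ⟨left_ne_zero_of_mul h1, fun w hw => ?_⟩
  exact Finset.prod_ne_zero_iff.mp (right_ne_zero_of_mul h1) w (by simpa using hw)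

theorem exists_up (x : P7) (t : L7 k) (h : pp cl k x (zt t) ≠ 0) : ∃ s, mv x t s := by
  obtain ⟨hb, hw⟩ := pp_factor h
  have hw' : ∀ w, st w x → vl t w ≠ vl t x := by
    intro w hs he
    apply hw w (adj_symm _ _ hs.1)
    simp only [zt, he, hs.2]
    push_cast
    ring
  have hk : vl t x ≠ k := by
    intro he
    by_cases hx : x.1 = (n1, 0)
    · apply hb
      have h1 : cl x = n1 := by simp [cl, hx]
      have h2 : qq x = 0 := by simp [qq, hx]
      simp [bd, h1, zt, h2, he]
    · obtain ⟨w, hm, h1⟩ := fact_lower x.1 x.2 hx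
      have hs : st ⟨w, hm⟩ x := h1
      have := vl_st t hs
      have := vl_le t ⟨w, hm⟩
      exact hw' _ hs (by omega)
  obtain ⟨s, hs⟩ := mk7 (k := k) (vl t + Pi.single x 1) (by
    intro w
    rw [Pi.add_apply, Pi.single_apply]
    have := vl_le t w
    split_ifs with hwx
    · subst hwx; omega
    · omega) (by
    intro y w hyw
    rw [Pi.add_apply, Pi.add_apply, Pi.single_apply, Pi.single_apply]
    have := vl_st t hyw
    by_cases hwx : w = x
    · subst hwx
      have := hw' y hyw
      rw [if_pos rfl]
      omega
    · rw [if_neg hwx]; omega)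
  exact ⟨s, hs⟩

theorem exists_down (x : P7) (t : L7 k) (h : pp cl k x (zt t - (Pi.single x 1 : P7 → ℚ)) ≠ 0) :
    ∃ r, mv x r t := by
  obtain ⟨hb, hw⟩ := pp_factor h
  rw [Pi.sub_apply, Pi.single_eq_same] at hb
  have hw' : ∀ w, st x w → vl t w ≠ vl t x := by
    intro w hs he
    apply hw w hs.1
    have hne : w ≠ x := by
      rintro rfl
      have := hs.2
      omega
    rw [Pi.sub_apply, Pi.sub_apply, Pi.single_eq_same, Pi.single_eq_of_ne hne]
    simp only [zt, he, hs.2]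
    push_cast
    ring
  have hk : vl t x ≠ 0 := by
    intro he
    by_cases hx : x.1 = (n1, 16)
    · apply hb
      have h1 : cl x = n1 := by simp [cl, hx]
      have h2 : qq x = 16 := by simp [qq, hx]
      simp [bd, h1, zt, h2, he]
      right
      norm_num
    · obtain ⟨w, hm, h1⟩ := fact_upper x.1 x.2 hx
      have hs : st x ⟨w, hm⟩ := h1
      have := vl_st t hs
      exact hw' _ hs (by omega)
  obtain ⟨r, hr⟩ := mk7 (k := k) (fun w => vl t w - if w = x then 1 else 0) (by
    intro w
    have := vl_le t w
    omega) (by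
    intro y w hyw
    have := vl_st t hyw
    by_cases hyx : y = x
    · subst hyx
      have := hw' w hyw
      rw [if_pos rfl]
      omega
    · rw [if_neg hyx]; omega)
  refine ⟨r, ?_⟩
  unfold mv
  rw [hr]
  funext w
  rw [Pi.add_apply, Pi.single_apply]
  by_cases hwx : w = x
  · subst hwx
    simp only [if_true]
    omega
  · simp [hwx]

end E7

namespace E7

variable {k : ℕ}

theorem zt_ne (t : L7 k) (x y : P7) (hc : cl x = cl y) (hne : x ≠ y) : zt t x ≠ zt t y := by
  have key : ∀ x y : P7, cl x = cl y → qq x < qq y → zt t x ≠ zt t y := by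
    intro x y hc hq he
    obtain ⟨h1, h2⟩ := vl_same t hc hq
    simp only [zt] at he
    have h1' : (qq x : ℚ) + 2 ≤ qq y := by exact_mod_cast h1
    have h2' : (vl t y : ℚ) ≤ vl t x := by exact_mod_cast h2
    linarith
  rcases lt_trichotomy (qq x) (qq y) with h | h | h
  · exact key x y hc h
  · exact absurd (Subtype.ext (Prod.ext hc h)) hne
  · exact (key y x hc.symm h).symm

theorem zt_pair (t : L7 k) (x y : P7) (hc : cl x = cl y) (h : zt t y = zt t x + 1) :
    ∃ c d : P7, c ≠ d ∧ adj7 (cl x) (cl c) ∧ adj7 (cl x) (cl d) ∧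
      zt t c = zt t x + 1 / 2 ∧ zt t d = zt t x + 1 / 2 := by
  have hzt := h
  simp only [zt] at h
  rcases lt_trichotomy (qq x) (qq y) with hq | hq | hq
  · obtain ⟨h1, h2⟩ := vl_same t hc hq
    have h1' : (qq x : ℚ) + 2 ≤ qq y := by exact_mod_cast h1
    have h2' : (vl t y : ℚ) ≤ vl t x := by exact_mod_cast h2
    linarith
  · have : x = y := Subtype.ext (Prod.ext hc hq)
    subst this
    linarith
  · obtain ⟨h1, h2⟩ := vl_same t hc.symm hq
    have h1' : (qq y : ℚ) + 2 ≤ qq x := by exact_mod_cast h1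
    have h2' : (vl t x : ℚ) ≤ vl t y := by exact_mod_cast h2
    have e1 : (qq x : ℚ) = qq y + 2 := by linarith
    have e2 : (vl t x : ℚ) = vl t y := by linarith
    have e1' : qq x = qq y + 2 := by exact_mod_cast e1
    have e2' : vl t x = vl t y := by exact_mod_cast e2
    obtain ⟨c, hc1, d, hd1, hcd, hc2, hd2⟩ := fact_between y.1 y.2 x.1 x.2 hc.symm e1'
    have key : ∀ c : P7, st y c → adj7 (cl x) (cl c) ∧ zt t c = zt t x + 1 / 2 := by
      intro c hst
      have ha : adj7 (cl x) (cl c) := by rw [hc]; exact hst.1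
      have h3 : st c x := ⟨adj_symm _ _ ha, by rw [e1', hst.2]⟩
      have h4 := vl_st t h3
      have h5 := vl_st t hst
      have h6 : vl t c = vl t x := by omega
      refine ⟨ha, ?_⟩
      simp only [zt, h6, hst.2, e1']
      push_cast
      ring
    have kc := key ⟨c, hc1⟩ hc2
    have kd := key ⟨d, hd1⟩ hd2
    exact ⟨⟨c, hc1⟩, ⟨d, hd1⟩, fun h => hcd (congrArg Subtype.val h), kc.1, kd.1, kc.2, kd.2⟩

/-- coefficients of twice the dual Weyl vector -/
def av : N7 → ℚ
  | n1 => 27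
  | n2 => 52
  | n3 => 75
  | n4 => 96
  | n5 => 49
  | n5p => 66
  | n6p => 34

theorem sum_N7 (f : N7 → ℚ) : ∑ i, f i = f n1 + f n2 + f n3 + f n4 + f n5 + f n5p + f n6p := by
  have h : (Finset.univ : Finset N7) = {n1, n2, n3, n4, n5, n5p, n6p} := by decide
  rw [h]
  rw [Finset.sum_insert (by decide), Finset.sum_insert (by decide), Finset.sum_insert (by decide),
    Finset.sum_insert (by decide), Finset.sum_insert (by decide), Finset.sum_insert (by decide),
    Finset.sum_singleton]
  ring

theorem av_cartan (j : N7) :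
    ∑ i, av i * (2 * (if j = i then 1 else 0) - (if adj7 i j then 1 else 0)) = 2 := by
  rw [sum_N7]
  cases j <;> simp [adj7, av] <;> norm_num

theorem diag_sum (t : L7 k) :
    ∑ x : P7, av (cl x) * (pp cl k x (zt t) - pp cl k x (zt t - (Pi.single x 1 : P7 → ℚ))) =
      2 * (CL.rk t : ℚ) - ((27 * k : ℕ) : ℚ) := by
  rw [← Finset.sum_fiberwise (s := (Finset.univ : Finset P7)) (g := cl)]
  have h1 : ∀ i : N7, ∑ x ∈ Finset.univ.filter (fun w : P7 => cl w = i),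
      av (cl x) * (pp cl k x (zt t) - pp cl k x (zt t - (Pi.single x 1 : P7 → ℚ))) =
      (∑ x : P7, zt t x * (av i * (2 * (if cl x = i then 1 else 0) -
        (if adj7 i (cl x) then 1 else 0)))) - (if i = n1 then 27 * ((k : ℚ) - 8) else 0) := by
    intro i
    have e : ∑ x ∈ Finset.univ.filter (fun w : P7 => cl w = i),
      av (cl x) * (pp cl k x (zt t) - pp cl k x (zt t - (Pi.single x 1 : P7 → ℚ))) =
      av i * ∑ x ∈ Finset.univ.filter (fun w : P7 => cl w = i),
        (pp cl k x (zt t) - pp cl k x (zt t - (Pi.single x 1 : P7 → ℚ))) := by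
      rw [Finset.mul_sum]
      refine Finset.sum_congr rfl fun x hx => ?_
      rw [(Finset.mem_filter.mp hx).2]
    rw [e, color_sum cl k i (zt t) (fact_card i)
      (fun x y hx hy hne => zt_ne t x y (hx.trans hy.symm) hne)
      (fun x y hx hy h => by
        subst hx
        exact zt_pair t x y hy.symm h)]
    rw [Finset.sum_filter, Finset.sum_filter, mul_sub, mul_sub, Finset.mul_sum, Finset.mul_sum,
      Finset.mul_sum, ← Finset.sum_sub_distrib]
    congr 1
    · refine Finset.sum_congr rfl fun x _ => ?_
      split_ifs <;> ring
    · split_ifs with hi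
      · rw [hi]; simp [av]
      · simp
  rw [Finset.sum_congr rfl fun i _ => h1 i, Finset.sum_sub_distrib, Finset.sum_comm]
  have h2 : ∀ x : P7, ∑ i, zt t x * (av i * (2 * (if cl x = i then 1 else 0) -
        (if adj7 i (cl x) then 1 else 0))) = 2 * zt t x := by
    intro x
    rw [← Finset.mul_sum, av_cartan]
    ring
  rw [Finset.sum_congr rfl fun x _ => h2 x, ← Finset.mul_sum, Finset.sum_ite_eq' ]
  have h3 : ∑ x : P7, zt t x = (CL.rk t : ℚ) - 108 := by
    simp only [zt]
    rw [Finset.sum_sub_distrib, ← Finset.sum_div, rk_eq]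
    have : (∑ x : P7, (qq x : ℚ)) = 216 := by exact_mod_cast fact_sumq
    rw [this]
    push_cast
    norm_num
  rw [h3]
  simp only [Finset.mem_univ, if_true]
  push_cast
  ring

/-- raising matrix -/
def XX (k : ℕ) : Matrix (L7 k) (L7 k) ℚ := fun s t =>
  ∑ x : P7, if mv x t s then cc cl k x (zt t) else 0

/-- lowering matrix -/
def YY (k : ℕ) : Matrix (L7 k) (L7 k) ℚ := fun s t =>
  ∑ y : P7, if mv y s t then - av (cl y) * dd cl y (zt t) else 0

theorem XX_ne {s t : L7 k} (h : XX k s t ≠ 0) : ∃ x, mv x t s := by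
  obtain ⟨x, _, hx⟩ := Finset.exists_ne_zero_of_sum_ne_zero h
  exact ⟨x, by by_contra hn; exact hx (if_neg hn)⟩

theorem YY_ne {s t : L7 k} (h : YY k s t ≠ 0) : ∃ x, mv x s t := by
  obtain ⟨x, _, hx⟩ := Finset.exists_ne_zero_of_sum_ne_zero h
  exact ⟨x, by by_contra hn; exact hx (if_neg hn)⟩

/-- down then up -/
def fA (x y : P7) (s t : L7 k) : ℚ :=
  ∑ r, if mv x r s ∧ mv y r t then cc cl k x (zt r) * dd cl y (zt t) else 0

/-- up then down -/
def fB (x y : P7) (s t : L7 k) : ℚ :=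
  ∑ r, if mv y s r ∧ mv x t r then cc cl k x (zt t) * dd cl y (zt r) else 0

theorem fA_of {x y : P7} {s t r : L7 k} (h1 : mv x r s) (h2 : mv y r t) :
    fA x y s t = cc cl k x (zt r) * dd cl y (zt t) := by
  unfold fA
  rw [Finset.sum_eq_single r, if_pos ⟨h1, h2⟩]
  · intro r' _ hne
    rw [if_neg]
    intro h
    exact hne (mv_left h.1 h1)
  · intro h; exact absurd (Finset.mem_univ _) h

theorem fB_of {x y : P7} {s t r : L7 k} (h1 : mv y s r) (h2 : mv x t r) :
    fB x y s t = cc cl k x (zt t) * dd cl y (zt r) := by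
  unfold fB
  rw [Finset.sum_eq_single r, if_pos ⟨h1, h2⟩]
  · intro r' _ hne
    rw [if_neg]
    intro h
    exact hne (mv_right h.1 h1)
  · intro h; exact absurd (Finset.mem_univ _) h

theorem fA_zero {x y : P7} {s t : L7 k} (h : ¬ ∃ r, mv x r s ∧ mv y r t) : fA x y s t = 0 :=
  Finset.sum_eq_zero fun r _ => if_neg fun hr => h ⟨r, hr⟩

theorem fB_zero {x y : P7} {s t : L7 k} (h : ¬ ∃ r, mv y s r ∧ mv x t r) : fB x y s t = 0 :=
  Finset.sum_eq_zero fun r _ => if_neg fun hr => h ⟨r, hr⟩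

theorem fA_fB {x y : P7} (hxy : x ≠ y) (s t : L7 k) : fA x y s t = fB x y s t := by
  by_cases h : ∃ r, mv x r s ∧ mv y r t
  · obtain ⟨r', h3, h4⟩ := (mv_square x y hxy s t).mp h
    obtain ⟨r, h1, h2⟩ := h
    rw [fA_of h1 h2, fB_of h3 h4, zt_mv h3, zt_mv h1, zt_mv h2]
    exact cc_dd cl k x y hxy (zt r)
  · rw [fA_zero h, fB_zero (fun h' => h ((mv_square x y hxy s t).mpr h'))]

theorem fA_diag (x : P7) (s : L7 k) :
    fA x x s s = pp cl k x (zt s - (Pi.single x 1 : P7 → ℚ)) := by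
  by_cases h : ∃ r, mv x r s
  · obtain ⟨r, h1⟩ := h
    rw [fA_of h1 h1, pp, sub_add_cancel, zt_mv h1, add_sub_cancel_right]
  · rw [fA_zero (fun ⟨r, hr⟩ => h ⟨r, hr.1⟩)]
    by_contra hne
    exact h (exists_down x s (Ne.symm hne))

theorem fB_diag (x : P7) (s : L7 k) : fB x x s s = pp cl k x (zt s) := by
  by_cases h : ∃ r, mv x s r
  · obtain ⟨r, h1⟩ := h
    rw [fB_of h1 h1, pp, zt_mv h1]
  · rw [fB_zero (fun ⟨r, hr⟩ => h ⟨r, hr.1⟩)]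
    by_contra hne
    exact h (exists_up x s (Ne.symm hne))

theorem XY_apply (s t : L7 k) :
    (XX k * YY k) s t = ∑ x : P7, ∑ y : P7, - av (cl y) * fA x y s t := by
  rw [Matrix.mul_apply]
  simp only [XX, YY, Finset.sum_mul_sum]
  simp only [fA, Finset.mul_sum]
  rw [Finset.sum_comm]
  refine Finset.sum_congr rfl fun x _ => ?_
  rw [Finset.sum_comm]
  refine Finset.sum_congr rfl fun y _ => Finset.sum_congr rfl fun r _ => ?_
  by_cases h1 : mv x r s <;> by_cases h2 : mv y r t <;> simp [h1, h2]
  ring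

theorem YX_apply (s t : L7 k) :
    (YY k * XX k) s t = ∑ x : P7, ∑ y : P7, - av (cl y) * fB x y s t := by
  rw [Matrix.mul_apply]
  simp only [XX, YY, Finset.sum_mul_sum]
  simp only [fB, Finset.mul_sum]
  rw [Finset.sum_congr rfl fun (r : L7 k) _ => Finset.sum_comm, Finset.sum_comm]
  refine Finset.sum_congr rfl fun x _ => ?_
  rw [Finset.sum_comm]
  refine Finset.sum_congr rfl fun y _ => Finset.sum_congr rfl fun r _ => ?_
  by_cases h1 : mv y s r <;> by_cases h2 : mv x t r <;> simp [h1, h2]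
  ring

theorem comm_apply (s t : L7 k) :
    (XX k * YY k - YY k * XX k) s t = ∑ x : P7, av (cl x) * (fB x x s t - fA x x s t) := by
  rw [Matrix.sub_apply, XY_apply, YX_apply, ← Finset.sum_sub_distrib]
  refine Finset.sum_congr rfl fun x _ => ?_
  rw [← Finset.sum_sub_distrib, Finset.sum_eq_single x]
  · ring
  · intro y _ hne
    rw [fA_fB hne.symm, sub_self]
  · intro h; exact absurd (Finset.mem_univ _) h

theorem sl2 (k : ℕ) : Peck.SL2 (Q := L7 k) CL.rk (27 * k) (XX k) (YY k) where
  rk_le t := by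
    rw [rk_eq]
    refine (Finset.sum_le_card_nsmul _ _ k fun x _ => vl_le t x).trans ?_
    rw [Finset.card_univ, fact_card_all, smul_eq_mul]
  X_lt s t h := by
    obtain ⟨x, hx⟩ := XX_ne h
    exact mv_lt hx
  X_rk s t h := by
    obtain ⟨x, hx⟩ := XX_ne h
    exact mv_rk hx
  Y_rk s t h := by
    obtain ⟨x, hx⟩ := YY_ne h
    exact mv_rk hx
  comm := by
    ext s t
    rw [comm_apply]
    by_cases hst : s = t
    · subst hst
      rw [Matrix.diagonal_apply_eq, ← diag_sum]
      simp only [fA_diag, fB_diag]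
    · rw [Matrix.diagonal_apply_ne _ hst]
      refine Finset.sum_eq_zero fun x _ => ?_
      rw [fA_zero (fun ⟨r, h⟩ => hst (mv_right h.1 h.2)),
        fB_zero (fun ⟨r, h⟩ => hst (mv_left h.1 h.2))]
      ring

/-- the flip of the positions -/
def flp (x : P7) : P7 := ⟨(x.1.1, 16 - x.1.2), (fact_flip x.1 x.2).2⟩

theorem flp_flp (x : P7) : flp (flp x) = x := by
  have := (fact_flip x.1 x.2).1
  apply Subtype.ext
  apply Prod.ext
  · rfl
  · simp only [flp]; omega

theorem flp_st {x y : P7} (h : st x y) : st (flp y) (flp x) := by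
  have h2 := h.2
  have := (fact_flip y.1 y.2).1
  refine ⟨adj_symm _ _ h.1, ?_⟩
  simp only [flp, qq] at *
  omega

theorem exists_dual (t : L7 k) : ∃ s : L7 k, vl s = fun x => k - vl t (flp x) := by
  apply mk7
  · intro x; omega
  · intro x y h
    have := vl_st t (flp_st h)
    omega

/-- the dual labelling -/
def dual (t : L7 k) : L7 k := (exists_dual t).choose

theorem vl_dual (t : L7 k) (x : P7) : vl (dual t) x = k - vl t (flp x) :=
  congrFun (exists_dual t).choose_spec x

theorem dual_inj : Function.Injective (dual : L7 k → L7 k) := by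
  intro s t h
  apply vl_inj
  funext x
  have h1 := vl_dual s (flp x)
  have h2 := vl_dual t (flp x)
  rw [h, flp_flp] at h1
  rw [flp_flp] at h2
  have := vl_le s x
  have := vl_le t x
  omega

theorem rk_dual (t : L7 k) : CL.rk (dual t) + CL.rk t = 27 * k := by
  rw [rk_eq, rk_eq]
  have h : ∑ x : P7, vl t x = ∑ x : P7, vl t (flp x) :=
    (Equiv.sum_comp (Function.Involutive.toPerm flp flp_flp) (vl t)).symm
  rw [h, ← Finset.sum_add_distrib]
  have h2 : ∀ x : P7, vl (dual t) x + vl t (flp x) = k := by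
    intro x
    rw [vl_dual]
    have := vl_le t (flp x)
    omega
  rw [Finset.sum_congr rfl fun x _ => h2 x, Finset.sum_const, Finset.card_univ, fact_card_all,
    smul_eq_mul]

theorem nrk_le_dual (i : ℕ) : nrk7 k i ≤ nrk7 k (27 * k - i) := by
  unfold nrk7
  refine Nat.card_le_card_of_injective
    (fun t : {t : L7 k // CL.rk t = i} => (⟨dual t.1, by
      have h1 := rk_dual t.1
      have h2 := t.2
      omega⟩ : {t : L7 k // CL.rk t = 27 * k - i})) ?_
  intro s t h
  exact Subtype.ext (dual_inj (congrArg Subtype.val h))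

theorem nrk_symm (i : ℕ) (hi : i ≤ 27 * k) : nrk7 k i = nrk7 k (27 * k - i) := by
  apply le_antisymm (nrk_le_dual i)
  have := nrk_le_dual (k := k) (27 * k - i)
  rwa [Nat.sub_sub_self hi] at this

theorem nrk_mono (i j : ℕ) (hij : i ≤ j) (hj : j ≤ 27 * k / 2) : nrk7 k i ≤ nrk7 k j := by
  induction j, hij using Nat.le_induction with
  | base => exact le_rfl
  | succ j _ ih => exact (ih (by omega)).trans ((sl2 k).card_le j (by omega))

/-- monotone below and at the middle, from both sides -/
theorem nrk_anti (i j : ℕ) (hi : 27 * k / 2 ≤ i) (hij : i ≤ j) (hj : j ≤ 27 * k) :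
    nrk7 k j ≤ nrk7 k i := by
  rw [nrk_symm j hj]
  by_cases h : 27 * k - i ≤ 27 * k / 2
  · rw [nrk_symm i (hij.trans hj)]
    exact nrk_mono _ _ (by omega) h
  · have hi' : i = 27 * k / 2 := by omega
    by_cases h2 : j = i
    · rw [← nrk_symm j hj, h2]
    · exact nrk_mono _ _ (by omega) (by omega)

end E7

/-- `L7(k)` is rank symmetric, rank unimodal, and strongly Sperner. -/
theorem statement_18 (k : ℕ) :
    (∀ i ≤ 27 * k, nrk7 k i = nrk7 k (27 * k - i)) ∧
    (∃ u ≤ 27 * k,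
      (∀ i j, i ≤ j → j ≤ u → nrk7 k i ≤ nrk7 k j) ∧
      (∀ i j, u ≤ i → i ≤ j → j ≤ 27 * k → nrk7 k j ≤ nrk7 k i)) ∧
    (∀ m : ℕ, 0 < m → ∀ A : Fin m → Set (L7 k),
      (∀ a, ∀ s ∈ A a, ∀ t ∈ A a, s ≠ t → ¬CL.elLe s t ∧ ¬CL.elLe t s) →
      ∃ S : Finset ℕ, S ⊆ Finset.range (27 * k + 1) ∧ S.card ≤ m ∧
        Nat.card (⋃ a, A a) ≤ ∑ i ∈ S, nrk7 k i) := by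
  refine ⟨fun i hi => E7.nrk_symm i hi, ⟨27 * k / 2, by omega, fun i j => E7.nrk_mono i j,
    fun i j => E7.nrk_anti i j⟩, ?_⟩
  intro m hm A hA
  obtain ⟨m, rfl⟩ : ∃ m', m = m' + 1 := ⟨m - 1, by omega⟩
  exact (E7.sl2 k).sperner m A (fun a s hs t ht hlt => (hA a s hs t ht hlt.ne).1 hlt.le)

end
end
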